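/- Existence and uniqueness of Capelli polynomials: assume additionally axiom (C0): there exists a regular dominant ρ' ∈ V₀ such that for every λ ∈ Λ₊ there is a unique p ∈ P^W of degree ℓ(λ) with p(ρ'+μ) = δ_{λμ} for all μ ∈ Λ₊ with ℓ(μ) ≤ ℓ(λ). Then for EVERY dominant ρ ∈ V₀ and every λ ∈ Λ₊ there is a unique polynomial p_λ ∈ P^W with deg p_λ ≤ ℓ(λ) and p_λ(ρ+μ) = δ_{λμ} (Kronecker delta) for all μ ∈ Λ₊ with ℓ(μ) ≤ ℓ(λ). -/

import Mathlib

/-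
Common framework for F. Knop, "Construction of Commuting Difference Operators
for Multiplicity Free Spaces".

We identify `Γ` with `ι → ℤ` via its basis `Σ` (so `Σ` is the standard basis),
`Γ^∨` with `ι → ℤ` via the dual basis `Σ^∨`, and `V = Hom(Γ, ℂ)` with `ι → ℂ`.
-/

open scoped BigOperators Classical
open MvPolynomial

noncomputable section

namespace Knop

variable {ι : Type*} [Fintype ι] [DecidableEq ι]

/-- The `i`-th element of the basis `Σ` of `Γ` (resp. of `Σ^∨ ⊆ Γ^∨`), in coordinates. -/
def e (i : ι) : ι → ℤ := Pi.single i 1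

/-- The pairing between `Γ` and `Γ^∨` (in coordinates, the dot product);
`pairZ γ η = γ(η) = η(γ)`. -/
def pairZ (γ η : ι → ℤ) : ℤ := ∑ i, γ i * η i

/-- Evaluation of `γ ∈ Γ` as a linear function on `V = Hom(Γ,ℂ) ≅ ι → ℂ`. -/
def evalC (γ : ι → ℤ) (z : ι → ℂ) : ℂ := ∑ i, (γ i : ℂ) * z i

/-- The embedding `Γ^∨ ⊆ V`. -/
def toV (η : ι → ℤ) : ι → ℂ := fun i => (η i : ℂ)

/-- The action of `w ∈ Aut(Γ)` on `V = Hom(Γ, ℂ)`: `(w • z)(γ) = z(w⁻¹ γ)`, in coordinates. -/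
def actV (w : (ι → ℤ) ≃ₗ[ℤ] (ι → ℤ)) (z : ι → ℂ) : ι → ℂ :=
  fun i => evalC (w.symm (e i)) z

/-- The action of `w ∈ Aut(Γ)` on `Γ^∨ = Hom(Γ, ℤ)`: `(w • η)(γ) = η(w⁻¹ γ)`. -/
def actDual (w : (ι → ℤ) ≃ₗ[ℤ] (ι → ℤ)) (η : ι → ℤ) : ι → ℤ :=
  fun i => pairZ (w.symm (e i)) η

/-- `Λ₊`, the `ℕ`-span of `Σ^∨` inside `Γ^∨`. -/
def LamPlus : Set (ι → ℤ) := {η | ∀ i, 0 ≤ η i}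

/-- The reflection `s_α(x) = x - α^∨(x)·α` attached to a root `α` with coroot `αv`. -/
def reflMap (α αv : ι → ℤ) : (ι → ℤ) → (ι → ℤ) := fun x => x - pairZ x αv • α

/-- The data `(Γ, Σ, W, ℓ)` together with the axioms C1–C8 of Knop's paper
(in the coordinates given by `Σ`).  The root system `Δ` of `W`, the set
`Φ = W·Σ`, and `Λ₁ = W·Σ^∨₁` are carried along as `Finset`s with their
defining specifications. -/
structure Data (ι : Type*) [Fintype ι] [DecidableEq ι] where
  /-- the reflection group `W ⊆ Aut(Γ)` -/
  W : Subgroup ((ι → ℤ) ≃ₗ[ℤ] (ι → ℤ))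
  /-- `W` is finite -/
  W_finite : (W : Set ((ι → ℤ) ≃ₗ[ℤ] (ι → ℤ))).Finite
  /-- the element `ℓ ∈ Γ` -/
  ell : ι → ℤ
  /-- the set of roots `Δ ⊆ Γ` of `W` -/
  Δ : Finset (ι → ℤ)
  /-- the coroot `α^∨ ∈ Γ^∨` of a root `α` -/
  coroot : (ι → ℤ) → (ι → ℤ)
  /-- `Φ = W·Σ` -/
  Φ : Finset (ι → ℤ)
  /-- `Λ₁ = W·Σ^∨₁` -/
  Λ₁ : Finset (ι → ℤ)
  Φ_spec : ∀ ω, ω ∈ Φ ↔ ∃ w ∈ W, ∃ i, ω = w (e i)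
  Λ₁_spec : ∀ η, η ∈ Λ₁ ↔ ∃ w ∈ W, ∃ i, ell i = 1 ∧ η = actDual w (e i)
  /-- `Δ = -Δ` -/
  Δ_neg : ∀ α ∈ Δ, -α ∈ Δ
  /-- every root is a primitive vector of `Γ` -/
  Δ_prim : ∀ α ∈ Δ, ∀ (n : ℤ) (β : ι → ℤ), α = n • β → IsUnit n
  /-- the reflection `s_α` belongs to `W` -/
  refl_mem : ∀ α ∈ Δ, ∃ w ∈ W, ∀ x, w x = reflMap α (coroot α) x
  /-- `α^∨(α) = 2` -/
  coroot_pair : ∀ α ∈ Δ, pairZ α (coroot α) = 2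
  /-- C1: `W` is generated by the reflections `s_α`, `α ∈ Δ` -/
  C1 : W ≤ Subgroup.closure {w : (ι → ℤ) ≃ₗ[ℤ] (ι → ℤ) |
        ∃ α ∈ Δ, ∀ x, w x = reflMap α (coroot α) x}
  /-- C2: `Δ = Δ⁺ ∪ (-Δ⁺)` -/
  C2 : ∀ α ∈ Δ, (∀ i, 0 ≤ α i) ∨ (∀ i, α i ≤ 0)
  /-- C3: `Φ ⊆ Φ⁺ ∪ (-Φ⁺)` -/
  C3 : ∀ ω ∈ Φ, (∀ i, 0 ≤ ω i) ∨ (∀ i, ω i ≤ 0)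
  /-- C4: `ℓ ∈ Γ^W` -/
  C4 : ∀ w ∈ W, w ell = ell
  /-- C5: `Σ_{ω ∈ Φ⁺} ω - Σ_{α ∈ Δ⁺} α = ℓ` -/
  C5 : (∑ ω ∈ Φ.filter (fun ω => ∀ i, 0 ≤ ω i), ω)
        - (∑ α ∈ Δ.filter (fun α => ∀ i, 0 ≤ α i), α) = ell
  /-- C6: `ℓ(η) > 0` for all `η ∈ Σ^∨` -/
  C6 : ∀ i, 0 < ell i
  /-- C7: `ω(η) ∈ {-1,0,1}` for `η ∈ Σ^∨₁` and `ω ∈ Δ ∪ Φ` -/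
  C7 : ∀ i, ell i = 1 → ∀ ω, (ω ∈ Δ ∨ ω ∈ Φ) → ω i = -1 ∨ ω i = 0 ∨ ω i = 1
  /-- C8: a `W`-invariant linear function on `V` is determined by its restriction to `Σ^∨₁` -/
  C8 : ∀ c c' : ι → ℂ,
    (∀ w ∈ W, ∀ z : ι → ℂ, ∑ i, c i * actV w z i = ∑ i, c i * z i) →
    (∀ w ∈ W, ∀ z : ι → ℂ, ∑ i, c' i * actV w z i = ∑ i, c' i * z i) →
    (∀ i, ell i = 1 → c i = c' i) → c = c'

namespace Data

variable (D : Data ι)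

/-- `Δ⁺`, the positive roots. -/
def Δpos : Finset (ι → ℤ) := D.Δ.filter fun α => ∀ i, 0 ≤ α i

/-- `Φ⁺`. -/
def Φpos : Finset (ι → ℤ) := D.Φ.filter fun ω => ∀ i, 0 ≤ ω i

/-- The submonoid `Λ` of `Γ^∨` generated by `Λ₁`. -/
def Lam : AddSubmonoid (ι → ℤ) := AddSubmonoid.closure (D.Λ₁ : Set (ι → ℤ))

/-- `ρ ∈ V₀`: `ω₁(ρ) = ω₂(ρ)` whenever `ω₁, ω₂ ∈ Σ` lie in the same `±W`-orbit. -/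
def InV0 (ρ : ι → ℂ) : Prop :=
  ∀ i j : ι, (∃ w ∈ D.W, e i = w (e j) ∨ e i = -(w (e j))) → ρ i = ρ j

/-- `k` is the multiplicity-parameter function of `ρ ∈ V₀`:
`k_ω = ω₁(ρ)` for any `ω₁ ∈ (±W)·ω ∩ Σ`. -/
def IsK (ρ : ι → ℂ) (k : (ι → ℤ) → ℂ) : Prop :=
  ∀ (ω : ι → ℤ) (i : ι), (∃ w ∈ D.W, e i = w ω ∨ e i = -(w ω)) → k ω = ρ i

/-- `ρ` is dominant: `α(ρ) ∉ {-1,-2,…}` for all `α ∈ Δ⁺`. -/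
def Dominant (ρ : ι → ℂ) : Prop :=
  ∀ α ∈ D.Δpos, ∀ n : ℕ, evalC α ρ ≠ -((n : ℂ) + 1)

/-- `ρ` is regular: `α(ρ) ≠ 0` for all `α ∈ Δ⁺`. -/
def Regular (ρ : ι → ℂ) : Prop :=
  ∀ α ∈ D.Δpos, evalC α ρ ≠ 0

/-- `ρ` is non-integral: `α(ρ) ∉ ℤ` for all `α ∈ Δ`. -/
def NonIntegral (ρ : ι → ℂ) : Prop :=
  ∀ α ∈ D.Δ, ∀ n : ℤ, evalC α ρ ≠ (n : ℂ)

/-- `ρ` is strongly dominant (`k` being the parameter function of `ρ`). -/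
def StronglyDominant (ρ : ι → ℂ) (k : (ι → ℤ) → ℂ) : Prop :=
  D.Regular ρ ∧ D.Dominant ρ ∧
    ∀ ω ∈ D.Φpos, (∀ n : ℕ, evalC ω ρ - k ω ≠ -((n : ℂ) + 1)) ∧
      (∀ n : ℕ, evalC ω ρ + k ω ≠ -(n : ℂ))

/-- The rational function `f_η`, `η ∈ Λ₁`. -/
def f (k : (ι → ℤ) → ℂ) (η : ι → ℤ) (z : ι → ℂ) : ℂ :=
  (∏ ω ∈ D.Φ.filter (fun ω => 0 < pairZ ω η), (evalC ω z - k ω)) /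
  (∏ α ∈ D.Δ.filter (fun α => 0 < pairZ α η), evalC α z)

/-- The value at `z` of `L(p) = Σ_{η ∈ Λ₁} f_η T_η (p)`. -/
def Lval (k : (ι → ℤ) → ℂ) (p : MvPolynomial ι ℂ) (z : ι → ℂ) : ℂ :=
  ∑ η ∈ D.Λ₁, D.f k η z * eval (z - toV η) p

/-- `W`-invariance of a polynomial function on `V`. -/
def WInv (p : MvPolynomial ι ℂ) : Prop :=
  ∀ w ∈ D.W, ∀ z : ι → ℂ, eval (actV w z) p = eval z p

/-- The defining property of the Capelli polynomial `p_λ` (with shift `ρ`):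
`p` is `W`-invariant of degree `≤ ℓ(λ)` and `p(ρ+μ) = δ_{λμ}` for all
`μ ∈ Λ₊` with `ℓ(μ) ≤ ℓ(λ)`. -/
def CapelliAt (ρ : ι → ℂ) (lam : ι → ℤ) (p : MvPolynomial ι ℂ) : Prop :=
  D.WInv p ∧ (p.totalDegree : ℤ) ≤ pairZ D.ell lam ∧
    ∀ μ : ι → ℤ, μ ∈ LamPlus → pairZ D.ell μ ≤ pairZ D.ell lam →
      eval (ρ + toV μ) p = if μ = lam then 1 else 0

/-- Axiom C0: for some regular dominant `ρ' ∈ V₀` and every `λ ∈ Λ₊` there is a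
unique `W`-invariant polynomial of degree `ℓ(λ)` with `p(ρ'+μ) = δ_{λμ}` for all
`μ ∈ Λ₊` with `ℓ(μ) ≤ ℓ(λ)`. -/
def C0 : Prop :=
  ∃ ρ' : ι → ℂ, D.InV0 ρ' ∧ D.Regular ρ' ∧ D.Dominant ρ' ∧
    ∀ lam : ι → ℤ, lam ∈ LamPlus →
      ∃! p : MvPolynomial ι ℂ, D.WInv p ∧
        p.totalDegree = (pairZ D.ell lam).toNat ∧
        ∀ μ : ι → ℤ, μ ∈ LamPlus → pairZ D.ell μ ≤ pairZ D.ell lam →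
          eval (ρ' + toV μ) p = if μ = lam then 1 else 0

end Data

/-- The `m`-th point `τ_m` of the path starting at `lam` with step sequence `s`
(steps are meant to lie in `Λ₁`). -/
def pathPt (lam : ι → ℤ) {d : ℕ} (s : Fin d → ι → ℤ) (m : ℕ) : ι → ℤ :=
  lam + ∑ i ∈ Finset.univ.filter (fun i : Fin d => (i : ℕ) < m), s i

/-- All paths of length `d` from `lam` to `mu` (with steps in `Λ₁`), encoded by
their step sequences. -/
def paths (D : Data ι) (lam mu : ι → ℤ) (d : ℕ) : Finset (Fin d → ι → ℤ) :=
  (Fintype.piFinset fun _ : Fin d => D.Λ₁).filter fun s => pathPt lam s d = mu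

/-- All positive paths of length `d` from `lam` to `mu`. -/
def posPaths (D : Data ι) (lam mu : ι → ℤ) (d : ℕ) : Finset (Fin d → ι → ℤ) :=
  (Fintype.piFinset fun _ : Fin d => D.Λ₁).filter fun s =>
    (∀ m ≤ d, pathPt lam s m ∈ LamPlus) ∧ pathPt lam s d = mu

/-- The falling factorial `[x ↓ d] = x(x-1)⋯(x-d+1)`. -/
def ffall (x : ℂ) (d : ℤ) : ℂ := ∏ j ∈ Finset.range d.toNat, (x - (j : ℂ))

namespace Data

variable (D : Data ι)

/-- The generalized rational function `f_τ`, `τ ∈ Λ` (formula (Def-f-l)). -/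
def fgen (k : (ι → ℤ) → ℂ) (τ : ι → ℤ) (z : ι → ℂ) : ℂ :=
  (∏ ω ∈ D.Φ.filter (fun ω => 0 < pairZ ω τ), ffall (evalC ω z - k ω) (pairZ ω τ)) /
  (∏ α ∈ D.Δ.filter (fun α => 0 < pairZ α τ), ffall (evalC α z) (pairZ α τ))

/-- The virtual dimension `d_λ = (-1)^{ℓ(λ)} f_λ(-ρ) / f_λ(ρ+λ)`. -/
def vdim (k : (ι → ℤ) → ℂ) (ρ : ι → ℂ) (lam : ι → ℤ) : ℂ :=
  (-1 : ℂ) ^ (pairZ D.ell lam) * D.fgen k lam (-ρ) / D.fgen k lam (ρ + toV lam)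

/-- The rational function `b_τ^h` (formula (Def-b-t)); here the sum runs over
all paths from `0` to `τ` of length `d = ℓ(τ)`. -/
def bfun (k : (ι → ℤ) → ℂ) (h : MvPolynomial ι ℂ) (τ : ι → ℤ) (z : ι → ℂ) : ℂ :=
  ∑ s ∈ paths D 0 τ (pairZ D.ell τ).toNat,
    (∑ i ∈ Finset.range ((pairZ D.ell τ).toNat + 1),
      ((-1 : ℂ) ^ ((pairZ D.ell τ).toNat - i) /
        ((Nat.factorial i : ℂ) * (Nat.factorial ((pairZ D.ell τ).toNat - i) : ℂ))) *
        eval (z - toV (pathPt 0 s i)) h) *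
    ∏ i : Fin (pairZ D.ell τ).toNat, D.fgen k (s i) (z - toV (pathPt 0 s (i : ℕ)))

/-- The difference operator `D_h = Σ_{τ ∈ Λ} b_τ^h T_τ`, acting on functions on `V`. -/
def Dop (k : (ι → ℤ) → ℂ) (h : MvPolynomial ι ℂ) (F : (ι → ℂ) → ℂ) (z : ι → ℂ) : ℂ :=
  ∑ᶠ τ ∈ (D.Lam : Set (ι → ℤ)), D.bfun k h τ z * F (z - toV τ)

/-- The order relation on `Λ`: `τ₁ ≤ τ₂` iff `ℓ(τ₁) < ℓ(τ₂)`, or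
`ℓ(τ₁) = ℓ(τ₂)` and `τ₂ - τ₁` is a sum of positive coroots. -/
def ordLe (τ₁ τ₂ : ι → ℤ) : Prop :=
  pairZ D.ell τ₁ < pairZ D.ell τ₂ ∨
    (pairZ D.ell τ₁ = pairZ D.ell τ₂ ∧
      τ₂ - τ₁ ∈ AddSubmonoid.closure (D.coroot '' (D.Δpos : Set (ι → ℤ))))

end Data


set_option linter.unusedSectionVars false
set_option linter.style.longLine false

/-! ### Basics -/

section Basics

lemma e_apply (i j : ι) : (e i : ι → ℤ) j = if j = i then 1 else 0 := by
  simp [e, Pi.single_apply]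

lemma e_nonneg (i j : ι) : 0 ≤ (e i : ι → ℤ) j := by
  rw [e_apply]; split_ifs <;> simp

lemma e_self (i : ι) : (e i : ι → ℤ) i = 1 := by simp [e]

lemma e_ne {i j : ι} (h : j ≠ i) : (e i : ι → ℤ) j = 0 := by simp [e, h]

lemma e_inj {i j : ι} (h : (e i : ι → ℤ) = e j) : i = j := by
  by_contra hne
  have := congrFun h i
  rw [e_self, e_ne hne] at this
  exact one_ne_zero this

lemma evalC_e (i : ι) (z : ι → ℂ) : evalC (e i) z = z i := by
  simp [evalC, e_apply]

lemma pairZ_e_left (i : ι) (η : ι → ℤ) : pairZ (e i) η = η i := by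
  simp [pairZ, e_apply]

lemma pairZ_e_right (i : ι) (γ : ι → ℤ) : pairZ γ (e i) = γ i := by
  simp [pairZ, e_apply]

lemma evalC_add (γ δ : ι → ℤ) (z : ι → ℂ) : evalC (γ + δ) z = evalC γ z + evalC δ z := by
  simp [evalC, add_mul, Finset.sum_add_distrib]

lemma evalC_neg (γ : ι → ℤ) (z : ι → ℂ) : evalC (-γ) z = -evalC γ z := by
  simp [evalC]

lemma evalC_sub (γ δ : ι → ℤ) (z : ι → ℂ) : evalC (γ - δ) z = evalC γ z - evalC δ z := by
  simp [evalC, sub_mul, Finset.sum_sub_distrib]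

lemma evalC_smul (n : ℤ) (γ : ι → ℤ) (z : ι → ℂ) : evalC (n • γ) z = n * evalC γ z := by
  simp [evalC, Finset.mul_sum, mul_assoc]

lemma evalC_zero (z : ι → ℂ) : evalC 0 z = 0 := by simp [evalC]

lemma evalC_add' (γ : ι → ℤ) (z y : ι → ℂ) : evalC γ (z + y) = evalC γ z + evalC γ y := by
  simp [evalC, mul_add, Finset.sum_add_distrib]

lemma evalC_sub' (γ : ι → ℤ) (z y : ι → ℂ) : evalC γ (z - y) = evalC γ z - evalC γ y := by
  simp [evalC, mul_sub, Finset.sum_sub_distrib]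

lemma evalC_smul' (γ : ι → ℤ) (c : ℂ) (z : ι → ℂ) : evalC γ (c • z) = c * evalC γ z := by
  simp only [evalC, Pi.smul_apply, smul_eq_mul, Finset.mul_sum]
  exact Finset.sum_congr rfl fun i _ => by ring

lemma evalC_zero' (γ : ι → ℤ) : evalC γ (0 : ι → ℂ) = 0 := by simp [evalC]

lemma evalC_toV (γ η : ι → ℤ) : evalC γ (toV η) = (pairZ γ η : ℂ) := by
  simp [evalC, toV, pairZ]

lemma pairZ_add (γ δ η : ι → ℤ) : pairZ (γ + δ) η = pairZ γ η + pairZ δ η := by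
  simp [pairZ, add_mul, Finset.sum_add_distrib]

lemma pairZ_neg (γ η : ι → ℤ) : pairZ (-γ) η = -pairZ γ η := by
  simp [pairZ]

lemma pairZ_sub (γ δ η : ι → ℤ) : pairZ (γ - δ) η = pairZ γ η - pairZ δ η := by
  simp [pairZ, sub_mul, Finset.sum_sub_distrib]

lemma pairZ_smul (n : ℤ) (γ η : ι → ℤ) : pairZ (n • γ) η = n * pairZ γ η := by
  simp [pairZ, Finset.mul_sum, mul_assoc]

lemma pairZ_add' (γ η δ : ι → ℤ) : pairZ γ (η + δ) = pairZ γ η + pairZ γ δ := by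
  simp [pairZ, mul_add, Finset.sum_add_distrib]

lemma pairZ_sub' (γ η δ : ι → ℤ) : pairZ γ (η - δ) = pairZ γ η - pairZ γ δ := by
  simp [pairZ, mul_sub, Finset.sum_sub_distrib]

lemma pairZ_smul' (n : ℤ) (γ η : ι → ℤ) : pairZ γ (n • η) = n * pairZ γ η := by
  simp only [pairZ, Pi.smul_apply, smul_eq_mul, Finset.mul_sum]
  exact Finset.sum_congr rfl fun i _ => by ring

lemma pairZ_nonneg {γ η : ι → ℤ} (h : ∀ i, 0 ≤ γ i) (h' : ∀ i, 0 ≤ η i) : 0 ≤ pairZ γ η :=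
  Finset.sum_nonneg fun i _ => mul_nonneg (h i) (h' i)

lemma evalC_sum {κ : Type*} (s : Finset κ) (f : κ → ι → ℤ) (z : ι → ℂ) :
    evalC (∑ a ∈ s, f a) z = ∑ a ∈ s, evalC (f a) z := by
  induction s using Finset.induction_on with
  | empty => simp [evalC_zero]
  | insert a s ha ih => rw [Finset.sum_insert ha, Finset.sum_insert ha, evalC_add, ih]

lemma eq_sum_e (γ : ι → ℤ) : γ = ∑ i, γ i • (e i : ι → ℤ) := by
  ext j
  simp [Finset.sum_apply, e_apply]

/-- Automorphisms of the lattice. -/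
abbrev Aut (ι : Type*) := (ι → ℤ) ≃ₗ[ℤ] (ι → ℤ)

lemma inv_eq_symm (w : Aut ι) : w⁻¹ = w.symm := rfl

lemma inv_app (w : Aut ι) (x : ι → ℤ) : w⁻¹ (w x) = x := w.symm_apply_apply x

lemma app_inv (w : Aut ι) (x : ι → ℤ) : w (w⁻¹ x) = x := w.apply_symm_apply x

lemma mul_app (w v : Aut ι) (x : ι → ℤ) : (w * v) x = w (v x) := rfl

lemma one_app (x : ι → ℤ) : (1 : Aut ι) x = x := rfl

lemma aut_ext {w v : Aut ι} (h : ∀ i, w (e i) = v (e i)) : w = v := by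
  ext1 x
  rw [eq_sum_e x]
  simp only [map_sum, map_smul, h]

lemma evalC_actV (w : Aut ι) (γ : ι → ℤ) (z : ι → ℂ) :
    evalC γ (actV w z) = evalC (w⁻¹ γ) z := by
  conv_rhs => rw [eq_sum_e γ]
  rw [map_sum, evalC_sum]
  simp only [map_smul, evalC_smul]
  rfl

lemma pairZ_actDual (w : Aut ι) (γ η : ι → ℤ) :
    pairZ γ (actDual w η) = pairZ (w⁻¹ γ) η := by
  have h := evalC_actV w γ (toV η)
  have h2 : actV w (toV η) = toV (actDual w η) := by
    ext i; simp only [actV, evalC_toV]; rfl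
  rw [h2, evalC_toV, evalC_toV] at h
  exact_mod_cast h

lemma toV_actDual (w : Aut ι) (η : ι → ℤ) : toV (actDual w η) = actV w (toV η) := by
  ext i; simp only [actV, evalC_toV]; rfl

lemma actV_apply (w : Aut ι) (z : ι → ℂ) (i : ι) : actV w z i = evalC (w⁻¹ (e i)) z := rfl

lemma actDual_apply (w : Aut ι) (z : ι → ℤ) (i : ι) : actDual w z i = pairZ (w⁻¹ (e i)) z := rfl

lemma actV_mul (w v : Aut ι) (z : ι → ℂ) : actV w (actV v z) = actV (w * v) z := by
  ext i
  rw [actV_apply, evalC_actV, actV_apply, mul_inv_rev]; rfl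

lemma actV_one (z : ι → ℂ) : actV (1 : Aut ι) z = z := by
  ext i
  rw [actV_apply, inv_one, one_app, evalC_e]

lemma actDual_mul (w v : Aut ι) (z : ι → ℤ) : actDual w (actDual v z) = actDual (w * v) z := by
  ext i
  rw [actDual_apply, pairZ_actDual, actDual_apply, mul_inv_rev]; rfl

lemma actDual_one (z : ι → ℤ) : actDual (1 : Aut ι) z = z := by
  ext i
  rw [actDual_apply, inv_one, one_app, pairZ_e_left]

lemma actV_add (w : Aut ι) (y z : ι → ℂ) : actV w (y + z) = actV w y + actV w z := by
  ext i; simp [actV_apply, evalC_add']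

lemma actV_sub (w : Aut ι) (y z : ι → ℂ) : actV w (y - z) = actV w y - actV w z := by
  ext i; simp [actV_apply, evalC_sub']

lemma actV_smul (w : Aut ι) (c : ℂ) (z : ι → ℂ) : actV w (c • z) = c • actV w z := by
  ext i; simp [actV_apply, evalC_smul']

lemma toV_add (η μ : ι → ℤ) : toV (η + μ) = toV η + toV μ := by
  ext i; simp [toV]

lemma toV_sub (η μ : ι → ℤ) : toV (η - μ) = toV η - toV μ := by
  ext i; simp [toV]

lemma toV_inj {η μ : ι → ℤ} (h : toV η = toV μ) : η = μ := by
  ext i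
  have := congrFun h i
  simpa [toV] using this

/-- The all-one vector. -/
def one : ι → ℂ := fun _ => 1

/-- Height of a lattice vector. -/
def ht (γ : ι → ℤ) : ℤ := ∑ i, γ i

lemma evalC_one (γ : ι → ℤ) : evalC γ one = (ht γ : ℂ) := by
  simp [evalC, one, ht]

lemma ht_e (i : ι) : ht (e i : ι → ℤ) = 1 := by simp [ht, e_apply]

lemma ht_add (γ δ : ι → ℤ) : ht (γ + δ) = ht γ + ht δ := by simp [ht, Finset.sum_add_distrib]

lemma ht_neg (γ : ι → ℤ) : ht (-γ) = -ht γ := by simp [ht]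

lemma ht_sub (γ δ : ι → ℤ) : ht (γ - δ) = ht γ - ht δ := by simp [ht, Finset.sum_sub_distrib]

lemma ht_pos {γ : ι → ℤ} (h : ∀ i, 0 ≤ γ i) (h0 : γ ≠ 0) : 0 < ht γ := by
  refine lt_of_le_of_ne (Finset.sum_nonneg fun i _ => h i) fun h' => h0 ?_
  ext i
  exact (Finset.sum_eq_zero_iff_of_nonneg fun i _ => h i).1 h'.symm i (Finset.mem_univ i)

/-- a nonneg vector of height 1 is a basis vector -/
lemma eq_e_of_ht {γ : ι → ℤ} (h : ∀ i, 0 ≤ γ i) (h1 : ht γ = 1) : ∃ i, γ = e i := by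
  have : ∃ i, γ i ≠ 0 := by
    by_contra hc; push Not at hc
    simp [ht, hc] at h1
  obtain ⟨i, hi⟩ := this
  refine ⟨i, ?_⟩
  have hi' : 1 ≤ γ i := by have := h i; omega
  have hs : ∑ j ∈ Finset.univ.erase i, γ j + γ i = 1 := by
    rw [Finset.sum_erase_add _ _ (Finset.mem_univ i)]; exact h1
  have hnn : 0 ≤ ∑ j ∈ Finset.univ.erase i, γ j := Finset.sum_nonneg fun j _ => h j
  have hz : ∑ j ∈ Finset.univ.erase i, γ j = 0 := by omega
  ext j
  by_cases hj : j = i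
  · subst hj; rw [e_self]; omega
  · rw [e_ne hj]
    exact (Finset.sum_eq_zero_iff_of_nonneg fun j _ => h j).1 hz j (by simp [hj])

end Basics


/-! ### The group, permutation lemmas and roots -/

namespace Data

section Roots

variable (D : Data ι)

/-- The group as a finset. -/
def WF : Finset (Aut ι) := D.W_finite.toFinset

lemma mem_WF {w : Aut ι} : w ∈ D.WF ↔ w ∈ D.W := by simp [WF]

lemma Phi_W {w : Aut ι} (hw : w ∈ D.W) {ω : ι → ℤ} (h : ω ∈ D.Φ) : w ω ∈ D.Φ := by
  rw [D.Φ_spec] at h ⊢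
  obtain ⟨v, hv, i, rfl⟩ := h
  exact ⟨w * v, D.W.mul_mem hw hv, i, rfl⟩

lemma e_mem_Phi (i : ι) : e i ∈ D.Φ := (D.Φ_spec _).2 ⟨1, D.W.one_mem, i, rfl⟩

lemma we_mem_Phi {w : Aut ι} (hw : w ∈ D.W) (i : ι) : w (e i) ∈ D.Φ := (D.Φ_spec _).2 ⟨w, hw, i, rfl⟩

lemma Lam1_W {w : Aut ι} (hw : w ∈ D.W) {η : ι → ℤ} (h : η ∈ D.Λ₁) : actDual w η ∈ D.Λ₁ := by
  rw [D.Λ₁_spec] at h ⊢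
  obtain ⟨v, hv, i, hi, rfl⟩ := h
  exact ⟨w * v, D.W.mul_mem hw hv, i, hi, by rw [actDual_mul]⟩

lemma ell_Lam1 {η : ι → ℤ} (h : η ∈ D.Λ₁) : pairZ D.ell η = 1 := by
  obtain ⟨v, hv, i, hi, rfl⟩ := (D.Λ₁_spec _).1 h
  rw [pairZ_actDual, D.C4 _ (D.W.inv_mem hv), pairZ_e_right, hi]

lemma Phi_Lam1 {η ω : ι → ℤ} (h : η ∈ D.Λ₁) (hω : ω ∈ D.Φ) :
    pairZ ω η = -1 ∨ pairZ ω η = 0 ∨ pairZ ω η = 1 := by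
  obtain ⟨v, hv, i, hi, rfl⟩ := (D.Λ₁_spec _).1 h
  rw [pairZ_actDual, pairZ_e_right]
  exact D.C7 i hi _ (Or.inr (D.Phi_W (D.W.inv_mem hv) hω))

lemma e_mem_Lam1 {i : ι} (hi : D.ell i = 1) : e i ∈ D.Λ₁ :=
  (D.Λ₁_spec _).2 ⟨1, D.W.one_mem, i, hi, (actDual_one _).symm⟩

lemma InV0_one : D.InV0 (one : ι → ℂ) := fun _ _ _ => rfl

lemma InV0_add {ρ ρ' : ι → ℂ} (h : D.InV0 ρ) (h' : D.InV0 ρ') : D.InV0 (ρ + ρ') := by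
  intro i j hij
  simp [h i j hij, h' i j hij]

lemma InV0_smul {ρ : ι → ℂ} (t : ℂ) (h : D.InV0 ρ) : D.InV0 (t • ρ) := by
  intro i j hij
  simp [h i j hij]

lemma InV0_zero : D.InV0 (0 : ι → ℂ) := fun _ _ _ => rfl

lemma perm_lemma (hC0 : D.C0) {w : Aut ι} (hw : w ∈ D.W) (h : ∀ l, ∃ m, w (e l) = e m) : w = 1 := by
  obtain ⟨ρ', hV, -, -, hp⟩ := hC0
  choose σ hσ using h
  apply aut_ext
  intro l
  rw [one_app, hσ]
  by_contra hne
  set m := σ l with hm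
  obtain ⟨p, ⟨hinv, -, hpe⟩, -⟩ := hp (e l) (fun i => e_nonneg l i)
  have h1 : actV w⁻¹ ρ' = ρ' := by
    ext j
    rw [actV_apply, inv_inv, hσ, evalC_e]
    exact hV _ _ ⟨w, hw, Or.inl (hσ j).symm⟩
  have h2 : actDual w⁻¹ (e m) = e l := by
    ext j
    rw [actDual_apply, inv_inv, hσ, pairZ_e_left, e_apply, e_apply]
    by_cases hj : j = l
    · subst hj; simp [hm]
    · rw [if_neg, if_neg hj]
      intro hh
      apply hj
      apply e_inj (ι := ι)
      apply w.injective
      rw [hσ, hσ, hh]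
  have h3 : pairZ D.ell (e m) = pairZ D.ell (e l) := by
    rw [← h2, pairZ_actDual, inv_inv, D.C4 w hw]
  have h4 := hpe (e m) (fun i => e_nonneg m i) h3.le
  rw [if_neg hne] at h4
  have h5 := hpe (e l) (fun i => e_nonneg l i) le_rfl
  rw [if_pos rfl] at h5
  have h6 := hinv w⁻¹ (D.W.inv_mem hw) (ρ' + toV (e m))
  rw [actV_add, h1, ← toV_actDual, h2, h4, h5] at h6
  exact one_ne_zero h6

lemma nonperm_lemma (hC0 : D.C0) {w : Aut ι} (hw : w ∈ D.W) (h1 : w ≠ 1) :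
    ∃ l, (∀ i, 0 ≤ w (e l) i) ∧ ∀ m, w (e l) ≠ e m := by
  by_contra hc
  push Not at hc
  apply h1
  have hh : ∀ m, ∃ j, w (e j) = e m := by
    intro m
    have h2 : (w D.ell) m = ∑ j, D.ell j * (w (e j)) m := by
      conv_lhs => rw [eq_sum_e D.ell]
      simp only [map_sum, map_smul, Finset.sum_apply, Pi.smul_apply, smul_eq_mul]
    rw [D.C4 w hw] at h2
    have h3 : ∃ j, 0 < (w (e j)) m := by
      by_contra hcc
      push Not at hcc
      have := D.C6 m
      have h4 : ∑ j, D.ell j * (w (e j)) m ≤ 0 :=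
        Finset.sum_nonpos fun j _ => mul_nonpos_of_nonneg_of_nonpos (D.C6 j).le (hcc j)
      omega
    obtain ⟨j, hj⟩ := h3
    have hnn : ∀ i, 0 ≤ w (e j) i := by
      rcases D.C3 _ (D.we_mem_Phi hw j) with h | h
      · exact h
      · exact absurd (h m) (not_le.2 hj)
    obtain ⟨m', hm'⟩ := hc j hnn
    refine ⟨j, ?_⟩
    have : m' = m := by
      by_contra hne
      rw [hm', e_ne (Ne.symm hne)] at hj
      exact lt_irrefl _ hj
    rw [hm', this]
  have : w⁻¹ = 1 := by
    apply D.perm_lemma hC0 (D.W.inv_mem hw)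
    intro m
    obtain ⟨j, hj⟩ := hh m
    exact ⟨j, by rw [← hj, inv_app]⟩
  simpa using this

/-- All roots `W·Δ`. -/
def R : Finset (ι → ℤ) := (D.WF ×ˢ D.Δ).image fun p => p.1 p.2

/-- The positive ones. -/
def T : Finset (ι → ℤ) := D.R.filter fun β => ∀ i, 0 ≤ β i

lemma mem_R {β : ι → ℤ} : β ∈ D.R ↔ ∃ w ∈ D.W, ∃ α ∈ D.Δ, β = w α := by
  simp only [R, Finset.mem_image, Finset.mem_product, Prod.exists, mem_WF]
  constructor
  · rintro ⟨w, α, ⟨hw, hα⟩, rfl⟩; exact ⟨w, hw, α, hα, rfl⟩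
  · rintro ⟨w, hw, α, hα, rfl⟩; exact ⟨w, α, ⟨hw, hα⟩, rfl⟩

lemma mem_T {β : ι → ℤ} : β ∈ D.T ↔ β ∈ D.R ∧ ∀ i, 0 ≤ β i := by simp [T]

lemma R_W {w : Aut ι} (hw : w ∈ D.W) {β : ι → ℤ} (h : β ∈ D.R) : w β ∈ D.R := by
  rw [mem_R] at h ⊢
  obtain ⟨v, hv, α, hα, rfl⟩ := h
  exact ⟨w * v, D.W.mul_mem hw hv, α, hα, rfl⟩

lemma R_neg {β : ι → ℤ} (h : β ∈ D.R) : -β ∈ D.R := by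
  rw [mem_R] at h ⊢
  obtain ⟨v, hv, α, hα, rfl⟩ := h
  exact ⟨v, hv, -α, D.Δ_neg _ hα, by simp⟩

lemma Delta_sub_R {β : ι → ℤ} (h : β ∈ D.Δ) : β ∈ D.R :=
  (D.mem_R).2 ⟨1, D.W.one_mem, β, h, rfl⟩

lemma Deltapos_sub_T {β : ι → ℤ} (h : β ∈ D.Δpos) : β ∈ D.T := by
  simp only [Δpos, Finset.mem_filter] at h
  exact D.mem_T.2 ⟨D.Delta_sub_R h.1, h.2⟩

lemma R_prim {β : ι → ℤ} (h : β ∈ D.R) (n : ℤ) (γ : ι → ℤ) (hn : β = n • γ) : IsUnit n := by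
  obtain ⟨v, hv, α, hα, rfl⟩ := D.mem_R.1 h
  apply D.Δ_prim α hα n (v⁻¹ γ)
  rw [← map_smul, ← hn, inv_app]

lemma R_ne_zero {β : ι → ℤ} (h : β ∈ D.R) : β ≠ 0 := by
  rintro rfl
  have := D.R_prim h 0 0 (by simp)
  simp at this

lemma root_refl {β : ι → ℤ} (h : β ∈ D.R) : ∃ s ∈ D.W, ∃ c : ι → ℤ,
    (∀ x, s x = x - pairZ x c • β) ∧ pairZ β c = 2 := by
  obtain ⟨w, hw, α, hα, rfl⟩ := D.mem_R.1 h
  obtain ⟨s, hs, hsx⟩ := D.refl_mem α hα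
  refine ⟨w * s * w⁻¹, D.W.mul_mem (D.W.mul_mem hw hs) (D.W.inv_mem hw), actDual w (D.coroot α), ?_, ?_⟩
  · intro x
    rw [mul_app, mul_app, hsx, pairZ_actDual, reflMap, map_sub, map_smul, app_inv]
  · rw [pairZ_actDual, inv_app, D.coroot_pair α hα]

lemma refl_inv {β c : ι → ℤ} {s : Aut ι} (h : ∀ x, s x = x - pairZ x c • β) (h2 : pairZ β c = 2) :
    s⁻¹ = s := by
  have : s * s = 1 := by
    ext1 x
    rw [mul_app, one_app, h (s x), h x, pairZ_sub, pairZ_smul, h2, sub_sub, ← add_smul]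
    have : pairZ x c + (pairZ x c - pairZ x c * 2) = 0 := by ring
    rw [this, zero_smul, sub_zero]
  exact inv_eq_of_mul_eq_one_left this

lemma refl_self {β c : ι → ℤ} {s : Aut ι} (h : ∀ x, s x = x - pairZ x c • β) (h2 : pairZ β c = 2) :
    s β = -β := by
  rw [h, h2, two_smul]; abel

lemma prop_roots {β γ : ι → ℤ} (hβ : β ∈ D.R) (hγ : γ ∈ D.R) {m n : ℤ} (hm : m ≠ 0)
    (h : m • γ = n • β) : γ = β ∨ γ = -β := by
  obtain ⟨g, m', n', hg, hco, rfl, rfl⟩ := Int.exists_gcd_one' (m := m) (n := n)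
    (Int.gcd_pos_of_ne_zero_left _ hm)
  have hg' : (g : ℤ) ≠ 0 := by exact_mod_cast hg.ne'
  have h' : ∀ i, m' * γ i = n' * β i := by
    intro i
    have := congrFun h i
    simp only [Pi.smul_apply, smul_eq_mul] at this
    apply mul_left_cancel₀ hg'
    linarith
  have hcop : IsCoprime m' n' := by rwa [Int.isCoprime_iff_gcd_eq_one]
  have d1 : ∀ i, m' ∣ β i := fun i => hcop.dvd_of_dvd_mul_left ⟨γ i, (h' i).symm⟩
  have d2 : ∀ i, n' ∣ γ i := fun i => hcop.symm.dvd_of_dvd_mul_left ⟨β i, (h' i)⟩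
  choose b hb using d1
  choose g' hg' using d2
  have u1 : IsUnit m' := D.R_prim hβ m' b (by ext i; simp [hb])
  have u2 : IsUnit n' := D.R_prim hγ n' g' (by ext i; simp [hg'])
  rw [Int.isUnit_iff] at u1 u2
  rcases u1 with rfl | rfl <;> rcases u2 with rfl | rfl
  · left; ext i; simpa using h' i
  · right; ext i; simpa using h' i
  · right; ext i; have := h' i; simp only [Pi.neg_apply]; omega
  · left; ext i; have := h' i; omega

lemma R_coh (hC0 : D.C0) {β : ι → ℤ} (hβ : β ∈ D.R) : (∀ i, 0 ≤ β i) ∨ (∀ i, β i ≤ 0) := by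
  obtain ⟨s, hs, c, hsx, hc2⟩ := D.root_refl hβ
  have hs1 : s ≠ 1 := by
    rintro rfl
    have h := refl_self hsx hc2
    rw [one_app] at h
    exact D.R_ne_zero hβ (self_eq_neg.1 h)
  obtain ⟨l, hl, hl'⟩ := D.nonperm_lemma hC0 hs hs1
  have hse : ∀ x i, s (e x) i = (e x : ι → ℤ) i - c x * β i := by
    intro x i
    rw [hsx, pairZ_e_left]; simp
  have hcl : c l ≠ 0 := by
    intro h0
    apply hl' l
    ext i; rw [hse, h0]; simp
  by_cases hbl : c l * β l ≤ 0
  · have hall : ∀ i, c l * β i ≤ 0 := by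
      intro i
      by_cases hi : i = l
      · rw [hi]; exact hbl
      · have := hl i
        rw [hse, e_ne hi] at this; omega
    rcases lt_or_gt_of_ne hcl with h | h
    · left; intro i; by_contra hh; push Not at hh
      nlinarith [hall i, mul_pos_of_neg_of_neg h hh]
    · right; intro i; by_contra hh; push Not at hh
      nlinarith [hall i, mul_pos h hh]
  · exfalso
    have hl1 := hl l
    rw [hse, e_self] at hl1
    have hb1 : c l * β l = 1 := by omega
    have hsum : ∑ x ∈ Finset.univ.erase l, β x * c x = 1 := by
      have : ∑ x ∈ Finset.univ.erase l, β x * c x + β l * c l = 2 := by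
        rw [Finset.sum_erase_add _ _ (Finset.mem_univ l)]; exact hc2
      rw [mul_comm] at hb1
      omega
    obtain ⟨x, hxm, hx⟩ : ∃ x ∈ Finset.univ.erase l, 0 < β x * c x := by
      by_contra hcc
      push Not at hcc
      have := Finset.sum_nonpos hcc
      omega
    have hxl : x ≠ l := by simpa using hxm
    have hcu : c l = 1 ∨ c l = -1 := Int.isUnit_iff.1 (IsUnit.of_mul_eq_one _ hb1)
    have key : ∀ ε : ℤ, ε * ε = 1 → ε = c l → False := by
      intro ε hε hεc
      have hcc : ∀ i j, (ε * c i) * (ε * β j) = c i * β j := by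
        intro i j
        calc _ = (ε * ε) * (c i * β j) := by ring
          _ = _ := by rw [hε, one_mul]
      have hbx : ε * β x ≤ 0 := by
        have := hl x
        rw [hse, e_ne hxl, ← hεc] at this; omega
      have hcx : (ε * c x) * (ε * β x) > 0 := by rw [hcc]; linarith
      have hbx' : ε * β x < 0 := lt_of_le_of_ne hbx fun h => by rw [h] at hcx; simp at hcx
      have hcx' : ε * c x < 0 := by
        by_contra hh; push Not at hh
        nlinarith
      have hlp : 0 < s (e x) l := by
        rw [hse, e_ne hxl.symm, ← hcc, hεc, hb1]
        rw [hεc] at hcx'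
        linarith
      have hnn : ∀ i, 0 ≤ s (e x) i := by
        rcases D.C3 _ (D.we_mem_Phi hs x) with h | h
        · exact h
        · exact absurd (h l) (not_le.2 hlp)
      have hx0 : (ε * c x) * (ε * β x) = 1 := by
        have := hnn x
        rw [hse, e_self, ← hcc] at this; omega
      have hbx1 : ε * β x = -1 := by
        rw [mul_comm] at hx0
        rcases Int.isUnit_iff.1 (IsUnit.of_mul_eq_one _ hx0) with h | h <;> omega
      apply hl' x
      ext y
      rw [hse, ← hεc]
      by_cases hy : y = l
      · subst hy
        rw [e_self, e_ne hxl.symm, hεc, hb1]; norm_num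
      · by_cases hyx : y = x
        · subst hyx; rw [e_ne hy, e_self]; omega
        · rw [e_ne hy, e_ne hyx]
          have h1 := hl y
          rw [hse, e_ne hy, ← hεc] at h1
          have h2 := hnn y
          rw [hse, e_ne hyx, ← hcc] at h2
          have h3 : 0 ≤ ε * β y := by
            by_contra hh; push Not at hh
            nlinarith [mul_pos_of_neg_of_neg hcx' hh]
          omega
    rcases hcu with h | h
    · exact key 1 rfl h.symm
    · exact key (-1) rfl h.symm

lemma T_ht_pos {β : ι → ℤ} (h : β ∈ D.T) : 0 < ht β :=
  ht_pos (D.mem_T.1 h).2 (D.R_ne_zero (D.mem_T.1 h).1)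

lemma R_T (hC0 : D.C0) {β : ι → ℤ} (hβ : β ∈ D.R) : β ∈ D.T ∨ -β ∈ D.T := by
  rcases D.R_coh hC0 hβ with h | h
  · left; exact D.mem_T.2 ⟨hβ, h⟩
  · right; exact D.mem_T.2 ⟨D.R_neg hβ, fun i => by simpa using h i⟩

lemma T_C7 {β : ι → ℤ} (hβ : β ∈ D.T) {k : ι} (hk : D.ell k = 1) : β k = 0 ∨ β k = 1 := by
  obtain ⟨hR, hnn⟩ := D.mem_T.1 hβ
  obtain ⟨s, hs, c, hsx, hc2⟩ := D.root_refl hR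
  have h0 : pairZ D.ell c = 0 := by
    have h := D.C4 s hs
    rw [hsx, sub_eq_self] at h
    exact (smul_eq_zero.1 h).resolve_right (D.R_ne_zero hR)
  obtain ⟨m, hm⟩ : ∃ m, c m < 0 := by
    by_contra hh
    push Not at hh
    have hz : ∀ i, D.ell i * c i = 0 := fun i =>
      (Finset.sum_eq_zero_iff_of_nonneg fun i _ => mul_nonneg (D.C6 i).le (hh i)).1 h0 i (Finset.mem_univ i)
    have hz' : ∀ i, c i = 0 := fun i => (mul_eq_zero.1 (hz i)).resolve_left (D.C6 i).ne'
    simp [pairZ, hz'] at hc2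
  have h1 := D.C7 k hk _ (Or.inr (D.we_mem_Phi hs m))
  rw [hsx, pairZ_e_left] at h1
  simp only [Pi.sub_apply, Pi.smul_apply, smul_eq_mul] at h1
  have h2 := e_nonneg m k
  have h3 := hnn k
  have : β k ≤ 1 := by
    by_contra hh; push Not at hh
    have : c m * β k ≤ (-1) * β k := mul_le_mul_of_nonneg_right (by omega) h3
    omega
  omega

lemma R_Lam1 (hC0 : D.C0) {η β : ι → ℤ} (h : η ∈ D.Λ₁) (hβ : β ∈ D.R) :
    pairZ β η = -1 ∨ pairZ β η = 0 ∨ pairZ β η = 1 := by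
  obtain ⟨v, hv, i, hi, rfl⟩ := (D.Λ₁_spec _).1 h
  rw [pairZ_actDual, pairZ_e_right]
  rcases D.R_T hC0 (D.R_W (D.W.inv_mem hv) hβ) with h | h
  · rcases D.T_C7 h hi with h | h <;> omega
  · rcases D.T_C7 h hi with h | h <;> rw [Pi.neg_apply] at h <;> omega

end Roots

end Data


/-! ### Degrees, linear forms, substitutions -/

section Poly

/-- Polynomials all of whose monomials have degree `< d`. -/
def Dg (d : ℕ) : Submodule ℂ (MvPolynomial ι ℂ) := restrictSupport ℂ {n | n.degree < d}

lemma mem_Dg {d : ℕ} {p : MvPolynomial ι ℂ} : p ∈ Dg d ↔ ∀ m ∈ p.support, m.degree < d := by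
  rw [Dg, mem_restrictSupport_iff]; rfl

lemma mem_Dg_succ {d : ℕ} {p : MvPolynomial ι ℂ} : p ∈ Dg (d + 1) ↔ p.totalDegree ≤ d := by
  rw [mem_Dg, totalDegree, Finset.sup_le_iff]
  refine forall₂_congr fun m _ => ?_
  rw [Nat.lt_succ_iff]; rfl

lemma Dg_zero {p : MvPolynomial ι ℂ} (h : p ∈ Dg 0) : p = 0 := by
  rw [mem_Dg] at h
  rw [← support_eq_empty, Finset.eq_empty_iff_forall_notMem]
  exact fun m hm => by simpa using h m hm

lemma Dg_mono {a b : ℕ} (h : a ≤ b) {p : MvPolynomial ι ℂ} (hp : p ∈ Dg a) : p ∈ Dg b := by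
  rw [mem_Dg] at hp ⊢
  exact fun m hm => (hp m hm).trans_le h

lemma Dg_mul {a b : ℕ} {p q : MvPolynomial ι ℂ} (hp : p ∈ Dg a) (hq : q ∈ Dg (b + 1)) :
    p * q ∈ Dg (a + b) := by
  rcases a with _ | a
  · rw [Dg_zero hp, zero_mul]; exact Submodule.zero_mem _
  · rw [Nat.add_right_comm]
    rw [mem_Dg_succ] at *
    exact (totalDegree_mul _ _).trans (by omega)

lemma Dg_mul' {a b : ℕ} {p q : MvPolynomial ι ℂ} (hp : p ∈ Dg (a + 1)) (hq : q ∈ Dg b) :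
    p * q ∈ Dg (a + b) := by
  rw [mul_comm, add_comm]; exact Dg_mul hq hp

lemma Dg_C (c : ℂ) : (C c : MvPolynomial ι ℂ) ∈ Dg 1 := by
  rw [show 1 = 0 + 1 from rfl, mem_Dg_succ, totalDegree_C]

lemma Dg_X (i : ι) : (X i : MvPolynomial ι ℂ) ∈ Dg 2 := by
  rw [show 2 = 1 + 1 from rfl, mem_Dg_succ, totalDegree_X]

lemma Dg_prod {κ : Type*} (s : Finset κ) (f : κ → MvPolynomial ι ℂ) (h : ∀ a ∈ s, f a ∈ Dg 2) :
    ∏ a ∈ s, f a ∈ Dg (s.card + 1) := by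
  induction s using Finset.induction_on with
  | empty => simpa using Dg_C (ι := ι) 1
  | insert a s ha ih =>
    rw [Finset.prod_insert ha, Finset.card_insert_of_notMem ha]
    have := Dg_mul (h a (Finset.mem_insert_self _ _)) (ih fun b hb => h b (Finset.mem_insert_of_mem hb))
    exact Dg_mono (by omega) this

lemma Dg_prod' {κ : Type*} (s : Finset κ) (f : κ → MvPolynomial ι ℂ) (h : ∀ a ∈ s, f a ∈ Dg 1) :
    ∏ a ∈ s, f a ∈ Dg 1 := by
  induction s using Finset.induction_on with
  | empty => simpa using Dg_C (ι := ι) 1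
  | insert a s ha ih =>
    rw [Finset.prod_insert ha]
    exact Dg_mul (b := 0) (h a (Finset.mem_insert_self _ _)) (ih fun b hb => h b (Finset.mem_insert_of_mem hb))

lemma Dg_map {d : ℕ} {N : Submodule ℂ (MvPolynomial ι ℂ)} (F : MvPolynomial ι ℂ →ₗ[ℂ] MvPolynomial ι ℂ)
    (h : ∀ m : ι →₀ ℕ, m.degree < d → F (monomial m 1) ∈ N) {p : MvPolynomial ι ℂ} (hp : p ∈ Dg d) :
    F p ∈ N := by
  have : Dg d ≤ N.comap F := by
    rw [Dg, restrictSupport_eq_span, Submodule.span_le]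
    rintro _ ⟨m, hm, rfl⟩
    exact h m hm
  exact this hp

lemma fs_ind {P : (ι →₀ ℕ) → Prop} (h0 : P 0) (h1 : ∀ i, P (Finsupp.single i 1))
    (ha : ∀ m n, P m → P n → P (m + n)) (m : ι →₀ ℕ) : P m := by
  induction m using Finsupp.induction_linear with
  | zero => exact h0
  | add f g hf hg => exact ha _ _ hf hg
  | single i n =>
    induction n with
    | zero => simpa using h0
    | succ n ih => rw [Finsupp.single_add]; exact ha _ _ ih (h1 i)

lemma mon_add (m n : ι →₀ ℕ) :
    (monomial (m + n) 1 : MvPolynomial ι ℂ) = monomial m 1 * monomial n 1 := by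
  rw [monomial_mul, one_mul]

lemma Dg_mon (m : ι →₀ ℕ) : (monomial m 1 : MvPolynomial ι ℂ) ∈ Dg (m.degree + 1) := by
  rw [Dg, monomial_mem_restrictSupport]; left; exact Nat.lt_succ_self _

lemma Dg_bind_mon {f : ι → MvPolynomial ι ℂ} (hf : ∀ i, f i ∈ Dg 2) (m : ι →₀ ℕ) :
    bind₁ f (monomial m 1) ∈ Dg (m.degree + 1) := by
  induction m using fs_ind with
  | h0 => simpa using Dg_C (ι := ι) 1
  | h1 i =>
    have : (monomial (Finsupp.single i 1) 1 : MvPolynomial ι ℂ) = X i := rfl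
    rw [this, bind₁_X_right, Finsupp.degree_single]
    exact hf i
  | ha m n hm hn =>
    rw [mon_add, map_mul, map_add]
    exact Dg_mono (by omega) (Dg_mul hm hn)

lemma Dg_bind {f : ι → MvPolynomial ι ℂ} (hf : ∀ i, f i ∈ Dg 2) {d : ℕ} {p : MvPolynomial ι ℂ}
    (hp : p ∈ Dg d) : bind₁ f p ∈ Dg d :=
  Dg_map (bind₁ f).toLinearMap (fun m hm => Dg_mono hm (Dg_bind_mon hf m)) hp

/-- translation -/
def tr (y : ι → ℂ) (p : MvPolynomial ι ℂ) : MvPolynomial ι ℂ := bind₁ (fun i => X i - C (y i)) p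

lemma eval_bind (z : ι → ℂ) (f : ι → MvPolynomial ι ℂ) (p : MvPolynomial ι ℂ) :
    eval z (bind₁ f p) = eval (fun i => eval z (f i)) p := by
  rw [← aeval_eq_eval, ← aeval_eq_eval, aeval_bind₁]

lemma eval_tr (z y : ι → ℂ) (p : MvPolynomial ι ℂ) : eval z (tr y p) = eval (z - y) p := by
  rw [tr, eval_bind]
  have : (fun i => eval z (X i - C (y i))) = z - y := by
    ext i; simp
  rw [this]

lemma Dg_sub_C (i : ι) (c : ℂ) : (X i - C c : MvPolynomial ι ℂ) ∈ Dg 2 :=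
  Submodule.sub_mem _ (Dg_X i) (Dg_mono (by omega) (Dg_C c))

lemma Dg_tr {d : ℕ} {p : MvPolynomial ι ℂ} (y : ι → ℂ) (hp : p ∈ Dg d) : tr y p ∈ Dg d :=
  Dg_bind (fun i => Dg_sub_C i _) hp

lemma Dg_tr_mon (y : ι → ℂ) (m : ι →₀ ℕ) :
    tr y (monomial m 1) - monomial m 1 ∈ Dg m.degree := by
  induction m using fs_ind with
  | h0 => simp [tr]
  | h1 i =>
    have : (monomial (Finsupp.single i 1) 1 : MvPolynomial ι ℂ) = X i := rfl
    rw [this, tr, bind₁_X_right, Finsupp.degree_single, sub_sub_cancel_left]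
    exact Submodule.neg_mem _ (Dg_C _)
  | ha m n hm hn =>
    have h : tr y (monomial (m + n) 1) - (monomial (m + n) 1 : MvPolynomial ι ℂ) =
      (tr y (monomial m 1) - monomial m 1) * tr y (monomial n 1)
        + monomial m 1 * (tr y (monomial n 1) - monomial n 1) := by
      rw [mon_add, tr, map_mul, tr, tr]; ring
    rw [h, map_add]
    exact Submodule.add_mem _ (Dg_mul hm (Dg_tr y (Dg_mon n))) (Dg_mul' (Dg_mon m) hn)

lemma Dg_tr_sub {d : ℕ} {p : MvPolynomial ι ℂ} (y : ι → ℂ) (hp : p ∈ Dg d) :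
    tr y p - p ∈ Dg (d - 1) := by
  have h := Dg_map (N := Dg (d - 1))
    ((bind₁ (fun i => X i - C (y i) : ι → MvPolynomial ι ℂ)).toLinearMap - LinearMap.id) ?_ hp
  · rw [LinearMap.sub_apply, AlgHom.toLinearMap_apply, LinearMap.id_apply] at h
    exact h
  · intro m hm
    rw [LinearMap.sub_apply, AlgHom.toLinearMap_apply, LinearMap.id_apply]
    exact Dg_mono (by omega) (Dg_tr_mon y m)

/-- linear form -/
def lin (γ : ι → ℤ) : MvPolynomial ι ℂ := ∑ i, C (γ i : ℂ) * X i

lemma eval_lin (γ : ι → ℤ) (z : ι → ℂ) : eval z (lin γ) = evalC γ z := by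
  simp [lin, evalC]

lemma Dg_lin (γ : ι → ℤ) : lin γ ∈ Dg 2 :=
  Submodule.sum_mem _ fun i _ => Dg_mul' (a := 0) (Dg_C _) (Dg_X i)

lemma lin_ne_zero {γ : ι → ℤ} (h : γ ≠ 0) : lin γ ≠ 0 := by
  intro h0
  apply h
  ext i
  have := eval_lin γ (toV (e i))
  rw [h0, map_zero, evalC_toV, pairZ_e_right] at this
  exact_mod_cast this.symm

lemma lin_deg {γ : ι → ℤ} (h : γ ≠ 0) : (lin γ).totalDegree = 1 := by
  apply le_antisymm (mem_Dg_succ.1 (Dg_lin γ))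
  by_contra hh
  have h0 : (lin γ).totalDegree = 0 := by omega
  rw [totalDegree_eq_zero_iff_eq_C] at h0
  apply lin_ne_zero h
  have h1 := eval_lin γ (0 : ι → ℂ)
  rw [evalC_zero'] at h1
  rw [h0, eval_C] at h1
  rw [h0, h1, C_0]

lemma lin_dvd_iff {β : ι → ℤ} (hβ : β ≠ 0) (f : MvPolynomial ι ℂ)
    (h : ∀ z, evalC β z = 0 → eval z f = 0) : lin β ∣ f := by
  obtain ⟨i, hi⟩ : ∃ i, β i ≠ 0 := by
    by_contra hc; push Not at hc; exact hβ (funext hc)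
  have hi' : (β i : ℂ) ≠ 0 := by exact_mod_cast hi
  set g : ι → MvPolynomial ι ℂ := fun j => X j - C (if j = i then (1 / (β i : ℂ)) else 0) * lin β with hg
  have h1 : bind₁ g f = 0 := by
    apply MvPolynomial.funext
    intro z
    rw [eval_bind, map_zero]
    apply h
    simp only [hg, map_sub, eval_X, map_mul, eval_C, eval_lin, evalC]
    simp only [mul_sub, Finset.sum_sub_distrib]
    simp only [ite_mul, zero_mul, mul_ite, mul_zero, Finset.sum_ite_eq', Finset.mem_univ, if_true]
    field_simp
    simp
  have h2 : (Ideal.Quotient.mkₐ ℂ (Ideal.span {lin β})).comp (bind₁ g)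
      = Ideal.Quotient.mkₐ ℂ (Ideal.span {lin β}) := by
    apply MvPolynomial.algHom_ext
    intro j
    rw [AlgHom.comp_apply, bind₁_X_right, hg]
    simp only [map_sub, map_mul]
    have : Ideal.Quotient.mkₐ ℂ (Ideal.span {lin β}) (lin β) = 0 := by
      rw [Ideal.Quotient.mkₐ_eq_mk, Ideal.Quotient.eq_zero_iff_mem]
      exact Ideal.mem_span_singleton_self _
    rw [this, mul_zero, sub_zero]
  have h3 := congrArg (fun F => F f) h2
  simp only [AlgHom.comp_apply, h1, map_zero] at h3
  have h4 := h3.symm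
  rw [Ideal.Quotient.mkₐ_eq_mk, Ideal.Quotient.eq_zero_iff_mem, Ideal.mem_span_singleton] at h4
  exact h4

/-- Zariski density: if `F * G` vanishes pointwise and `G ≠ 0`, then `F = 0`. -/
lemma zariski {F G : MvPolynomial ι ℂ} (hG : G ≠ 0) (h : ∀ z, eval z G ≠ 0 → eval z F = 0) : F = 0 := by
  have : F * G = 0 := by
    apply MvPolynomial.funext
    intro z
    rw [map_mul, map_zero]
    by_cases hz : eval z G = 0
    · rw [hz, mul_zero]
    · rw [h z hz, zero_mul]
  exact (mul_eq_zero.1 this).resolve_right hG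

end Poly

namespace Data

section Div

variable (D : Data ι)

lemma T_nonprop {β γ : ι → ℤ} (hβ : β ∈ D.T) (hγ : γ ∈ D.T) {m n : ℤ} (hm : m ≠ 0)
    (h : m • γ = n • β) : γ = β := by
  rcases D.prop_roots (D.mem_T.1 hβ).1 (D.mem_T.1 hγ).1 hm h with h | h
  · exact h
  · have h1 := D.T_ht_pos hβ
    have h2 := D.T_ht_pos hγ
    rw [h, ht_neg] at h2; omega

lemma prod_lin_ne_zero {S : Finset (ι → ℤ)} (hS : S ⊆ D.T) : ∏ β ∈ S, lin β ≠ 0 :=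
  Finset.prod_ne_zero_iff.2 fun β hβ => lin_ne_zero (D.R_ne_zero (D.mem_T.1 (hS hβ)).1)

lemma prod_lin_deg {S : Finset (ι → ℤ)} (hS : S ⊆ D.T) : (∏ β ∈ S, lin β).totalDegree = S.card := by
  induction S using Finset.induction_on with
  | empty => simp
  | insert a s ha ih =>
    have hs : s ⊆ D.T := fun x hx => hS (Finset.mem_insert_of_mem hx)
    have ha' := D.R_ne_zero (D.mem_T.1 (hS (Finset.mem_insert_self a s))).1
    rw [Finset.prod_insert ha, totalDegree_mul_of_isDomain (lin_ne_zero ha') (D.prod_lin_ne_zero hs),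
      ih hs, lin_deg ha', Finset.card_insert_of_notMem ha, add_comm]

lemma prod_dvd {S : Finset (ι → ℤ)} (hS : S ⊆ D.T) (f : MvPolynomial ι ℂ)
    (h : ∀ β ∈ S, ∀ z, evalC β z = 0 → eval z f = 0) : ∏ β ∈ S, lin β ∣ f := by
  induction S using Finset.induction_on with
  | empty => simp
  | insert β s hβ ih =>
    have hs : s ⊆ D.T := fun x hx => hS (Finset.mem_insert_of_mem hx)
    have hβT := hS (Finset.mem_insert_self β s)
    obtain ⟨q, rfl⟩ := ih hs fun γ hγ => h γ (Finset.mem_insert_of_mem hγ)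
    rw [Finset.prod_insert hβ, mul_comm (lin β)]
    apply mul_dvd_mul_left
    have hβ0 := D.R_ne_zero (D.mem_T.1 hβT).1
    obtain ⟨i, hi⟩ : ∃ i, β i ≠ 0 := by
      by_contra hc; push Not at hc; exact hβ0 (funext hc)
    have hi' : (β i : ℂ) ≠ 0 := by exact_mod_cast hi
    apply lin_dvd_iff hβ0
    -- reduce to a polynomial identity on the hyperplane, via a projection
    set g : ι → MvPolynomial ι ℂ :=
      fun j => C (β i : ℂ) * X j - C (if j = i then 1 else 0) * lin β with hg
    have hgz : ∀ z, (fun j => eval z (g j)) = fun j => β i * z j - (if j = i then 1 else 0) * evalC β z := by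
      intro z; ext j; simp only [hg, map_sub, eval_X, map_mul, eval_C, eval_lin]
    have hhyp : ∀ z, evalC β (fun j => eval z (g j)) = 0 := by
      intro z
      rw [hgz]
      simp only [evalC]
      simp only [mul_sub, Finset.sum_sub_distrib]
      simp only [ite_mul, zero_mul, mul_ite, mul_zero, Finset.sum_ite_eq', Finset.mem_univ, if_true]
      rw [sub_eq_zero, one_mul, Finset.mul_sum]
      exact Finset.sum_congr rfl fun j _ => by ring
    have hprod : bind₁ g (∏ γ ∈ s, lin γ) * bind₁ g q = 0 := by
      rw [← map_mul]
      apply MvPolynomial.funext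
      intro z
      rw [eval_bind, map_zero]
      exact h β (Finset.mem_insert_self _ _) _ (hhyp z)
    have hne : bind₁ g (∏ γ ∈ s, lin γ) ≠ 0 := by
      rw [map_prod, Finset.prod_ne_zero_iff]
      intro γ hγ h0
      have hne : γ ≠ β := fun h => hβ (h ▸ hγ)
      apply hne
      apply D.T_nonprop hβT (hs hγ) hi (n := γ i)
      ext j
      have h1 := congrArg (eval (toV (e j))) h0
      rw [eval_bind, eval_lin, hgz, map_zero, evalC_toV, pairZ_e_right] at h1
      simp only [evalC, mul_sub, Finset.sum_sub_distrib, ite_mul, zero_mul, mul_ite, mul_zero,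
        Finset.sum_ite_eq', Finset.mem_univ, if_true, toV, e_apply, one_mul] at h1
      simp at h1
      simp only [Pi.smul_apply, smul_eq_mul]
      have h2 : ((γ j * β i - γ i * β j : ℤ) : ℂ) = 0 := by push_cast; exact h1
      have h3 : γ j * β i - γ i * β j = 0 := by exact_mod_cast h2
      linarith
    have hq := (mul_eq_zero.1 hprod).resolve_left hne
    intro z hz
    have h1 := congrArg (eval ((1 / (β i : ℂ)) • z)) hq
    rw [eval_bind, hgz, map_zero, evalC_smul', hz] at h1
    have h2 : (fun j => (β i : ℂ) * ((1 / (β i : ℂ)) • z) j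
        - (if j = i then 1 else 0) * (1 / (β i : ℂ) * 0)) = z := by
      ext j
      simp only [Pi.smul_apply, smul_eq_mul]
      field_simp
      simp
    rwa [h2] at h1

end Div

end Data


/-! ### Signs and antisymmetrization -/

section Sign

/-- absolute value of a coherent vector -/
def absv (γ : ι → ℤ) : ι → ℤ := if ∀ i, 0 ≤ γ i then γ else -γ

/-- sign of a coherent vector -/
def sgn (γ : ι → ℤ) : ℂ := if ∀ i, 0 ≤ γ i then 1 else -1

lemma sgn_mul_self (γ : ι → ℤ) : sgn γ * sgn γ = 1 := by
  unfold sgn; split_ifs <;> norm_num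

lemma sgn_ne_zero (γ : ι → ℤ) : sgn γ ≠ 0 := by
  unfold sgn; split_ifs <;> norm_num

lemma absv_cases (γ : ι → ℤ) : (absv γ = γ ∧ sgn γ = 1) ∨ (absv γ = -γ ∧ sgn γ = -1) := by
  unfold absv sgn; split_ifs <;> simp

end Sign

namespace Data

section Anti

variable (D : Data ι)

/-- sign character relative to a set of roots -/
def eps (T' : Finset (ι → ℤ)) (w : Aut ι) : ℂ := ∏ β ∈ T', sgn (w β)

lemma sgn_T {β : ι → ℤ} (h : β ∈ D.T) : sgn β = 1 := if_pos (D.mem_T.1 h).2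

lemma not_nonneg_neg {β : ι → ℤ} (h : β ∈ D.T) : ¬ ∀ i, 0 ≤ (-β) i := by
  intro hh
  have h1 := D.T_ht_pos h
  have h2 : 0 ≤ ht (-β) := Finset.sum_nonneg fun i _ => hh i
  rw [ht_neg] at h2; omega

lemma sgn_negT {β : ι → ℤ} (h : β ∈ D.T) : sgn (-β) = -1 := if_neg (D.not_nonneg_neg h)

lemma sgn_neg_R (hC0 : D.C0) {β : ι → ℤ} (h : β ∈ D.R) : sgn (-β) = -sgn β := by
  rcases D.R_T hC0 h with h | h
  · rw [D.sgn_T h, D.sgn_negT h]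
  · rw [D.sgn_T h]
    have := D.sgn_negT h
    rw [neg_neg] at this
    rw [this, neg_neg]

lemma absv_mem_T (hC0 : D.C0) {β : ι → ℤ} (h : β ∈ D.R) : absv β ∈ D.T := by
  rcases D.R_T hC0 h with h | h
  · rw [absv, if_pos (D.mem_T.1 h).2]; exact h
  · have := D.not_nonneg_neg h
    rw [neg_neg] at this
    rw [absv, if_neg this]; exact h

lemma T_pm {β γ : ι → ℤ} (hβ : β ∈ D.T) (hγ : γ ∈ D.T) (h : γ = β ∨ γ = -β) : γ = β := by
  rcases h with h | h
  · exact h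
  · exfalso
    have h1 := D.T_ht_pos hβ
    have h2 := D.T_ht_pos hγ
    rw [h, ht_neg] at h2; omega

lemma absv_inj {w : Aut ι} {β γ : ι → ℤ} (hβ : β ∈ D.T) (hγ : γ ∈ D.T)
    (h : absv (w β) = absv (w γ)) : β = γ := by
  apply D.T_pm hγ hβ
  rcases absv_cases (w β) with ⟨h1, -⟩ | ⟨h1, -⟩ <;> rcases absv_cases (w γ) with ⟨h2, -⟩ | ⟨h2, -⟩ <;>
    rw [h1, h2] at h
  · left; exact w.injective h
  · right; apply w.injective; rw [h, map_neg]
  · right; apply w.injective; rw [map_neg, ← h, neg_neg]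
  · left; exact w.injective (neg_injective h)

lemma prod_stab {M : Type*} [CommMonoid M] {T' : Finset (ι → ℤ)} (hT : T' ⊆ D.T) {w : Aut ι}
    (hs : ∀ β ∈ T', absv (w β) ∈ T') (F : (ι → ℤ) → M) :
    ∏ β ∈ T', F (absv (w β)) = ∏ β ∈ T', F β := by
  have hinj : Set.InjOn (fun β => absv (w β)) (T' : Set (ι → ℤ)) :=
    fun β hβ γ hγ h => D.absv_inj (hT hβ) (hT hγ) h
  have him : T'.image (fun β => absv (w β)) = T' := by
    apply Finset.eq_of_subset_of_card_le
    · intro x hx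
      obtain ⟨β, hβ, rfl⟩ := Finset.mem_image.1 hx
      exact hs β hβ
    · rw [Finset.card_image_of_injOn hinj]
  conv_rhs => rw [← him]
  rw [Finset.prod_image hinj]

lemma prod_even {M : Type*} [CommMonoid M] {T' : Finset (ι → ℤ)} (hT : T' ⊆ D.T) {w : Aut ι}
    (hs : ∀ β ∈ T', absv (w β) ∈ T') (F : (ι → ℤ) → M) (hF : ∀ γ, F (-γ) = F γ) :
    ∏ β ∈ T', F (w β) = ∏ β ∈ T', F β := by
  rw [← D.prod_stab hT hs F]
  refine Finset.prod_congr rfl fun β _ => ?_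
  rcases absv_cases (w β) with ⟨h1, -⟩ | ⟨h1, -⟩ <;> rw [h1]
  rw [hF]

lemma prod_odd {T' : Finset (ι → ℤ)} (hT : T' ⊆ D.T) {w : Aut ι}
    (hs : ∀ β ∈ T', absv (w β) ∈ T') (F : (ι → ℤ) → ℂ) (hF : ∀ γ ∈ T', F (-γ) = -F γ) :
    ∏ β ∈ T', F (w β) = eps T' w * ∏ β ∈ T', F β := by
  rw [← D.prod_stab hT hs F, eps, ← Finset.prod_mul_distrib]
  refine Finset.prod_congr rfl fun β hβ => ?_
  have := hF _ (hs β hβ)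
  rcases absv_cases (w β) with ⟨h1, h2⟩ | ⟨h1, h2⟩
  · rw [h1, h2, one_mul]
  · rw [h1, neg_neg] at this
    rw [h1, h2, this]; ring

lemma eps_mul (hC0 : D.C0) {T' : Finset (ι → ℤ)} (hT : T' ⊆ D.T) {s w : Aut ι} (hsW : s ∈ D.W)
    (hs : ∀ β ∈ T', absv (w β) ∈ T') : eps T' (s * w) = eps T' s * eps T' w := by
  have := D.prod_odd hT hs (fun γ => sgn (s γ)) (fun γ hγ => by
    rw [map_neg, D.sgn_neg_R hC0 (D.R_W hsW (D.mem_T.1 (hT hγ)).1)])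
  rw [mul_comm (eps T' s)]
  exact this

lemma eps_refl {T' : Finset (ι → ℤ)} (hT : T' ⊆ D.T) {s : Aut ι}
    {β c : ι → ℤ} (hβ : β ∈ T') (h : ∀ x, s x = x - pairZ x c • β) (h2 : pairZ β c = 2)
    (hs : ∀ γ ∈ T', absv (s γ) ∈ T') : eps T' s = -1 := by
  have hss : ∀ x, s (s x) = x := by
    intro x
    have h3 := inv_app s x
    rwa [refl_inv h h2] at h3
  rw [eps, ← Finset.mul_prod_erase _ _ hβ, refl_self h h2, D.sgn_negT (hT hβ)]
  have : ∏ γ ∈ T'.erase β, sgn (s γ) = 1 := by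
    refine Finset.prod_involution (fun γ _ => absv (s γ)) ?_ ?_ ?_ ?_
    · intro γ hγ
      have hγT := hT (Finset.mem_of_mem_erase hγ)
      rcases absv_cases (s γ) with ⟨h1, h3⟩ | ⟨h1, h3⟩
      · rw [h1, h3, hss, D.sgn_T hγT, one_mul]
      · rw [h1, h3, map_neg, hss, D.sgn_negT hγT]; norm_num
    · intro γ hγ hne heq
      have hγT := hT (Finset.mem_of_mem_erase hγ)
      rcases absv_cases (s γ) with ⟨h1, h3⟩ | ⟨h1, h3⟩
      · exact hne h3
      · rw [h1] at heq
        apply Finset.ne_of_mem_erase hγ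
        apply D.T_nonprop (hT hβ) hγT (m := 2) (n := pairZ γ c) two_ne_zero
        rw [h] at heq
        rw [two_smul]
        nth_rewrite 1 [← heq]
        abel
    · intro γ hγ
      refine Finset.mem_erase.2 ⟨?_, hs γ (Finset.mem_of_mem_erase hγ)⟩
      intro heq
      apply Finset.ne_of_mem_erase hγ
      apply D.absv_inj (w := s) (hT (Finset.mem_of_mem_erase hγ)) (hT hβ)
      rw [heq, refl_self h h2, absv, if_neg (D.not_nonneg_neg (hT hβ)), neg_neg]
    · intro γ hγ
      have hγT := hT (Finset.mem_of_mem_erase hγ)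
      rcases absv_cases (s γ) with ⟨h1, h3⟩ | ⟨h1, h3⟩
      · simp only [h1]
        rw [hss, absv, if_pos (D.mem_T.1 hγT).2]
      · simp only [h1]
        rw [map_neg, hss, absv, if_neg (D.not_nonneg_neg hγT), neg_neg]
  rw [this, mul_one]

lemma actV_refl_fix {s : Aut ι} {β c : ι → ℤ} (h : ∀ x, s x = x - pairZ x c • β) (h2 : pairZ β c = 2)
    {z : ι → ℂ} (hz : evalC β z = 0) : actV s z = z := by
  ext i
  rw [actV_apply, refl_inv h h2, h, evalC_sub, evalC_smul, hz, evalC_e]; ring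

/-- substitution by a group element -/
def cw (w : Aut ι) (h : MvPolynomial ι ℂ) : MvPolynomial ι ℂ := bind₁ (fun i => lin (w (e i))) h

lemma eval_cw (w : Aut ι) (h : MvPolynomial ι ℂ) (z : ι → ℂ) : eval z (cw w h) = eval (actV w⁻¹ z) h := by
  rw [cw, eval_bind]
  have : (fun i => eval z (lin (w (e i)))) = actV w⁻¹ z := by
    ext i
    rw [eval_lin, actV_apply, inv_inv]
  rw [this]

lemma antisym (hC0 : D.C0) {T' : Finset (ι → ℤ)} (hT : T' ⊆ D.T) (G : Subgroup (Aut ι))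
    (hstab : ∀ w ∈ G, ∀ β ∈ T', absv (w β) ∈ T')
    (hrefl : ∀ β ∈ T', ∀ s ∈ D.W, ∀ c, (∀ x, s x = x - pairZ x c • β) → pairZ β c = 2 → s ∈ G)
    (h : MvPolynomial ι ℂ)
    (hne : ∑ w ∈ D.WF.filter (· ∈ G), eps T' w * eval (actV w⁻¹ one) h ≠ 0) :
    T'.card ≤ h.totalDegree := by
  set A : MvPolynomial ι ℂ := ∑ w ∈ D.WF.filter (· ∈ G), C (eps T' w) * cw w h with hA
  have hAe : ∀ z, eval z A = ∑ w ∈ D.WF.filter (· ∈ G), eps T' w * eval (actV w⁻¹ z) h := by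
    intro z
    simp only [hA, map_sum, map_mul, eval_C, eval_cw]
  have hA0 : A ≠ 0 := by
    intro h0
    apply hne
    rw [← hAe, h0, map_zero]
  have hdeg : A ∈ Dg (h.totalDegree + 1) := by
    refine Submodule.sum_mem _ fun w _ => ?_
    have : cw w h ∈ Dg (h.totalDegree + 1) := Dg_bind (fun i => Dg_lin _) (mem_Dg_succ.2 le_rfl)
    simpa using Dg_mul' (a := 0) (Dg_C (eps T' w)) this
  have hdvd : ∏ β ∈ T', lin β ∣ A := by
    apply D.prod_dvd hT
    intro β hβ z hz
    obtain ⟨s, hs, c, hsx, hc2⟩ := D.root_refl (D.mem_T.1 (hT hβ)).1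
    have hsG := hrefl β hβ s hs c hsx hc2
    have hfix := actV_refl_fix hsx hc2 hz
    have hss : s * s = 1 := by
      have := refl_inv hsx hc2
      nth_rewrite 1 [← this]; exact inv_mul_cancel s
    have hkey : eval z A = - eval z A := by
      conv_rhs => rw [hAe]
      rw [hAe, ← Finset.sum_neg_distrib]
      refine Finset.sum_nbij' (fun w => s * w) (fun w => s * w) ?_ ?_ ?_ ?_ ?_
      · intro w hw
        simp only [Finset.mem_filter, mem_WF] at hw ⊢
        exact ⟨D.W.mul_mem hs hw.1, G.mul_mem hsG hw.2⟩
      · intro w hw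
        simp only [Finset.mem_filter, mem_WF] at hw ⊢
        exact ⟨D.W.mul_mem hs hw.1, G.mul_mem hsG hw.2⟩
      · intro w _; rw [← mul_assoc, hss, one_mul]
      · intro w _; rw [← mul_assoc, hss, one_mul]
      · intro w hw
        simp only [Finset.mem_filter] at hw
        rw [D.eps_mul hC0 hT hs (hstab w hw.2), D.eps_refl hT hβ hsx hc2 (hstab s hsG), mul_inv_rev,
          refl_inv hsx hc2, ← actV_mul, hfix]
        ring
    exact self_eq_neg.1 hkey
  rw [← D.prod_lin_deg hT]
  exact (totalDegree_le_of_dvd_of_isDomain hdvd hA0).trans (mem_Dg_succ.1 hdeg)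

/-- the whole group stabilizes `T` -/
lemma stab_T (hC0 : D.C0) {w : Aut ι} (hw : w ∈ D.W) : ∀ β ∈ D.T, absv (w β) ∈ D.T :=
  fun _ hβ => D.absv_mem_T hC0 (D.R_W hw (D.mem_T.1 hβ).1)

end Anti

end Data


/-! ### The operator `L` -/

section MorePoly

lemma Dg_prod_sub {κ : Type*} (s : Finset κ) (f f' : κ → MvPolynomial ι ℂ) (h : ∀ a ∈ s, f a ∈ Dg 2)
    (h' : ∀ a ∈ s, f' a ∈ Dg 2) (hd : ∀ a ∈ s, f a - f' a ∈ Dg 1) :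
    ∏ a ∈ s, f a - ∏ a ∈ s, f' a ∈ Dg s.card := by
  induction s using Finset.induction_on with
  | empty => simp
  | insert a s ha ih =>
    rw [Finset.prod_insert ha, Finset.prod_insert ha, Finset.card_insert_of_notMem ha]
    have e1 : f a * ∏ x ∈ s, f x - f' a * ∏ x ∈ s, f' x
      = (f a - f' a) * ∏ x ∈ s, f x + f' a * (∏ x ∈ s, f x - ∏ x ∈ s, f' x) := by ring
    rw [e1]
    have i1 := ih (fun b hb => h b (Finset.mem_insert_of_mem hb))
      (fun b hb => h' b (Finset.mem_insert_of_mem hb)) (fun b hb => hd b (Finset.mem_insert_of_mem hb))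
    have p1 := Dg_prod s f (fun b hb => h b (Finset.mem_insert_of_mem hb))
    refine Submodule.add_mem _ ?_ ?_
    · exact Dg_mono (by omega) (Dg_mul (hd a (Finset.mem_insert_self _ _)) p1)
    · exact Dg_mono (by omega) (Dg_mul' (a := 1) (h' a (Finset.mem_insert_self _ _)) i1)

lemma affine {p : MvPolynomial ι ℂ} (hp : p ∈ Dg 2) :
    ∃ (a : ℂ) (c : ι → ℂ), ∀ z, eval z p = a + ∑ i, c i * z i := by
  rw [Dg, restrictSupport_eq_span] at hp
  induction hp using Submodule.span_induction with
  | mem x hx =>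
    obtain ⟨m, hm, rfl⟩ := hx
    have hm' : m.degree < 2 := hm
    rcases Nat.lt_or_ge m.degree 1 with h | h
    · have : m = 0 := by
        rw [← Finsupp.degree_eq_zero_iff]; omega
      subst this
      refine ⟨1, 0, fun z => by simp⟩
    · obtain ⟨i, hi⟩ : ∃ i, m i ≠ 0 := by
        by_contra hc
        push Not at hc
        have : m = 0 := Finsupp.ext hc
        rw [this] at h; simp at h
      have : m = Finsupp.single i 1 := by
        have hle : Finsupp.single i 1 ≤ m := by
          rw [Finsupp.single_le_iff]; omega
        obtain ⟨m', rfl⟩ := exists_add_of_le hle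
        rw [map_add, Finsupp.degree_single] at hm' h
        have : m' = 0 := by
          rw [← Finsupp.degree_eq_zero_iff]; omega
        rw [this, add_zero]
      subst this
      refine ⟨0, Pi.single i 1, fun z => ?_⟩
      simp [Pi.single_apply, eval_monomial]
  | zero => exact ⟨0, 0, by simp⟩
  | add x y _ _ hx hy =>
    obtain ⟨a, c, h⟩ := hx
    obtain ⟨a', c', h'⟩ := hy
    refine ⟨a + a', c + c', fun z => ?_⟩
    rw [map_add, h, h']
    simp only [Pi.add_apply, add_mul, Finset.sum_add_distrib]; ring
  | smul b x _ hx =>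
    obtain ⟨a, c, h⟩ := hx
    refine ⟨b * a, b • c, fun z => ?_⟩
    rw [smul_eval, h, mul_add, Finset.mul_sum]
    simp [mul_assoc]

lemma const_of_Dg {p : MvPolynomial ι ℂ} (hp : p ∈ Dg 1) : ∃ a, p = C a :=
  ⟨_, totalDegree_eq_zero_iff_eq_C.1 (Nat.le_zero.1 (mem_Dg_succ.1 hp))⟩

lemma tr_sub (y : ι → ℂ) (p q : MvPolynomial ι ℂ) : tr y (p - q) = tr y p - tr y q := map_sub _ _ _

lemma tr_one (y : ι → ℂ) : tr y (1 : MvPolynomial ι ℂ) = 1 := map_one _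

end MorePoly

namespace Data

section Lop

variable (D : Data ι)

/-- The multiplicity parameter. -/
def kk (ρ : ι → ℂ) (ω : ι → ℤ) : ℂ :=
  if h : ∃ i, ∃ w ∈ D.W, ω = w (e i) then ρ h.choose else 0

lemma kk_we {ρ : ι → ℂ} (hρ : D.InV0 ρ) {w : Aut ι} (hw : w ∈ D.W) (i : ι) :
    D.kk ρ (w (e i)) = ρ i := by
  have h : ∃ j, ∃ v ∈ D.W, w (e i) = v (e j) := ⟨i, w, hw, rfl⟩
  rw [kk, dif_pos h]
  obtain ⟨v, hv, hvj⟩ := h.choose_spec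
  apply hρ
  refine ⟨v⁻¹ * w, D.W.mul_mem (D.W.inv_mem hv) hw, Or.inl ?_⟩
  rw [mul_app]
  exact ((congrArg (fun x => v⁻¹ x) hvj).trans (inv_app v _)).symm

lemma kk_e {ρ : ι → ℂ} (hρ : D.InV0 ρ) (i : ι) : D.kk ρ (e i) = ρ i :=
  D.kk_we hρ D.W.one_mem i

lemma kk_W {ρ : ι → ℂ} (hρ : D.InV0 ρ) {w : Aut ι} (hw : w ∈ D.W) {ω : ι → ℤ} (h : ω ∈ D.Φ) :
    D.kk ρ (w ω) = D.kk ρ ω := by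
  obtain ⟨v, hv, i, rfl⟩ := (D.Φ_spec _).1 h
  rw [← mul_app, D.kk_we hρ (D.W.mul_mem hw hv), D.kk_we hρ hv]

lemma kk_add {ρ : ι → ℂ} (hρ : D.InV0 ρ) (t : ℂ) {ω : ι → ℤ} (h : ω ∈ D.Φ) :
    D.kk (ρ + t • one) ω = D.kk ρ ω + t := by
  obtain ⟨v, hv, i, rfl⟩ := (D.Φ_spec _).1 h
  rw [D.kk_we (D.InV0_add hρ (D.InV0_smul t D.InV0_one)) hv, D.kk_we hρ hv]
  simp [one]

lemma kk_zero {ω : ι → ℤ} (h : ω ∈ D.Φ) : D.kk 0 ω = 0 := by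
  obtain ⟨v, hv, i, rfl⟩ := (D.Φ_spec _).1 h
  rw [D.kk_we D.InV0_zero hv]; rfl

/-- The Weyl denominator. -/
def J : MvPolynomial ι ℂ := ∏ β ∈ D.T, lin β

/-- Φ_η -/
def Phi1 (η : ι → ℤ) : Finset (ι → ℤ) := D.Φ.filter fun ω => pairZ ω η = 1

/-- T_η -/
def Tn (η : ι → ℤ) : Finset (ι → ℤ) := D.T.filter fun β => pairZ β η ≠ 0

/-- Numerators. -/
def g (ρ : ι → ℂ) (η : ι → ℤ) : MvPolynomial ι ℂ :=
  (∏ ω ∈ D.Phi1 η, (lin ω - C (D.kk ρ ω))) *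
    ∏ β ∈ D.T, if pairZ β η = 0 then lin β else C (pairZ β η : ℂ)

lemma eval_J (z : ι → ℂ) : eval z D.J = ∏ β ∈ D.T, evalC β z := by
  simp [J, map_prod, eval_lin]

lemma eval_g (ρ : ι → ℂ) (η : ι → ℤ) (z : ι → ℂ) : eval z (D.g ρ η) =
    (∏ ω ∈ D.Phi1 η, (evalC ω z - D.kk ρ ω)) *
    ∏ β ∈ D.T, if pairZ β η = 0 then evalC β z else (pairZ β η : ℂ) := by
  rw [g, map_mul, map_prod, map_prod]
  congr 1
  · exact Finset.prod_congr rfl fun ω _ => by rw [map_sub, eval_lin, eval_C]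
  · refine Finset.prod_congr rfl fun ω _ => ?_
    split_ifs
    · rw [eval_lin]
    · rw [eval_C]

lemma J_ne_zero : D.J ≠ 0 := D.prod_lin_ne_zero (Finset.Subset.refl _)

lemma J_W (hC0 : D.C0) {w : Aut ι} (hw : w ∈ D.W) (z : ι → ℂ) :
    eval (actV w z) D.J = eps D.T w⁻¹ * eval z D.J := by
  rw [eval_J, eval_J]
  simp only [evalC_actV]
  exact D.prod_odd (Finset.Subset.refl _) (D.stab_T hC0 (D.W.inv_mem hw)) (fun γ => evalC γ z)
    (fun γ _ => evalC_neg γ z)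

lemma Phi1_prod {M : Type*} [CommMonoid M] {w : Aut ι} (hw : w ∈ D.W) (η : ι → ℤ) (F : (ι → ℤ) → M) :
    ∏ ω ∈ D.Phi1 (actDual w η), F (w⁻¹ ω) = ∏ ω ∈ D.Phi1 η, F ω := by
  refine Finset.prod_nbij' (fun ω => w⁻¹ ω) (fun ω => w ω) ?_ ?_ ?_ ?_ ?_
  · intro ω hω
    simp only [Phi1, Finset.mem_filter, pairZ_actDual] at hω ⊢
    exact ⟨D.Phi_W (D.W.inv_mem hw) hω.1, hω.2⟩
  · intro ω hω
    simp only [Phi1, Finset.mem_filter, pairZ_actDual, inv_app] at hω ⊢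
    exact ⟨D.Phi_W hw hω.1, hω.2⟩
  · intro ω _; exact app_inv w ω
  · intro ω _; exact inv_app w ω
  · intro ω _; rfl

lemma g_W (hC0 : D.C0) {ρ : ι → ℂ} (hρ : D.InV0 ρ) {w : Aut ι} (hw : w ∈ D.W) (η : ι → ℤ) (z : ι → ℂ) :
    eval (actV w z) (D.g ρ (actDual w η)) = eps D.T w⁻¹ * eval z (D.g ρ η) := by
  rw [eval_g, eval_g]
  have h1 : ∏ ω ∈ D.Phi1 (actDual w η), (evalC ω (actV w z) - D.kk ρ ω)
      = ∏ ω ∈ D.Phi1 η, (evalC ω z - D.kk ρ ω) := by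
    rw [← D.Phi1_prod hw η]
    refine Finset.prod_congr rfl fun ω hω => ?_
    simp only [Phi1, Finset.mem_filter] at hω
    rw [evalC_actV, D.kk_W hρ (D.W.inv_mem hw) hω.1]
  have h2 := D.prod_odd (Finset.Subset.refl _) (D.stab_T hC0 (D.W.inv_mem hw))
    (fun γ => if pairZ γ η = 0 then evalC γ z else (pairZ γ η : ℂ)) (fun γ _ => by
      rw [pairZ_neg, evalC_neg]
      simp only [neg_eq_zero]
      split_ifs
      · rfl
      · push_cast; rfl)
  rw [h1]
  simp only [evalC_actV, pairZ_actDual]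
  rw [h2]; ring

/-- Numerator of `L p`. -/
def A (ρ : ι → ℂ) (p : MvPolynomial ι ℂ) : MvPolynomial ι ℂ :=
  ∑ η ∈ D.Λ₁, D.g ρ η * tr (toV η) p

lemma eval_A (ρ : ι → ℂ) (p : MvPolynomial ι ℂ) (z : ι → ℂ) :
    eval z (D.A ρ p) = ∑ η ∈ D.Λ₁, eval z (D.g ρ η) * eval (z - toV η) p := by
  simp only [A, map_sum, map_mul, eval_tr]

lemma A_W (hC0 : D.C0) {ρ : ι → ℂ} (hρ : D.InV0 ρ) {p : MvPolynomial ι ℂ} (hp : D.WInv p)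
    {w : Aut ι} (hw : w ∈ D.W) (z : ι → ℂ) :
    eval (actV w z) (D.A ρ p) = eps D.T w⁻¹ * eval z (D.A ρ p) := by
  rw [eval_A, eval_A, Finset.mul_sum]
  symm
  refine Finset.sum_nbij' (fun η => actDual w η) (fun η => actDual w⁻¹ η) ?_ ?_ ?_ ?_ ?_
  · intro η hη; exact D.Lam1_W hw hη
  · intro η hη; exact D.Lam1_W (D.W.inv_mem hw) hη
  · intro η _; simp only [actDual_mul, inv_mul_cancel, actDual_one]
  · intro η _; simp only [actDual_mul, mul_inv_cancel, actDual_one]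
  · intro η _
    rw [D.g_W hC0 hρ hw, toV_actDual, ← actV_sub, hp w hw]; ring

lemma J_dvd_A (hC0 : D.C0) {ρ : ι → ℂ} (hρ : D.InV0 ρ) {p : MvPolynomial ι ℂ} (hp : D.WInv p) :
    D.J ∣ D.A ρ p := by
  apply D.prod_dvd (Finset.Subset.refl _)
  intro β hβ z hz
  obtain ⟨s, hs, c, hsx, hc2⟩ := D.root_refl (D.mem_T.1 hβ).1
  have h1 := D.A_W hC0 hρ hp hs z
  rw [actV_refl_fix hsx hc2 hz, refl_inv hsx hc2,
    D.eps_refl (Finset.Subset.refl _) hβ hsx hc2 (D.stab_T hC0 hs)] at h1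
  rw [neg_one_mul] at h1
  exact self_eq_neg.1 h1

/-- The operator. -/
def Lop (ρ : ι → ℂ) (p : MvPolynomial ι ℂ) : MvPolynomial ι ℂ :=
  if h : D.J ∣ D.A ρ p then h.choose else 0

lemma J_mul_L (hC0 : D.C0) {ρ : ι → ℂ} (hρ : D.InV0 ρ) {p : MvPolynomial ι ℂ} (hp : D.WInv p) :
    D.J * D.Lop ρ p = D.A ρ p := by
  have h := D.J_dvd_A hC0 hρ hp
  rw [Lop, dif_pos h]
  exact h.choose_spec.symm

lemma WInv_one : D.WInv 1 := fun _ _ _ => by simp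

lemma WInv_sub {p q : MvPolynomial ι ℂ} (hp : D.WInv p) (hq : D.WInv q) : D.WInv (p - q) :=
  fun w hw z => by rw [map_sub, map_sub, hp w hw, hq w hw]

lemma WInv_add {p q : MvPolynomial ι ℂ} (hp : D.WInv p) (hq : D.WInv q) : D.WInv (p + q) :=
  fun w hw z => by rw [map_add, map_add, hp w hw, hq w hw]

lemma WInv_mul {p q : MvPolynomial ι ℂ} (hp : D.WInv p) (hq : D.WInv q) : D.WInv (p * q) :=
  fun w hw z => by rw [map_mul, map_mul, hp w hw, hq w hw]

lemma WInv_C (c : ℂ) : D.WInv (C c) := fun _ _ _ => by simp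

lemma WInv_ell : D.WInv (lin D.ell) := fun w hw z => by
  rw [eval_lin, eval_lin, evalC_actV, D.C4 _ (D.W.inv_mem hw)]

lemma WInv_sum {κ : Type*} (s : Finset κ) (f : κ → MvPolynomial ι ℂ) (h : ∀ a ∈ s, D.WInv (f a)) :
    D.WInv (∑ a ∈ s, f a) := fun w hw z => by
  rw [map_sum, map_sum]; exact Finset.sum_congr rfl fun a ha => h a ha w hw z

lemma L_sub (hC0 : D.C0) {ρ : ι → ℂ} (hρ : D.InV0 ρ) {p q : MvPolynomial ι ℂ} (hp : D.WInv p)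
    (hq : D.WInv q) : D.Lop ρ (p - q) = D.Lop ρ p - D.Lop ρ q := by
  apply mul_left_cancel₀ D.J_ne_zero
  rw [mul_sub, D.J_mul_L hC0 hρ hp, D.J_mul_L hC0 hρ hq, D.J_mul_L hC0 hρ (D.WInv_sub hp hq)]
  simp only [A, tr_sub, mul_sub, Finset.sum_sub_distrib]

lemma eps_ne_zero (T' : Finset (ι → ℤ)) (w : Aut ι) : eps T' w ≠ 0 :=
  Finset.prod_ne_zero_iff.2 fun _ _ => sgn_ne_zero _

lemma L_WInv (hC0 : D.C0) {ρ : ι → ℂ} (hρ : D.InV0 ρ) {p : MvPolynomial ι ℂ} (hp : D.WInv p) :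
    D.WInv (D.Lop ρ p) := by
  intro w hw z
  have h : cw w⁻¹ (D.Lop ρ p) - D.Lop ρ p = 0 := by
    apply zariski D.J_ne_zero
    intro z hz
    rw [map_sub, eval_cw, inv_inv, sub_eq_zero]
    have h1 := D.A_W hC0 hρ hp hw z
    rw [← D.J_mul_L hC0 hρ hp, map_mul, map_mul, D.J_W hC0 hw, mul_assoc] at h1
    exact mul_left_cancel₀ hz (mul_left_cancel₀ (eps_ne_zero _ _) h1)
  have h2 := congrArg (eval z) h
  rwa [map_sub, eval_cw, inv_inv, map_zero, sub_eq_zero] at h2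

lemma card_Phi1_W {w : Aut ι} (hw : w ∈ D.W) (η : ι → ℤ) :
    (D.Phi1 (actDual w η)).card = (D.Phi1 η).card := by
  have := D.Phi1_prod hw η (fun _ => (2 : ℕ))
  simp only [Finset.prod_const] at this
  exact Nat.pow_right_injective le_rfl this

lemma card_Tn_W (hC0 : D.C0) {w : Aut ι} (hw : w ∈ D.W) (η : ι → ℤ) :
    (D.Tn (actDual w η)).card = (D.Tn η).card := by
  have := D.prod_even (Finset.Subset.refl _) (D.stab_T hC0 (D.W.inv_mem hw))
    (fun γ => if pairZ γ η ≠ 0 then 2 else 1) (fun γ => by rw [pairZ_neg]; simp only [ne_eq, neg_eq_zero])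
  simp only [← pairZ_actDual] at this
  rw [Finset.prod_ite, Finset.prod_ite] at this
  simp only [Finset.prod_const, one_pow, mul_one] at this
  exact Nat.pow_right_injective le_rfl this

lemma card_le (hC0 : D.C0) {η : ι → ℤ} (hη : η ∈ D.Λ₁) : (D.Phi1 η).card ≤ (D.Tn η).card + 1 := by
  obtain ⟨w, hw, k, hk, rfl⟩ := (D.Λ₁_spec _).1 hη
  rw [D.card_Phi1_W hw, D.card_Tn_W hC0 hw]
  have h5 := congrFun D.C5 k
  rw [Pi.sub_apply, Finset.sum_apply, Finset.sum_apply, hk] at h5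
  have h1 : ∑ ω ∈ D.Φ.filter (fun ω => ∀ i, 0 ≤ ω i), ω k = ((D.Phi1 (e k)).card : ℤ) := by
    rw [Finset.card_eq_sum_ones, Phi1, Finset.sum_filter, Finset.sum_filter]
    push_cast
    refine Finset.sum_congr rfl fun ω hω => ?_
    rw [pairZ_e_right]
    rcases D.C7 k hk ω (Or.inr hω) with h | h | h
    · rw [if_neg, if_neg]
      · omega
      · intro hh; have := hh k; omega
    · rw [h]; simp
    · have : ∀ i, 0 ≤ ω i := by
        rcases D.C3 ω hω with hh | hh
        · exact hh
        · have := hh k; omega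
      rw [if_pos this, h, if_pos rfl]
  have h2 : ∑ α ∈ D.Δ.filter (fun ω => ∀ i, 0 ≤ ω i), α k ≤ ((D.Tn (e k)).card : ℤ) := by
    have h3 : ∑ α ∈ D.Δ.filter (fun ω => ∀ i, 0 ≤ ω i), α k ≤ ∑ α ∈ D.T, α k := by
      apply Finset.sum_le_sum_of_subset_of_nonneg
      · intro α hα; exact D.Deltapos_sub_T hα
      · intro α hα _; exact (D.mem_T.1 hα).2 k
    refine h3.trans (le_of_eq ?_)
    rw [Finset.card_eq_sum_ones, Tn, Finset.sum_filter]
    push_cast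
    refine Finset.sum_congr rfl fun β hβ => ?_
    rw [pairZ_e_right]
    rcases D.T_C7 hβ hk with h | h <;> rw [h] <;> simp
  omega

lemma Dg_tpart (η : ι → ℤ) :
    (∏ β ∈ D.T, if pairZ β η = 0 then lin β else C (pairZ β η : ℂ))
      ∈ Dg (D.T.card - (D.Tn η).card + 1) := by
  rw [Finset.prod_ite]
  have h1 := Dg_prod (D.T.filter fun β => pairZ β η = 0) (fun β => lin β) fun β _ => Dg_lin β
  have h2 := Dg_prod' (D.T.filter fun β => ¬ pairZ β η = 0) (fun β => (C (pairZ β η : ℂ) : MvPolynomial ι ℂ))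
    fun β _ => Dg_C _
  have h3 := Finset.card_filter_add_card_filter_not (s := D.T) (fun β => pairZ β η = 0)
  have h4 : (D.Tn η).card = (D.T.filter fun β => ¬ pairZ β η = 0).card := rfl
  exact Dg_mono (by omega) (Dg_mul (b := 0) h1 h2)

lemma Tn_le (η : ι → ℤ) : (D.Tn η).card ≤ D.T.card := Finset.card_filter_le _ _

lemma Dg_sub_C' (ω : ι → ℤ) (c : ℂ) : (lin ω - C c : MvPolynomial ι ℂ) ∈ Dg 2 :=
  Submodule.sub_mem _ (Dg_lin ω) (Dg_mono (by omega) (Dg_C c))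

lemma Dg_g (hC0 : D.C0) (ρ : ι → ℂ) {η : ι → ℤ} (hη : η ∈ D.Λ₁) : D.g ρ η ∈ Dg (D.T.card + 1 + 1) := by
  have h1 := Dg_prod (D.Phi1 η) (fun ω => lin ω - C (D.kk ρ ω)) fun β _ => Dg_sub_C' _ _
  have h2 := D.card_le hC0 hη
  have h3 := D.Tn_le η
  exact Dg_mono (by omega) (Dg_mul h1 (D.Dg_tpart η))

lemma Dg_g_sub (hC0 : D.C0) (ρ ρ' : ι → ℂ) {η : ι → ℤ} (hη : η ∈ D.Λ₁) :
    D.g ρ η - D.g ρ' η ∈ Dg (D.T.card + 1) := by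
  have h1 := Dg_prod_sub (D.Phi1 η) (fun ω => lin ω - C (D.kk ρ ω)) (fun ω => lin ω - C (D.kk ρ' ω))
    (fun β _ => Dg_sub_C' _ _) (fun β _ => Dg_sub_C' _ _) (fun ω _ => by
      rw [sub_sub_sub_cancel_left, ← C_sub]; exact Dg_C _)
  have h2 := D.card_le hC0 hη
  have h3 := D.Tn_le η
  rw [g, g, ← sub_mul]
  exact Dg_mono (by omega) (Dg_mul h1 (D.Dg_tpart η))

lemma Dg_of_J {q : MvPolynomial ι ℂ} {m : ℕ} (h : D.J * q ∈ Dg (D.T.card + m)) : q ∈ Dg m := by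
  by_cases hq : q = 0
  · rw [hq]; exact Submodule.zero_mem _
  have hJq : D.J * q ≠ 0 := mul_ne_zero D.J_ne_zero hq
  have hd : (D.J * q).totalDegree = D.T.card + q.totalDegree := by
    rw [totalDegree_mul_of_isDomain D.J_ne_zero hq]
    congr 1
    exact D.prod_lin_deg (Finset.Subset.refl _)
  rcases m with _ | m
  · exfalso
    rcases hr : D.T.card with _ | r
    · rw [hr] at h; exact hJq (Dg_zero h)
    · rw [hr] at h hd
      rw [add_zero, mem_Dg_succ] at h; omega
  · rw [← add_assoc, mem_Dg_succ] at h
    rw [mem_Dg_succ]; omega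

lemma L_diff (hC0 : D.C0) {ρ ρ' : ι → ℂ} (hρ : D.InV0 ρ) (hρ' : D.InV0 ρ') {p : MvPolynomial ι ℂ}
    (hp : D.WInv p) {d : ℕ} (hd : p ∈ Dg d) :
    (D.Lop ρ p - D.Lop ρ' p) - p * (D.Lop ρ 1 - D.Lop ρ' 1) ∈ Dg (d - 1) := by
  apply D.Dg_of_J
  have h1 : D.J * ((D.Lop ρ p - D.Lop ρ' p) - p * (D.Lop ρ 1 - D.Lop ρ' 1))
      = ∑ η ∈ D.Λ₁, (D.g ρ η - D.g ρ' η) * (tr (toV η) p - p) := by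
    calc _ = (D.J * D.Lop ρ p - D.J * D.Lop ρ' p)
          - p * (D.J * D.Lop ρ 1 - D.J * D.Lop ρ' 1) := by ring
      _ = _ := by
        rw [D.J_mul_L hC0 hρ hp, D.J_mul_L hC0 hρ' hp, D.J_mul_L hC0 hρ D.WInv_one,
          D.J_mul_L hC0 hρ' D.WInv_one]
        simp only [A, tr_one, mul_one, ← Finset.sum_sub_distrib, Finset.mul_sum]
        exact Finset.sum_congr rfl fun η _ => by ring
  rw [h1]
  exact Submodule.sum_mem _ fun η hη => Dg_mul' (D.Dg_g_sub hC0 ρ ρ' hη) (Dg_tr_sub _ hd)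

lemma L_lead (hC0 : D.C0) {ρ : ι → ℂ} (hρ : D.InV0 ρ) {p : MvPolynomial ι ℂ}
    (hp : D.WInv p) {d : ℕ} (hd : p ∈ Dg d) :
    D.Lop ρ p - p * D.Lop ρ 1 ∈ Dg (1 + (d - 1)) := by
  apply D.Dg_of_J
  have h1 : D.J * (D.Lop ρ p - p * D.Lop ρ 1) = ∑ η ∈ D.Λ₁, D.g ρ η * (tr (toV η) p - p) := by
    calc _ = D.J * D.Lop ρ p - p * (D.J * D.Lop ρ 1) := by ring
      _ = _ := by
        rw [D.J_mul_L hC0 hρ hp, D.J_mul_L hC0 hρ D.WInv_one]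
        simp only [A, tr_one, mul_one, ← Finset.sum_sub_distrib, Finset.mul_sum]
        exact Finset.sum_congr rfl fun η _ => by ring
  rw [h1, ← add_assoc]
  exact Submodule.sum_mem _ fun η hη => Dg_mul' (D.Dg_g hC0 ρ hη) (Dg_tr_sub _ hd)

lemma L_one_diff (hC0 : D.C0) {ρ ρ' : ι → ℂ} (hρ : D.InV0 ρ) (hρ' : D.InV0 ρ') :
    D.Lop ρ 1 - D.Lop ρ' 1 ∈ Dg 1 := by
  apply D.Dg_of_J
  rw [mul_sub, D.J_mul_L hC0 hρ D.WInv_one, D.J_mul_L hC0 hρ' D.WInv_one]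
  simp only [A, tr_one, mul_one, ← Finset.sum_sub_distrib]
  exact Submodule.sum_mem _ fun η hη => D.Dg_g_sub hC0 ρ ρ' hη

lemma L_one_Dg (hC0 : D.C0) {ρ : ι → ℂ} (hρ : D.InV0 ρ) : D.Lop ρ 1 ∈ Dg 2 := by
  apply D.Dg_of_J
  rw [D.J_mul_L hC0 hρ D.WInv_one]
  simp only [A, tr_one, mul_one]
  exact Submodule.sum_mem _ fun η hη => D.Dg_g hC0 ρ hη

lemma g_vanish {ρ : ι → ℂ} (hρ : D.InV0 ρ) {μ η : ι → ℤ} (hμ : ∀ i, 0 ≤ μ i) (hη : η ∈ D.Λ₁)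
    (h : ¬ ∀ i, 0 ≤ (μ - η) i) : eval (ρ + toV μ) (D.g ρ η) = 0 := by
  push Not at h
  obtain ⟨l, hl⟩ := h
  rw [Pi.sub_apply] at hl
  have h1 := D.Phi_Lam1 hη (D.e_mem_Phi l)
  rw [pairZ_e_left] at h1
  have h2 := hμ l
  have hη1 : η l = 1 := by omega
  have hμ0 : μ l = 0 := by omega
  rw [eval_g]
  apply mul_eq_zero_of_left
  apply Finset.prod_eq_zero (i := e l)
  · simp [Phi1, D.e_mem_Phi, pairZ_e_left, hη1]
  · rw [evalC_e, D.kk_e hρ]; simp [toV, hμ0]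

lemma A_eval_lattice {ρ : ι → ℂ} (hρ : D.InV0 ρ) {μ : ι → ℤ} (hμ : ∀ i, 0 ≤ μ i) (p : MvPolynomial ι ℂ) :
    eval (ρ + toV μ) (D.A ρ p) = ∑ η ∈ D.Λ₁.filter (fun η => ∀ i, 0 ≤ (μ - η) i),
      eval (ρ + toV μ) (D.g ρ η) * eval (ρ + toV (μ - η)) p := by
  rw [eval_A, Finset.sum_filter]
  refine Finset.sum_congr rfl fun η hη => ?_
  split_ifs with h
  · rw [toV_sub, add_sub_assoc]
  · rw [D.g_vanish hρ hμ hη h, zero_mul]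

end Lop

end Data


/-! ### The value `L 1` -/

namespace Data

section L1

open Filter Topology

variable (D : Data ι)

lemma ev_ne (c : ℂ) : ∀ᶠ t in 𝓝[≠] (0 : ℂ), t ≠ c := by
  by_cases hc : c = 0
  · subst hc; exact eventually_mem_nhdsWithin
  · exact eventually_nhdsWithin_of_eventually_nhds (isOpen_ne.mem_nhds (Ne.symm hc))

lemma J_ev (ρ : ι → ℂ) : ∀ᶠ t in 𝓝[≠] (0 : ℂ), eval (ρ + t • one) D.J ≠ 0 := by
  have h : ∀ᶠ t in 𝓝[≠] (0 : ℂ), ∀ β ∈ D.T, t ≠ -evalC β ρ / ht β := by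
    rw [Filter.eventually_all_finset]
    intro β _
    exact ev_ne _
  filter_upwards [h] with t ht'
  rw [eval_J, Finset.prod_ne_zero_iff]
  intro β hβ h0
  have h1 : (ht β : ℂ) ≠ 0 := by exact_mod_cast (D.T_ht_pos hβ).ne'
  apply ht' β hβ
  rw [evalC_add', evalC_smul', evalC_one] at h0
  field_simp
  linear_combination h0

lemma InV0_t {ρ : ι → ℂ} (hρ : D.InV0 ρ) (t : ℂ) : D.InV0 (ρ + t • one) :=
  D.InV0_add hρ (D.InV0_smul t D.InV0_one)

lemma eq_zero_of_ell {η : ι → ℤ} (h : ∀ i, 0 ≤ η i) (h0 : pairZ D.ell η = 0) : η = 0 := by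
  ext i
  have := (Finset.sum_eq_zero_iff_of_nonneg
    (fun i _ => mul_nonneg (D.C6 i).le (h i))).1 h0 i (Finset.mem_univ i)
  rcases mul_eq_zero.1 this with h1 | h1
  · exact absurd h1 (D.C6 i).ne'
  · exact h1

lemma L1_const (hC0 : D.C0) : ∃ c : ι → ℂ,
    (∀ w ∈ D.W, ∀ z : ι → ℂ, ∑ i, c i * actV w z i = ∑ i, c i * z i) ∧
    ∀ ρ, D.InV0 ρ → ∃ a, ∀ z, eval z (D.Lop ρ 1) = a + ∑ i, c i * z i := by
  obtain ⟨a, c, h⟩ := affine (D.L_one_Dg hC0 D.InV0_zero)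
  refine ⟨c, ?_, ?_⟩
  · intro w hw z
    have := D.L_WInv hC0 D.InV0_zero D.WInv_one w hw z
    rw [h, h] at this
    exact add_left_cancel this
  · intro ρ hρ
    obtain ⟨b, hb⟩ := const_of_Dg (D.L_one_diff hC0 hρ D.InV0_zero)
    refine ⟨b + a, fun z => ?_⟩
    have := congrArg (eval z) hb
    rw [map_sub, eval_C, h] at this
    linear_combination this

lemma A_zero {ρ : ι → ℂ} (hρ : D.InV0 ρ) (p : MvPolynomial ι ℂ) : eval ρ (D.A ρ p) = 0 := by
  have h := D.A_eval_lattice hρ (μ := 0) (fun _ => le_rfl) p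
  have h0 : toV (0 : ι → ℤ) = 0 := by ext; simp [toV]
  rw [h0, add_zero] at h
  rw [h]
  apply Finset.sum_eq_zero
  intro η hη
  exfalso
  rw [Finset.mem_filter] at hη
  have h1 := pairZ_nonneg (fun i => (D.C6 i).le) hη.2
  rw [pairZ_sub', D.ell_Lam1 hη.1] at h1
  simp [pairZ] at h1

lemma A_e {ρ : ι → ℂ} (hρ : D.InV0 ρ) {k : ι} (hk : D.ell k = 1) :
    eval (ρ + toV (e k)) (D.A ρ 1) = eval (ρ + toV (e k)) (D.g ρ (e k)) := by
  rw [D.A_eval_lattice hρ (μ := e k) (fun i => e_nonneg k i)]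
  rw [Finset.sum_eq_single (e k)]
  · simp
  · intro η hη hne
    exfalso
    rw [Finset.mem_filter] at hη
    have := D.eq_zero_of_ell hη.2 (by rw [pairZ_sub', D.ell_Lam1 hη.1, pairZ_e_right, hk]; simp)
    exact hne (sub_eq_zero.1 this).symm
  · intro h
    exact absurd (Finset.mem_filter.2 ⟨D.e_mem_Lam1 hk, fun i => by simp⟩) h

lemma L1_key (hC0 : D.C0) {c : ι → ℂ}
    (hc : ∀ ρ, D.InV0 ρ → ∃ a, ∀ z, eval z (D.Lop ρ 1) = a + ∑ i, c i * z i)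
    {ρ : ι → ℂ} (hρ : D.InV0 ρ) (hJ : eval ρ D.J ≠ 0) :
    ∀ z, eval z (D.Lop ρ 1) = ∑ i, c i * z i - ∑ i, c i * ρ i := by
  obtain ⟨a, ha⟩ := hc ρ hρ
  have h1 := D.A_zero hρ 1
  rw [← D.J_mul_L hC0 hρ D.WInv_one, map_mul] at h1
  have h2 := (mul_eq_zero.1 h1).resolve_left hJ
  rw [ha] at h2
  intro z
  rw [ha]; linear_combination h2

lemma L1_ident (hC0 : D.C0) {c : ι → ℂ}
    (hc : ∀ ρ, D.InV0 ρ → ∃ a, ∀ z, eval z (D.Lop ρ 1) = a + ∑ i, c i * z i)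
    {k : ι} (hk : D.ell k = 1) (n : ℕ) :
    c k * ∏ β ∈ D.Tn (e k), ((ht β : ℂ) * (n + 1) + 1)
      = ∏ ω ∈ D.Phi1 (e k), (((ht ω : ℂ) - 1) * (n + 1) + 1) := by
  set t : ℂ := (n : ℂ) + 1 with ht
  have htne : t ≠ 0 := Nat.cast_add_one_ne_zero n
  have hρ : D.InV0 (t • one : ι → ℂ) := D.InV0_smul t D.InV0_one
  have hJ : eval (t • one : ι → ℂ) D.J ≠ 0 := by
    rw [eval_J, Finset.prod_ne_zero_iff]
    intro β hβ
    rw [evalC_smul', evalC_one]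
    exact mul_ne_zero htne (by exact_mod_cast (D.T_ht_pos hβ).ne')
  have h1 := D.L1_key hC0 hc hρ hJ (t • one + toV (e k))
  have h2 : eval (t • one + toV (e k)) (D.Lop (t • one) 1) = c k := by
    rw [h1, ← Finset.sum_sub_distrib]
    simp only [Pi.add_apply, toV, e_apply]
    rw [Finset.sum_eq_single k]
    · simp; ring
    · intro j _ hj; simp [hj]
    · simp
  have h3 := D.A_e hρ hk
  rw [← D.J_mul_L hC0 hρ D.WInv_one, map_mul, h2, eval_J, eval_g] at h3
  have hω : ∀ ω ∈ D.Phi1 (e k), evalC ω (t • one + toV (e k)) - D.kk (t • one) ω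
      = ((Knop.ht ω : ℂ) - 1) * t + 1 := by
    intro ω hω
    have hω' := Finset.mem_filter.1 hω
    have := D.kk_add D.InV0_zero t hω'.1
    rw [zero_add] at this
    rw [this, D.kk_zero hω'.1, evalC_add', evalC_smul', evalC_one, evalC_toV, hω'.2]
    push_cast; ring
  rw [Finset.prod_congr rfl hω] at h3
  have hβ : ∀ β ∈ D.T, evalC β (t • one + toV (e k))
      = (if pairZ β (e k) = 0 then (Knop.ht β : ℂ) * t else 1) *
        (if pairZ β (e k) ≠ 0 then (Knop.ht β : ℂ) * t + 1 else 1) := by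
    intro β hβ
    rw [evalC_add', evalC_smul', evalC_one, evalC_toV, pairZ_e_right]
    rcases D.T_C7 hβ hk with h | h <;> rw [h] <;> simp <;> ring
  have hβ' : ∀ β ∈ D.T, (if pairZ β (e k) = 0 then evalC β (t • one + toV (e k)) else (pairZ β (e k) : ℂ))
      = (if pairZ β (e k) = 0 then (Knop.ht β : ℂ) * t else 1) := by
    intro β hβ
    rw [evalC_add', evalC_smul', evalC_one, evalC_toV, pairZ_e_right]
    rcases D.T_C7 hβ hk with h | h <;> rw [h] <;> simp <;> ring
  rw [Finset.prod_congr rfl hβ, Finset.prod_congr rfl hβ', Finset.prod_mul_distrib] at h3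
  have hne : ∏ β ∈ D.T, (if pairZ β (e k) = 0 then (Knop.ht β : ℂ) * t else 1) ≠ 0 := by
    rw [Finset.prod_ne_zero_iff]
    intro β hβ
    split_ifs
    · exact mul_ne_zero (by exact_mod_cast (D.T_ht_pos hβ).ne') htne
    · exact one_ne_zero
  apply mul_left_cancel₀ hne
  rw [Tn, Finset.prod_filter]
  linear_combination h3

lemma L1_poly (hC0 : D.C0) {c : ι → ℂ}
    (hc : ∀ ρ, D.InV0 ρ → ∃ a, ∀ z, eval z (D.Lop ρ 1) = a + ∑ i, c i * z i)
    {k : ι} (hk : D.ell k = 1) :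
    (Polynomial.C (c k) * ∏ β ∈ D.Tn (e k), (Polynomial.C (ht β : ℂ) * Polynomial.X + Polynomial.C 1))
      = ∏ ω ∈ D.Phi1 (e k), (Polynomial.C ((ht ω : ℂ) - 1) * Polynomial.X + Polynomial.C 1) := by
  apply Polynomial.eq_of_infinite_eval_eq
  have : Set.range (fun n : ℕ => (n : ℂ) + 1) ⊆ {x | Polynomial.eval x
    (Polynomial.C (c k) * ∏ β ∈ D.Tn (e k), (Polynomial.C (ht β : ℂ) * Polynomial.X + Polynomial.C 1))
    = Polynomial.eval x (∏ ω ∈ D.Phi1 (e k), (Polynomial.C ((ht ω : ℂ) - 1) * Polynomial.X + Polynomial.C 1))} := by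
    rintro _ ⟨n, rfl⟩
    simp only [Set.mem_setOf_eq, Polynomial.eval_mul, Polynomial.eval_prod, Polynomial.eval_add,
      Polynomial.eval_C, Polynomial.eval_X]
    exact D.L1_ident hC0 hc hk n
  refine Set.Infinite.mono this (Set.infinite_range_of_injective fun a b h => ?_)
  simpa using h

lemma L1_c (hC0 : D.C0) {c : ι → ℂ}
    (hc : ∀ ρ, D.InV0 ρ → ∃ a, ∀ z, eval z (D.Lop ρ 1) = a + ∑ i, c i * z i)
    {k : ι} (hk : D.ell k = 1) : c k = 1 := by
  have := congrArg (Polynomial.eval 0) (D.L1_poly hC0 hc hk)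
  simpa [Polynomial.eval_prod] using this

lemma L1_card_le (hC0 : D.C0) {k : ι} (hk : D.ell k = 1) :
    (D.Tn (e k)).card + 1 ≤ (D.Phi1 (e k)).card := by
  obtain ⟨c, _, hc⟩ := D.L1_const hC0
  have h := congrArg Polynomial.natDegree (D.L1_poly hC0 hc hk)
  have hmem : e k ∈ D.Phi1 (e k) := Finset.mem_filter.2 ⟨D.e_mem_Phi k, by rw [pairZ_e_right, e_self]⟩
  rw [D.L1_c hC0 hc hk, Polynomial.C_1, one_mul, Polynomial.natDegree_prod,
    ← Finset.mul_prod_erase _ _ hmem] at h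
  · rw [Finset.sum_congr rfl (g := fun _ => 1)] at h
    · rw [Finset.sum_const, smul_eq_mul, mul_one, ht_e] at h
      have h1 : (∏ ω ∈ (D.Phi1 (e k)).erase (e k),
          (Polynomial.C ((ht ω : ℂ) - 1) * Polynomial.X + Polynomial.C 1)).natDegree
          ≤ ((D.Phi1 (e k)).erase (e k)).card := by
        refine (Polynomial.natDegree_prod_le _ _).trans ?_
        rw [Finset.card_eq_sum_ones]
        exact Finset.sum_le_sum fun ω _ => Polynomial.natDegree_linear_le
      rw [Finset.card_erase_of_mem hmem] at h1
      have h2 := Finset.card_pos.2 ⟨_, hmem⟩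
      simp only [Int.cast_one, sub_self, Polynomial.C_0, zero_mul, zero_add, Polynomial.C_1, one_mul] at h h1
      omega
    · intro β hβ
      apply Polynomial.natDegree_linear
      exact_mod_cast (D.T_ht_pos (Finset.mem_filter.1 hβ).1).ne'
  · intro β hβ h0
    have := congrArg (Polynomial.eval 0) h0
    simp at this

/-- (E) -/
lemma card_eq (hC0 : D.C0) {η : ι → ℤ} (hη : η ∈ D.Λ₁) : (D.Phi1 η).card = (D.Tn η).card + 1 := by
  refine le_antisymm (D.card_le hC0 hη) ?_
  obtain ⟨w, hw, k, hk, rfl⟩ := (D.Λ₁_spec _).1 hη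
  rw [D.card_Phi1_W hw, D.card_Tn_W hC0 hw]
  exact D.L1_card_le hC0 hk

lemma ell_inv : ∀ w ∈ D.W, ∀ z : ι → ℂ, ∑ i, (D.ell i : ℂ) * actV w z i = ∑ i, (D.ell i : ℂ) * z i := by
  intro w hw z
  have := D.WInv_ell w hw z
  rwa [eval_lin, eval_lin] at this

lemma L1_reg (hC0 : D.C0) {ρ : ι → ℂ} (hρ : D.InV0 ρ) (hJ : eval ρ D.J ≠ 0) (z : ι → ℂ) :
    eval z (D.Lop ρ 1) = evalC D.ell z - evalC D.ell ρ := by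
  obtain ⟨c, hcW, hc⟩ := D.L1_const hC0
  have := D.C8 c (fun i => (D.ell i : ℂ)) hcW D.ell_inv (fun i hi => by
    rw [D.L1_c hC0 hc hi, hi]; simp)
  rw [D.L1_key hC0 hc hρ hJ, this]; rfl

lemma cont_eval_g {ρ : ι → ℂ} (hρ : D.InV0 ρ) (z : ι → ℂ) (η : ι → ℤ) :
    Continuous fun t : ℂ => eval z (D.g (ρ + t • one) η) := by
  simp only [eval_g]
  refine Continuous.mul ?_ continuous_const
  refine continuous_finsetProd _ fun ω hω => ?_
  simp only [D.kk_add hρ _ (Finset.mem_filter.1 hω).1]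
  fun_prop

lemma L1_A (hC0 : D.C0) {ρ : ι → ℂ} (hρ : D.InV0 ρ) (z : ι → ℂ) :
    ∑ η ∈ D.Λ₁, eval z (D.g ρ η) = eval z D.J * (evalC D.ell z - evalC D.ell ρ) := by
  have h1 : Tendsto (fun t : ℂ => ∑ η ∈ D.Λ₁, eval z (D.g (ρ + t • one) η)) (𝓝[≠] 0)
      (𝓝 (∑ η ∈ D.Λ₁, eval z (D.g ρ η))) := by
    have := (continuous_finsetSum D.Λ₁ fun η _ => D.cont_eval_g hρ z η).tendsto 0
    simp only [zero_smul, add_zero] at this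
    exact this.mono_left nhdsWithin_le_nhds
  have h2 : Tendsto (fun t : ℂ => eval z D.J * (evalC D.ell z - (evalC D.ell ρ + t * (ht D.ell : ℂ))))
      (𝓝[≠] 0) (𝓝 (eval z D.J * (evalC D.ell z - evalC D.ell ρ))) := by
    have : Continuous fun t : ℂ => eval z D.J * (evalC D.ell z - (evalC D.ell ρ + t * (ht D.ell : ℂ))) := by
      fun_prop
    have := this.tendsto 0
    simp only [zero_mul, add_zero] at this
    exact this.mono_left nhdsWithin_le_nhds
  refine tendsto_nhds_unique (h1.congr' ?_) h2
  filter_upwards [D.J_ev ρ] with t hJ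
  have h3 := congrArg (eval z) (D.J_mul_L hC0 (D.InV0_t hρ t) D.WInv_one)
  rw [map_mul, D.L1_reg hC0 (D.InV0_t hρ t) hJ, eval_A] at h3
  simp only [map_one, mul_one] at h3
  rw [← h3, evalC_add', evalC_smul', evalC_one]

lemma L_one (hC0 : D.C0) {ρ : ι → ℂ} (hρ : D.InV0 ρ) :
    D.Lop ρ 1 = lin D.ell - C (evalC D.ell ρ) := by
  apply mul_left_cancel₀ D.J_ne_zero
  rw [D.J_mul_L hC0 hρ D.WInv_one]
  apply MvPolynomial.funext
  intro z
  rw [eval_A, map_mul, map_sub, eval_lin, eval_C, ← D.L1_A hC0 hρ]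
  simp

end L1

end Data

/-! ### Interpolation and the leading term of `L` -/

namespace Data

section Top

open Filter Topology

variable (D : Data ι)

/-- Lattice points of degree at most `d`. -/
def S (d : ℕ) : Finset (ι → ℤ) :=
  (Fintype.piFinset fun _ => Finset.Icc 0 (d : ℤ)).filter fun μ => pairZ D.ell μ ≤ d

lemma le_ell {μ : ι → ℤ} (h : ∀ i, 0 ≤ μ i) (i : ι) : μ i ≤ pairZ D.ell μ := by
  have h1 : D.ell i * μ i ≤ pairZ D.ell μ :=
    Finset.single_le_sum (f := fun i => D.ell i * μ i)
      (fun j _ => mul_nonneg (D.C6 j).le (h j)) (Finset.mem_univ i)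
  have h2 := D.C6 i
  have h3 := h i
  nlinarith

lemma mem_S {d : ℕ} {μ : ι → ℤ} : μ ∈ D.S d ↔ (∀ i, 0 ≤ μ i) ∧ pairZ D.ell μ ≤ d := by
  simp only [S, Finset.mem_filter, Fintype.mem_piFinset, Finset.mem_Icc]
  constructor
  · rintro ⟨h1, h2⟩; exact ⟨fun i => (h1 i).1, h2⟩
  · rintro ⟨h1, h2⟩; exact ⟨fun i => ⟨h1 i, (D.le_ell h1 i).trans h2⟩, h2⟩

lemma ell_nonneg {μ : ι → ℤ} (h : ∀ i, 0 ≤ μ i) : 0 ≤ pairZ D.ell μ :=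
  pairZ_nonneg (fun i => (D.C6 i).le) h

/-- Invariants of degree at most `d`. -/
def Pd (d : ℕ) : Submodule ℂ (MvPolynomial ι ℂ) where
  carrier := {p | D.WInv p ∧ p ∈ Dg (d + 1)}
  add_mem' h h' := ⟨D.WInv_add h.1 h'.1, Submodule.add_mem _ h.2 h'.2⟩
  zero_mem' := ⟨fun _ _ _ => by simp, Submodule.zero_mem _⟩
  smul_mem' c p h := ⟨fun w hw z => by rw [smul_eval, smul_eval, h.1 w hw], Submodule.smul_mem _ _ h.2⟩

lemma mem_Pd {d : ℕ} {p : MvPolynomial ι ℂ} : p ∈ D.Pd d ↔ D.WInv p ∧ p ∈ Dg (d + 1) := Iff.rfl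

lemma Pd_mono {a b : ℕ} (h : a ≤ b) {p : MvPolynomial ι ℂ} (hp : p ∈ D.Pd a) : p ∈ D.Pd b :=
  ⟨hp.1, Dg_mono (by omega) hp.2⟩

/-- Injectivity of evaluation. -/
def Inj (ρ : ι → ℂ) (d : ℕ) : Prop :=
  ∀ p ∈ D.Pd d, (∀ ν ∈ D.S d, eval (ρ + toV ν) p = 0) → p = 0

/-- Surjectivity of evaluation. -/
def Surj (ρ : ι → ℂ) (d : ℕ) : Prop :=
  ∀ f : (ι → ℤ) → ℂ, ∃ p ∈ D.Pd d, ∀ ν ∈ D.S d, eval (ρ + toV ν) p = f ν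

lemma exists_k0 [Nonempty ι] : ∃ k, D.ell k = 1 := by
  by_contra hc
  push Not at hc
  have := D.C8 (fun i => (D.ell i : ℂ)) 0 D.ell_inv (by intros; simp) (fun i hi => absurd hi (hc i))
  obtain ⟨i⟩ := ‹Nonempty ι›
  have h1 := congrFun this i
  have h2 := D.C6 i
  simp at h1
  omega

lemma inj_of_C0 {ρ' : ι → ℂ} (h : ∀ lam : ι → ℤ, lam ∈ LamPlus →
      ∃! p : MvPolynomial ι ℂ, D.WInv p ∧
        p.totalDegree = (pairZ D.ell lam).toNat ∧
        ∀ μ : ι → ℤ, μ ∈ LamPlus → pairZ D.ell μ ≤ pairZ D.ell lam →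
          eval (ρ' + toV μ) p = if μ = lam then 1 else 0) (d : ℕ) : D.Inj ρ' d := by
  intro q hq hv
  rcases isEmpty_or_nonempty ι with hι | hι
  · apply MvPolynomial.funext
    intro z
    have := hv 0 (D.mem_S.2 ⟨fun _ => le_rfl, by simp [pairZ]⟩)
    rw [Subsingleton.elim z (ρ' + toV 0), this, map_zero]
  obtain ⟨k, hk⟩ := D.exists_k0
  have hl : pairZ D.ell ((d : ℤ) • e k) = d := by rw [pairZ_smul', pairZ_e_right, hk, mul_one]
  obtain ⟨p, ⟨hp1, hp2, hp3⟩, hu⟩ := h ((d : ℤ) • e k) (fun i => by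
    have := e_nonneg k i
    simp only [Pi.smul_apply, smul_eq_mul]; positivity)
  rw [hl] at hp2 hp3
  simp only [Int.toNat_natCast] at hp2
  have key : ∀ q' ∈ D.Pd d, (∀ ν ∈ D.S d, eval (ρ' + toV ν) q' = 0) →
      (p + q').totalDegree = d → q' = 0 := by
    intro q' hq' hv' hd'
    have := hu (p + q') ⟨D.WInv_add hp1 hq'.1, by rw [hl, hd', Int.toNat_natCast], fun μ hμ hμl => by
      rw [hl] at hμl
      rw [map_add, hv' μ (D.mem_S.2 ⟨hμ, hμl⟩), add_zero, hp3 μ hμ hμl]⟩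
    simpa using this
  have hle : (p + q).totalDegree ≤ d :=
    (totalDegree_add _ _).trans (max_le hp2.le (mem_Dg_succ.1 hq.2))
  rcases hle.eq_or_lt with h1 | h1
  · exact key q hq hv h1
  · have h2 := key (q + q) (Submodule.add_mem _ hq hq) (fun ν hν => by
      rw [map_add, hv ν hν, add_zero]) (by
        have e1 : p + (q + q) = -p + ((p + q) + (p + q)) := by ring
        rw [e1, totalDegree_add_eq_left_of_totalDegree_lt, totalDegree_neg, hp2]
        rw [totalDegree_neg, hp2]
        exact (totalDegree_add _ _).trans_lt (max_lt h1 h1))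
    exact self_eq_neg.1 (eq_neg_of_add_eq_zero_left h2)

lemma surj_of_C0 {ρ' : ι → ℂ} (h : ∀ lam : ι → ℤ, lam ∈ LamPlus →
      ∃! p : MvPolynomial ι ℂ, D.WInv p ∧
        p.totalDegree = (pairZ D.ell lam).toNat ∧
        ∀ μ : ι → ℤ, μ ∈ LamPlus → pairZ D.ell μ ≤ pairZ D.ell lam →
          eval (ρ' + toV μ) p = if μ = lam then 1 else 0) (d : ℕ) : D.Surj ρ' d := by
  intro f
  induction d with
  | zero =>
    refine ⟨C (f 0), ⟨D.WInv_C _, Dg_C _⟩, fun ν hν => ?_⟩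
    obtain ⟨h1, h2⟩ := D.mem_S.1 hν
    have : ν = 0 := D.eq_zero_of_ell h1 (le_antisymm (by simpa using h2) (D.ell_nonneg h1))
    rw [eval_C, this]
  | succ d ih =>
    obtain ⟨p, hp, hpv⟩ := ih
    have h' : ∀ lam : ι → ℤ, ∃ p : MvPolynomial ι ℂ, lam ∈ LamPlus → (D.WInv p ∧
        p.totalDegree = (pairZ D.ell lam).toNat ∧
        ∀ μ : ι → ℤ, μ ∈ LamPlus → pairZ D.ell μ ≤ pairZ D.ell lam →
          eval (ρ' + toV μ) p = if μ = lam then 1 else 0) := by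
      intro lam
      by_cases hl : lam ∈ LamPlus
      · obtain ⟨p, hp, _⟩ := h lam hl
        exact ⟨p, fun _ => hp⟩
      · exact ⟨0, fun hh => absurd hh hl⟩
    choose P hP using h'
    set N := (D.S (d + 1)).filter fun μ => pairZ D.ell μ = (d + 1 : ℕ) with hN
    refine ⟨p + ∑ lam ∈ N, (f lam - eval (ρ' + toV lam) p) • P lam, ?_, ?_⟩
    · refine Submodule.add_mem _ (D.Pd_mono (Nat.le_succ d) hp) (Submodule.sum_mem _ fun lam hl =>
        Submodule.smul_mem _ _ ?_)
      rw [hN, Finset.mem_filter, mem_S] at hl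
      obtain ⟨h1, h2, _⟩ := hP lam hl.1.1
      refine ⟨h1, mem_Dg_succ.2 ?_⟩
      rw [h2, hl.2]; simp
    · intro ν hν
      have hν' := D.mem_S.1 hν
      rw [map_add, map_sum]
      have e1 : ∀ lam ∈ N, eval (ρ' + toV ν) ((f lam - eval (ρ' + toV lam) p) • P lam)
          = if ν = lam then f lam - eval (ρ' + toV lam) p else 0 := by
        intro lam hl
        rw [hN, Finset.mem_filter, mem_S] at hl
        rw [smul_eval, (hP lam hl.1.1).2.2 ν hν'.1 (by rw [hl.2]; exact hν'.2)]
        split_ifs <;> simp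
      rw [Finset.sum_congr rfl e1, Finset.sum_ite_eq]
      split_ifs with hc
      · ring
      · rw [add_zero]
        apply hpv
        refine D.mem_S.2 ⟨hν'.1, ?_⟩
        have : pairZ D.ell ν ≠ (d + 1 : ℕ) := fun hh => hc (Finset.mem_filter.2 ⟨hν, hh⟩)
        have := hν'.2
        push_cast at *
        omega

/-- Evaluation map. -/
def Ev (ρ : ι → ℂ) (d : ℕ) : D.Pd d →ₗ[ℂ] (D.S d → ℂ) where
  toFun p := fun ν => eval (ρ + toV ν.1) p.1
  map_add' p q := by ext ν; simp
  map_smul' c p := by ext ν; simp [smul_eval]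

lemma Inj_iff {ρ : ι → ℂ} {d : ℕ} : D.Inj ρ d ↔ Function.Injective (D.Ev ρ d) := by
  rw [injective_iff_map_eq_zero]
  constructor
  · intro h p hp
    exact Subtype.ext (h p.1 p.2 fun ν hν => congrFun hp ⟨ν, hν⟩)
  · intro h p hp hv
    have := h ⟨p, hp⟩ (by ext ν; exact hv ν.1 ν.2)
    exact congrArg Subtype.val this

lemma Surj_iff {ρ : ι → ℂ} {d : ℕ} : D.Surj ρ d ↔ Function.Surjective (D.Ev ρ d) := by
  constructor
  · intro h f
    obtain ⟨p, hp, hv⟩ := h (fun ν => if hν : ν ∈ D.S d then f ⟨ν, hν⟩ else 0)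
    refine ⟨⟨p, hp⟩, ?_⟩
    ext ν
    change eval (ρ + toV ν.1) p = _
    rw [hv ν.1 ν.2, dif_pos ν.2]
  · intro h f
    obtain ⟨p, hp⟩ := h (fun ν => f ν.1)
    exact ⟨p.1, p.2, fun ν hν => congrFun hp ⟨ν, hν⟩⟩

lemma C0_bij (hC0 : D.C0) : ∃ ρ', D.InV0 ρ' ∧ (∀ d, D.Inj ρ' d) ∧ ∀ d, D.Surj ρ' d := by
  obtain ⟨ρ', h1, _, _, h⟩ := hC0
  exact ⟨ρ', h1, D.inj_of_C0 h, D.surj_of_C0 h⟩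

lemma Surj_of_Inj (hC0 : D.C0) {ρ : ι → ℂ} {d : ℕ} (h : D.Inj ρ d) : D.Surj ρ d := by
  obtain ⟨ρ', _, hi, hs⟩ := D.C0_bij hC0
  let E := LinearEquiv.ofBijective (D.Ev ρ' d) ⟨D.Inj_iff.1 (hi d), D.Surj_iff.1 (hs d)⟩
  have hfin : FiniteDimensional ℂ (D.Pd d) := E.symm.finiteDimensional
  rw [Surj_iff]
  exact (LinearMap.injective_iff_surjective_of_finrank_eq_finrank E.finrank_eq).1 (D.Inj_iff.1 h)

lemma cont_line (ρ : ι → ℂ) (p : MvPolynomial ι ℂ) : Continuous fun t : ℂ => eval (ρ + t • one) p := by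
  have h : Continuous fun z : ι → ℂ => eval z p := MvPolynomial.continuous_eval p
  exact h.comp (by fun_prop)

lemma ev_Inj {ρ' : ι → ℂ} (hi : ∀ d, D.Inj ρ' d) (hs : ∀ d, D.Surj ρ' d) (d : ℕ) :
    ∀ᶠ t in 𝓝 (0 : ℂ), D.Inj (ρ' + t • one) d := by
  let E := LinearEquiv.ofBijective (D.Ev ρ' d) ⟨D.Inj_iff.1 (hi d), D.Surj_iff.1 (hs d)⟩
  let M : ℂ → Matrix (D.S d) (D.S d) ℂ := fun t =>
    LinearMap.toMatrix' ((D.Ev (ρ' + t • one) d) ∘ₗ (E.symm : (D.S d → ℂ) →ₗ[ℂ] D.Pd d))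
  have hcont : Continuous fun t => (M t).det := by
    apply Continuous.matrix_det
    apply continuous_matrix
    intro ν μ
    have : ∀ t, M t ν μ = eval ((ρ' + toV ν.1) + t • one) (E.symm (Pi.single μ 1)).1 := by
      intro t
      simp only [M, LinearMap.toMatrix'_apply, LinearMap.comp_apply]
      change eval (ρ' + t • one + toV ν.1) _ = _
      rw [add_right_comm]
      rfl
    simp only [this]
    exact cont_line _ _
  have h0 : (M 0).det = 1 := by
    have : M 0 = 1 := by
      simp only [M, zero_smul, add_zero]
      have : (D.Ev ρ' d) ∘ₗ (E.symm : (D.S d → ℂ) →ₗ[ℂ] D.Pd d) = LinearMap.id := by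
        apply LinearMap.ext
        intro x
        exact E.apply_symm_apply x
      rw [this, LinearMap.toMatrix'_id]
    rw [this, Matrix.det_one]
  have hne : ∀ᶠ t in 𝓝 (0 : ℂ), (M t).det ≠ 0 :=
    hcont.continuousAt.eventually_ne (by rw [h0]; exact one_ne_zero)
  filter_upwards [hne] with t ht
  rw [Inj_iff, injective_iff_map_eq_zero]
  intro p hp
  have h2 : (M t).mulVec (E p) = 0 := by
    simp only [M, LinearMap.toMatrix'_mulVec, LinearMap.comp_apply]
    rw [← hp]
    congr 1
    exact E.symm_apply_apply p
  have h3 := Matrix.eq_zero_of_mulVec_eq_zero ht h2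
  exact E.map_eq_zero_iff.1 h3

/-- The operator `ℓ(z-ρ) - d - L`. -/
def F (ρ : ι → ℂ) (d : ℕ) (p : MvPolynomial ι ℂ) : MvPolynomial ι ℂ :=
  (lin D.ell - C (evalC D.ell ρ + d)) * p - D.Lop ρ p

lemma F_eq (hC0 : D.C0) {ρ : ι → ℂ} (hρ : D.InV0 ρ) (d : ℕ) (p : MvPolynomial ι ℂ) :
    D.F ρ d p = -(D.Lop ρ p - p * D.Lop ρ 1) - (d : ℂ) • p := by
  rw [F, D.L_one hC0 hρ, C_add, smul_eq_C_mul]; ring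

lemma F_WInv (hC0 : D.C0) {ρ : ι → ℂ} (hρ : D.InV0 ρ) (d : ℕ) {p : MvPolynomial ι ℂ} (hp : D.WInv p) :
    D.WInv (D.F ρ d p) :=
  D.WInv_sub (D.WInv_mul (D.WInv_sub D.WInv_ell (D.WInv_C _)) hp) (D.L_WInv hC0 hρ hp)

lemma F_Dg (hC0 : D.C0) {ρ : ι → ℂ} (hρ : D.InV0 ρ) (d : ℕ) {p : MvPolynomial ι ℂ} (hp : D.WInv p)
    {m : ℕ} (hm : p ∈ Dg m) : D.F ρ d p ∈ Dg (1 + (m - 1)) := by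
  rw [D.F_eq hC0 hρ]
  exact Submodule.sub_mem _ (Submodule.neg_mem _ (D.L_lead hC0 hρ hp hm))
    (Submodule.smul_mem _ _ (Dg_mono (by omega) hm))

lemma F_eval (hC0 : D.C0) {ρ : ι → ℂ} (hρ : D.InV0 ρ) (d : ℕ) {p : MvPolynomial ι ℂ} (hp : D.WInv p)
    {μ : ι → ℤ} (hμ : ∀ i, 0 ≤ μ i) :
    eval (ρ + toV μ) D.J * eval (ρ + toV μ) (D.F ρ d p) =
      eval (ρ + toV μ) D.J * (((pairZ D.ell μ : ℂ) - d) * eval (ρ + toV μ) p) -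
      ∑ η ∈ D.Λ₁.filter (fun η => ∀ i, 0 ≤ (μ - η) i),
      eval (ρ + toV μ) (D.g ρ η) * eval (ρ + toV (μ - η)) p := by
  rw [← D.A_eval_lattice hρ hμ, ← D.J_mul_L hC0 hρ hp, F]
  simp only [map_mul, map_sub, eval_lin, eval_C, evalC_add', evalC_toV]
  ring

lemma F_vanish (hC0 : D.C0) {ρ : ι → ℂ} (hρ : D.InV0 ρ) {d : ℕ} {q : MvPolynomial ι ℂ} (hq : q ∈ D.Pd d)
    (hi : D.Inj ρ d) (hJ : ∀ μ ∈ D.S d, eval (ρ + toV μ) D.J ≠ 0)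
    (hv : ∀ μ : ι → ℤ, (∀ i, 0 ≤ μ i) → pairZ D.ell μ < d → eval (ρ + toV μ) q = 0) :
    D.F ρ d q = 0 := by
  apply hi _ ⟨D.F_WInv hC0 hρ d hq.1, Dg_mono (by omega) (D.F_Dg hC0 hρ d hq.1 hq.2)⟩
  intro μ hμ
  have hμ' := D.mem_S.1 hμ
  refine (mul_eq_zero.1 (?_ : eval (ρ + toV μ) D.J * _ = 0)).resolve_left (hJ μ hμ)
  rw [D.F_eval hC0 hρ d hq.1 hμ'.1, Finset.sum_eq_zero, sub_zero]
  · rcases hμ'.2.lt_or_eq with h | h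
    · rw [hv μ hμ'.1 h]; simp
    · rw [h]; simp
  · intro η hη
    rw [Finset.mem_filter] at hη
    rw [hv _ hη.2, mul_zero]
    rw [pairZ_sub', D.ell_Lam1 hη.1]
    have := hμ'.2
    omega

lemma F_sub (hC0 : D.C0) {ρ : ι → ℂ} (hρ : D.InV0 ρ) (d : ℕ) {p q : MvPolynomial ι ℂ} (hp : D.WInv p)
    (hq : D.WInv q) : D.F ρ d (p - q) = D.F ρ d p - D.F ρ d q := by
  rw [F, F, F, D.L_sub hC0 hρ hp hq]; ring

/-- (G) -/
lemma top (hC0 : D.C0) {ρ : ι → ℂ} (hρ : D.InV0 ρ) {d : ℕ} {p : MvPolynomial ι ℂ} (hp : p ∈ D.Pd d) :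
    D.F ρ d p ∈ Dg d := by
  obtain ⟨ρ', hρ', hi, hs⟩ := D.C0_bij hC0
  have hev : ∀ᶠ t in 𝓝[≠] (0 : ℂ), D.Inj (ρ' + t • one) d ∧ D.Inj (ρ' + t • one) (d - 1) ∧
      ∀ μ ∈ D.S d, eval (ρ' + toV μ + t • one) D.J ≠ 0 := by
    refine (eventually_nhdsWithin_of_eventually_nhds (D.ev_Inj hi hs d)).and
      ((eventually_nhdsWithin_of_eventually_nhds (D.ev_Inj hi hs (d - 1))).and ?_)
    rw [Filter.eventually_all_finset]
    intro μ _
    exact D.J_ev _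
  obtain ⟨t, h1, h2, h3⟩ := hev.exists
  set σ := ρ' + t • one with hσ
  have hσ0 : D.InV0 σ := D.InV0_t hρ' t
  have h3' : ∀ μ ∈ D.S d, eval (σ + toV μ) D.J ≠ 0 := by
    intro μ hμ
    have := h3 μ hμ
    rwa [add_right_comm] at this
  have hmain : D.F σ d p ∈ Dg d := by
    rcases d with _ | d
    · rw [D.F_vanish hC0 hσ0 hp h1 h3']
      · exact Submodule.zero_mem _
      · intro μ hμ hl
        have := D.ell_nonneg hμ
        push_cast at hl
        omega
    · obtain ⟨q, hq, hqv⟩ := D.Surj_of_Inj hC0 h2 (fun ν => eval (σ + toV ν) p)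
      rw [Nat.add_sub_cancel] at hq hqv
      have h4 := D.F_vanish hC0 hσ0 (q := p - q)
        (Submodule.sub_mem _ hp (D.Pd_mono (Nat.le_succ d) hq)) h1 h3' (by
          intro μ hμ hl
          rw [map_sub, hqv μ (D.mem_S.2 ⟨hμ, by push_cast at hl; omega⟩), sub_self])
      rw [D.F_sub hC0 hσ0 _ hp.1 hq.1, sub_eq_zero] at h4
      rw [h4]
      exact Dg_mono (by omega) (D.F_Dg hC0 hσ0 (d + 1) hq.1 hq.2)
  have hdiff := D.L_diff hC0 hρ hσ0 hp.1 hp.2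
  have e1 : D.F ρ d p = D.F σ d p -
      ((D.Lop ρ p - D.Lop σ p) - p * (D.Lop ρ 1 - D.Lop σ 1)) := by
    rw [D.F_eq hC0 hρ, D.F_eq hC0 hσ0]; ring
  rw [e1]
  exact Submodule.sub_mem _ hmain (by simpa using hdiff)

end Top

end Data

/-! ### First order identities -/

section Pow

lemma Dg_taylor {a : MvPolynomial ι ℂ} (ha : a ∈ Dg 2) (h : ℂ) (d : ℕ) :
    (a - C h) ^ (d + 1) - a ^ (d + 1) + ((d : ℂ) + 1) • (C h * a ^ d) ∈ Dg d := by
  have hpow : ∀ d : ℕ, a ^ d ∈ Dg (d + 1) := by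
    intro d
    have := Dg_prod (Finset.range d) (fun _ => a) (fun _ _ => ha)
    simpa using this
  induction d with
  | zero =>
    have : (a - C h) ^ (0 + 1) - a ^ (0 + 1) + (((0 : ℕ) : ℂ) + 1) • (C h * a ^ 0) = 0 := by
      simp
    rw [this]; exact Submodule.zero_mem _
  | succ d ih =>
    have e1 : (a - C h) ^ (d + 1 + 1) - a ^ (d + 1 + 1) + (((d + 1 : ℕ) : ℂ) + 1) • (C h * a ^ (d + 1))
      = (a - C h) * ((a - C h) ^ (d + 1) - a ^ (d + 1) + ((d : ℂ) + 1) • (C h * a ^ d))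
        + (((d : ℂ) + 1) * h * h) • a ^ d := by
      simp only [smul_eq_C_mul, C_mul, C_add, C_1, Nat.cast_add, Nat.cast_one]
      ring
    rw [e1]
    have h2 : a - C h ∈ Dg 2 := Submodule.sub_mem _ ha (Dg_mono (by omega) (Dg_C h))
    exact Submodule.add_mem _ (Dg_mono (by omega) (Dg_mul' (a := 1) h2 ih))
      (Submodule.smul_mem _ _ (hpow d))

lemma hom_Dg_zero {p : MvPolynomial ι ℂ} {n : ℕ} (h : p.IsHomogeneous n) (hd : p ∈ Dg n) : p = 0 := by
  by_contra hp
  have h1 := h.totalDegree hp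
  rcases n with _ | n
  · exact hp (Dg_zero hd)
  · have := mem_Dg_succ.1 hd
    omega

lemma hom_lin (γ : ι → ℤ) : (lin γ).IsHomogeneous 1 := by
  unfold lin
  apply MvPolynomial.IsHomogeneous.sum
  intro i _
  have := (isHomogeneous_C ι (γ i : ℂ)).mul (isHomogeneous_X ℂ i)
  simpa using this

lemma sum_mul_poly {κ : Type*} (s : Finset κ) (c x : κ → ℂ)
    (h : ∀ d : ℕ, ∑ a ∈ s, c a * x a ^ d = 0) (p : Polynomial ℂ) :
    ∑ a ∈ s, c a * p.eval (x a) = 0 := by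
  simp only [Polynomial.eval_eq_sum_range, Finset.mul_sum]
  rw [Finset.sum_comm]
  apply Finset.sum_eq_zero
  intro d _
  have := congrArg (fun y => p.coeff d * y) (h d)
  simp only [mul_zero, Finset.mul_sum] at this
  rw [← this]
  exact Finset.sum_congr rfl fun a _ => by ring

lemma hasDeriv_line (z y : ι → ℂ) (p : MvPolynomial ι ℂ) :
    HasDerivAt (fun t : ℂ => eval (z + t • y) p) (∑ i, y i * eval z (pderiv i p)) 0 := by
  induction p using MvPolynomial.induction_on with
  | C a => simpa using hasDerivAt_const (0 : ℂ) a
  | add p q hp hq =>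
    have := hp.add hq
    simp only [map_add, mul_add, Finset.sum_add_distrib]
    exact this
  | mul_X p j hp =>
    have h1 : HasDerivAt (fun t : ℂ => z j + t * y j) (y j) 0 := by
      simpa using ((hasDerivAt_id (0 : ℂ)).mul_const (y j)).const_add (z j)
    have h2 := hp.mul h1
    have h3 : (fun t : ℂ => eval (z + t • y) (p * X j))
        = (fun t : ℂ => eval (z + t • y) p) * fun t : ℂ => z j + t * y j := by
      funext t
      simp
    rw [h3]
    refine h2.congr_deriv (Eq.symm ?_)
    simp only [Derivation.leibniz, smul_eq_mul, map_add, map_mul, pderiv_X, eval_X, zero_smul, add_zero,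
      zero_mul, mul_add, Finset.sum_add_distrib, Finset.sum_mul]
    rw [add_comm]
    congr 1
    · exact Finset.sum_congr rfl fun i _ => by ring
    · rw [Finset.sum_eq_single j]
      · simp; ring
      · intro i _ hi; simp [Pi.single_apply, hi.symm]
      · simp

end Pow

namespace Data

section V1

variable (D : Data ι)

lemma hom_J : D.J.IsHomogeneous D.T.card := by
  have := MvPolynomial.IsHomogeneous.prod D.T lin (fun _ => 1) fun β _ => hom_lin β
  simpa [J] using this

lemma hom_g (hC0 : D.C0) {η : ι → ℤ} (hη : η ∈ D.Λ₁) : (D.g 0 η).IsHomogeneous (D.T.card + 1) := by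
  have h1 := MvPolynomial.IsHomogeneous.prod (D.Phi1 η) (fun ω => lin ω - C (D.kk 0 ω)) (fun _ => 1)
    fun ω hω => by
      rw [D.kk_zero (Finset.mem_filter.1 hω).1, C_0, sub_zero]; exact hom_lin ω
  have h2 := MvPolynomial.IsHomogeneous.prod D.T
    (fun β => if pairZ β η = 0 then lin β else C (pairZ β η : ℂ))
    (fun β => if pairZ β η = 0 then 1 else 0) fun β _ => by
      split_ifs
      · exact hom_lin β
      · exact isHomogeneous_C _ _
  have h3 := h1.mul h2
  have e1 : ∑ i ∈ D.Phi1 η, 1 + ∑ β ∈ D.T, (if pairZ β η = 0 then 1 else 0) = D.T.card + 1 := by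
    rw [← Finset.card_eq_sum_ones, ← Finset.card_filter, D.card_eq hC0 hη]
    have h3 := Finset.card_filter_add_card_filter_not (s := D.T) (fun β => pairZ β η = 0)
    have h4 : (D.Tn η).card = (D.T.filter fun β => ¬ pairZ β η = 0).card := rfl
    omega
  rw [e1] at h3
  exact h3

/-- Linear forms. -/
def Lw (γ : ι → ℂ) (w : Aut ι) : MvPolynomial ι ℂ := ∑ i, C (γ i) * lin (w⁻¹ (e i))

lemma eval_Lw (γ : ι → ℂ) (w : Aut ι) (z : ι → ℂ) : eval z (Lw γ w) = ∑ i, γ i * actV w z i := by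
  simp [Lw, map_sum, eval_lin, actV_apply]

lemma hom_Lw (γ : ι → ℂ) (w : Aut ι) : (Lw γ w).IsHomogeneous 1 := by
  apply MvPolynomial.IsHomogeneous.sum
  intro i _
  have := (isHomogeneous_C ι (γ i : ℂ)).mul (hom_lin (w⁻¹ (e i)))
  simpa using this

lemma Lw_Dg (γ : ι → ℂ) (w : Aut ι) : Lw γ w ∈ Dg 2 :=
  mem_Dg_succ.2 (hom_Lw γ w).totalDegree_le

lemma tr_Lw (γ : ι → ℂ) (w : Aut ι) (y : ι → ℂ) : tr y (Lw γ w) = Lw γ w - C (eval y (Lw γ w)) := by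
  apply MvPolynomial.funext
  intro z
  rw [eval_tr, map_sub, eval_C, eval_Lw, eval_Lw, eval_Lw, actV_sub, ← Finset.sum_sub_distrib]
  exact Finset.sum_congr rfl fun i _ => by rw [Pi.sub_apply, mul_sub]

/-- Power sums. -/
def pw (γ : ι → ℂ) (d : ℕ) : MvPolynomial ι ℂ := ∑ w ∈ D.WF, Lw γ w ^ d

lemma pw_WInv (γ : ι → ℂ) (d : ℕ) : D.WInv (D.pw γ d) := by
  intro v hv z
  simp only [pw, map_sum, map_pow, eval_Lw, actV_mul]
  refine Finset.sum_nbij' (fun w => w * v) (fun w => w * v⁻¹) ?_ ?_ ?_ ?_ ?_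
  · intro w hw; exact D.mem_WF.2 (D.W.mul_mem (D.mem_WF.1 hw) hv)
  · intro w hw; exact D.mem_WF.2 (D.W.mul_mem (D.mem_WF.1 hw) (D.W.inv_mem hv))
  · intro w _; simp
  · intro w _; simp
  · intro w _; rfl

lemma pw_Dg (γ : ι → ℂ) (d : ℕ) : D.pw γ d ∈ Dg (d + 1) := by
  refine Submodule.sum_mem _ fun w _ => ?_
  have := (hom_Lw γ w).pow d
  rw [one_mul] at this
  exact mem_Dg_succ.2 this.totalDegree_le

lemma tr_pow (y : ι → ℂ) (p : MvPolynomial ι ℂ) (d : ℕ) : tr y (p ^ d) = tr y p ^ d := map_pow _ _ _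

lemma tr_sum {κ : Type*} (y : ι → ℂ) (s : Finset κ) (f : κ → MvPolynomial ι ℂ) :
    tr y (∑ a ∈ s, f a) = ∑ a ∈ s, tr y (f a) := map_sum _ _ _

lemma V1_poly (hC0 : D.C0) (γ : ι → ℂ) (d : ℕ) :
    ∑ η ∈ D.Λ₁, D.g 0 η * ∑ w ∈ D.WF, C (eval (toV η) (Lw γ w)) * Lw γ w ^ d
      - D.J * D.pw γ (d + 1) = 0 := by
  set Q := ∑ η ∈ D.Λ₁, D.g 0 η * ∑ w ∈ D.WF, C (eval (toV η) (Lw γ w)) * Lw γ w ^ d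
      - D.J * D.pw γ (d + 1) with hQ
  apply hom_Dg_zero (n := D.T.card + 1 + d)
  · apply MvPolynomial.IsHomogeneous.sub
    · apply MvPolynomial.IsHomogeneous.sum
      intro η hη
      apply (D.hom_g hC0 hη).mul
      apply MvPolynomial.IsHomogeneous.sum
      intro w _
      have := (isHomogeneous_C ι (eval (toV η) (Lw γ w))).mul ((hom_Lw γ w).pow d)
      simpa using this
    · have h2 : (D.pw γ (d + 1)).IsHomogeneous (d + 1) := by
        apply MvPolynomial.IsHomogeneous.sum
        intro w _
        have := (hom_Lw γ w).pow (d + 1)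
        simpa using this
      have := D.hom_J.mul h2
      rwa [← add_assoc, add_right_comm] at this
  · have hp : D.pw γ (d + 1) ∈ D.Pd (d + 1) := ⟨D.pw_WInv γ _, D.pw_Dg γ _⟩
    have h1 := D.top hC0 D.InV0_zero hp
    have h2 : D.J * D.F 0 (d + 1) (D.pw γ (d + 1)) ∈ Dg (D.T.card + 1 + d) :=
      Dg_mono (by omega) (Dg_mul' (mem_Dg_succ.2 D.hom_J.totalDegree_le) h1)
    set R : (ι → ℤ) → Aut ι → MvPolynomial ι ℂ := fun η w =>
      (Lw γ w - C (eval (toV η) (Lw γ w))) ^ (d + 1) - Lw γ w ^ (d + 1) +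
        ((d : ℂ) + 1) • (C (eval (toV η) (Lw γ w)) * Lw γ w ^ d) with hR
    have h3 : ∑ η ∈ D.Λ₁, D.g 0 η * ∑ w ∈ D.WF, R η w ∈ Dg (D.T.card + 1 + d) :=
      Submodule.sum_mem _ fun η hη => Dg_mul' (D.Dg_g hC0 0 hη)
        (Submodule.sum_mem _ fun w _ => Dg_taylor (Lw_Dg γ w) _ d)
    have hg : ∑ η ∈ D.Λ₁, D.g 0 η = D.J * lin D.ell := by
      apply MvPolynomial.funext
      intro z
      rw [map_sum, D.L1_A hC0 D.InV0_zero, map_mul, eval_lin, evalC_zero', sub_zero]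
    have htr : ∀ η, tr (toV η) (D.pw γ (d + 1)) = D.pw γ (d + 1)
        - ((d : ℂ) + 1) • (∑ w ∈ D.WF, C (eval (toV η) (Lw γ w)) * Lw γ w ^ d) + ∑ w ∈ D.WF, R η w := by
      intro η
      rw [pw, tr_sum, Finset.smul_sum, ← Finset.sum_sub_distrib, ← Finset.sum_add_distrib]
      refine Finset.sum_congr rfl fun w _ => ?_
      rw [tr_pow, tr_Lw, hR]; ring
    have hA : D.A 0 (D.pw γ (d + 1)) = D.J * lin D.ell * D.pw γ (d + 1)
        - ((d : ℂ) + 1) • ∑ η ∈ D.Λ₁, D.g 0 η * ∑ w ∈ D.WF, C (eval (toV η) (Lw γ w)) * Lw γ w ^ d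
        + ∑ η ∈ D.Λ₁, D.g 0 η * ∑ w ∈ D.WF, R η w := by
      rw [A, ← hg, Finset.sum_mul, Finset.smul_sum, ← Finset.sum_sub_distrib, ← Finset.sum_add_distrib]
      refine Finset.sum_congr rfl fun η _ => ?_
      rw [htr, mul_add, mul_sub, mul_smul_comm]
    have h4 : ((d : ℂ) + 1) • Q = D.J * D.F 0 (d + 1) (D.pw γ (d + 1))
        + ∑ η ∈ D.Λ₁, D.g 0 η * ∑ w ∈ D.WF, R η w := by
      rw [F, mul_sub, D.J_mul_L hC0 D.InV0_zero hp.1, hA, hQ, evalC_zero']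
      simp only [smul_eq_C_mul, C_add, C_1, Nat.cast_add, Nat.cast_one, C_0]
      ring
    have h5 : ((d : ℂ) + 1) • Q ∈ Dg (D.T.card + 1 + d) := by
      rw [h4]; exact Submodule.add_mem _ h2 h3
    exact (Submodule.smul_mem_iff _ (Nat.cast_add_one_ne_zero d)).1 h5

/-- The vector field. -/
def Xi (z : ι → ℂ) : ι → ℂ := fun i => ∑ η ∈ D.Λ₁, eval z (D.g 0 η) * (η i : ℂ) - eval z D.J * z i

lemma actV_sum_smul {κ : Type*} (w : Aut ι) (s : Finset κ) (f : κ → ℂ) (y : κ → ι → ℂ) :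
    actV w (∑ a ∈ s, f a • y a) = ∑ a ∈ s, f a • actV w (y a) := by
  induction s using Finset.induction_on with
  | empty => ext i; simp [actV_apply, evalC_zero']
  | insert a s ha ih => rw [Finset.sum_insert ha, Finset.sum_insert ha, actV_add, actV_smul, ih]

lemma Xi_eq (z : ι → ℂ) : D.Xi z = (∑ η ∈ D.Λ₁, eval z (D.g 0 η) • toV η) - eval z D.J • z := by
  ext i; simp [Xi, Finset.sum_apply, toV]

lemma V1_pow (hC0 : D.C0) (γ z : ι → ℂ) (d : ℕ) :
    ∑ w ∈ D.WF, (∑ i, γ i * actV w (D.Xi z) i) * (∑ i, γ i * actV w z i) ^ d = 0 := by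
  have h := congrArg (eval z) (D.V1_poly hC0 γ d)
  rw [map_zero, map_sub, map_sum, map_mul, pw, map_sum] at h
  simp only [map_mul, map_sum, eval_C, map_pow, eval_Lw] at h
  rw [← h]
  simp only [Finset.mul_sum]
  rw [Finset.sum_comm, ← Finset.sum_sub_distrib]
  refine Finset.sum_congr rfl fun w _ => ?_
  rw [Xi_eq, actV_sub, actV_smul, actV_sum_smul]
  have e1 : ∑ i, γ i * ((∑ η ∈ D.Λ₁, eval z (D.g 0 η) • actV w (toV η)) - eval z D.J • actV w z) i
      = ∑ η ∈ D.Λ₁, eval z (D.g 0 η) * (∑ i, γ i * actV w (toV η) i)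
        - eval z D.J * ∑ i, γ i * actV w z i := by
    simp only [Pi.sub_apply, Finset.sum_apply, Pi.smul_apply, smul_eq_mul, mul_sub, Finset.sum_sub_distrib,
      Finset.mul_sum]
    rw [Finset.sum_comm]
    congr 1
    · exact Finset.sum_congr rfl fun η _ => Finset.sum_congr rfl fun i _ => by ring
    · exact Finset.sum_congr rfl fun i _ => by ring
  rw [e1, sub_mul, Finset.sum_mul, pow_succ]
  congr 1
  · exact Finset.sum_congr rfl fun η _ => by ring
  · ring

lemma V1_z (hC0 : D.C0) {z : ι → ℂ} (hz : ∀ w ∈ D.W, w ≠ 1 → actV w z ≠ z) : D.Xi z = 0 := by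
  -- generic linear form
  let G : MvPolynomial ι ℂ := ∏ w ∈ D.WF.erase 1, ∑ i, C (z i - actV w z i) * X i
  have hG : G ≠ 0 := by
    rw [Finset.prod_ne_zero_iff]
    intro w hw h0
    rw [Finset.mem_erase] at hw
    apply hz w (D.mem_WF.1 hw.2) hw.1
    ext i
    have := congrArg (eval (Pi.single i 1)) h0
    simp [map_sum, Pi.single_apply] at this
    linear_combination -this
  have hF : (∑ i, C (D.Xi z i) * X i : MvPolynomial ι ℂ) = 0 := by
    apply zariski hG
    intro γ hγ
    simp only [G, map_prod, map_sum, map_mul, eval_C, eval_X] at hγ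
    rw [Finset.prod_ne_zero_iff] at hγ
    have h1 := sum_mul_poly D.WF (fun w => ∑ i, γ i * actV w (D.Xi z) i) (fun w => ∑ i, γ i * actV w z i)
      (D.V1_pow hC0 γ z) (∏ w ∈ D.WF.erase 1, (Polynomial.X - Polynomial.C (∑ i, γ i * actV w z i)))
    rw [Finset.sum_eq_single 1] at h1
    · rcases mul_eq_zero.1 h1 with h2 | h2
      · rw [actV_one] at h2
        simp only [map_sum, map_mul, eval_C, eval_X]
        rw [← h2]
        exact Finset.sum_congr rfl fun i _ => by ring
      · exfalso
        rw [Polynomial.eval_prod, Finset.prod_eq_zero_iff] at h2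
        obtain ⟨w, hw, h3⟩ := h2
        apply hγ w hw
        simp only [Polynomial.eval_sub, Polynomial.eval_X, Polynomial.eval_C, actV_one] at h3
        rw [← h3, ← Finset.sum_sub_distrib]
        exact Finset.sum_congr rfl fun i _ => by ring
    · intro w hw hw1
      apply mul_eq_zero_of_right
      rw [Polynomial.eval_prod]
      exact Finset.prod_eq_zero (Finset.mem_erase.2 ⟨hw1, hw⟩)
        (by rw [Polynomial.eval_sub, Polynomial.eval_X, Polynomial.eval_C, sub_self])
    · intro h; exact absurd (D.mem_WF.2 D.W.one_mem) h
  ext i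
  have := congrArg (eval (Pi.single i 1)) hF
  simpa [map_sum, Pi.single_apply] using this

/-- (H) -/
lemma V1 (hC0 : D.C0) (i : ι) : ∑ η ∈ D.Λ₁, (η i : ℂ) • D.g 0 η = D.J * X i := by
  have hex : ∀ w : Aut ι, ∃ j, w ≠ 1 → w⁻¹ (e j) ≠ e j := by
    intro w
    by_cases hw : w = 1
    · exact ⟨i, fun h => absurd hw h⟩
    · have : ∃ j, w⁻¹ (e j) ≠ e j := by
        by_contra hc
        push Not at hc
        exact hw (inv_eq_one.1 (aut_ext hc))
      exact ⟨this.choose, fun _ => this.choose_spec⟩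
  choose j hj using hex
  let G : MvPolynomial ι ℂ := ∏ w ∈ D.WF.erase 1, lin (w⁻¹ (e (j w)) - e (j w))
  have hG : G ≠ 0 := by
    rw [Finset.prod_ne_zero_iff]
    intro w hw
    exact lin_ne_zero (sub_ne_zero.2 (hj w (Finset.ne_of_mem_erase hw)))
  rw [← sub_eq_zero]
  apply zariski hG
  intro z hz
  simp only [G, map_prod, eval_lin] at hz
  rw [Finset.prod_ne_zero_iff] at hz
  have h1 := congrFun (D.V1_z hC0 (z := z) (by
    intro w hw hw1 h
    apply hz w (Finset.mem_erase.2 ⟨hw1, D.mem_WF.2 hw⟩)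
    have := congrFun h (j w)
    rw [actV_apply] at this
    rw [evalC_sub, this, evalC_e, sub_self])) i
  simp only [map_sub, map_sum, smul_eval, map_mul, eval_X]
  rw [Xi, Pi.zero_apply] at h1
  rw [← h1]
  congr 1
  exact Finset.sum_congr rfl fun η _ => by ring

lemma g_shift {η : ι → ℤ} (t : ℂ) (z : ι → ℂ) :
    eval z (D.g ((0 : ι → ℂ) + t • one) η) = eval (z + t • (-toV η)) (D.g 0 η) := by
  rw [eval_g, eval_g]
  congr 1
  · refine Finset.prod_congr rfl fun ω hω => ?_
    have hω' := Finset.mem_filter.1 hω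
    rw [D.kk_add D.InV0_zero t hω'.1, smul_neg, ← sub_eq_add_neg, evalC_sub', evalC_smul', evalC_toV, hω'.2]
    push_cast; ring
  · refine Finset.prod_congr rfl fun β _ => ?_
    split_ifs with h
    · rw [smul_neg, ← sub_eq_add_neg, evalC_sub', evalC_smul', evalC_toV, h]; simp
    · rfl

/-- (I) -/
lemma sum_ell (hC0 : D.C0) : ht D.ell = Fintype.card ι + D.T.card := by
  obtain ⟨z, hz⟩ : ∃ z, eval z D.J ≠ 0 := by
    by_contra hc
    push Not at hc
    exact D.J_ne_zero (MvPolynomial.funext fun z => by rw [hc, map_zero])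
  have h1 : HasDerivAt (fun t : ℂ => ∑ η ∈ D.Λ₁, eval (z + t • (-toV η)) (D.g 0 η))
      (∑ η ∈ D.Λ₁, ∑ i, (-toV η) i * eval z (pderiv i (D.g 0 η))) 0 :=
    HasDerivAt.fun_sum fun η _ => hasDeriv_line z _ _
  have h2 : (fun t : ℂ => ∑ η ∈ D.Λ₁, eval (z + t • (-toV η)) (D.g 0 η))
      = fun t => eval z D.J * (evalC D.ell z - t * ht D.ell) := by
    funext t
    rw [← Finset.sum_congr rfl fun η _ => D.g_shift t z, D.L1_A hC0 (D.InV0_t D.InV0_zero t), zero_add,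
      evalC_smul', evalC_one]
  have h3 : HasDerivAt (fun t : ℂ => eval z D.J * (evalC D.ell z - t * ht D.ell))
      (eval z D.J * (-(1 * ht D.ell))) 0 :=
    (((hasDerivAt_id (0 : ℂ)).mul_const (ht D.ell : ℂ)).const_sub (evalC D.ell z)).const_mul (eval z D.J)
  rw [h2] at h1
  have h4 := h1.unique h3
  have h5 : ∑ η ∈ D.Λ₁, ∑ i, (toV η) i * eval z (pderiv i (D.g 0 η))
      = ∑ i, eval z (pderiv i (D.J * X i)) := by
    rw [Finset.sum_comm]
    refine Finset.sum_congr rfl fun i _ => ?_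
    rw [← D.V1 hC0 i]
    simp [map_sum, smul_eval, toV]
  have h6 : ∑ i, eval z (pderiv i (D.J * X i)) = (Fintype.card ι + D.T.card) * eval z D.J := by
    have h7 := congrArg (eval z) D.hom_J.sum_X_mul_pderiv
    simp only [map_sum, map_mul, eval_X, nsmul_eq_mul, map_natCast] at h7
    simp only [Derivation.leibniz, pderiv_X_self, smul_eq_mul, map_add, map_mul, eval_X, mul_one,
      Finset.sum_add_distrib, h7]
    simp; ring
  simp only [Pi.neg_apply, neg_mul, Finset.sum_neg_distrib, h5, h6] at h4
  have h8 : ((ht D.ell : ℤ) : ℂ) = ((Fintype.card ι + D.T.card : ℤ) : ℂ) := by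
    apply mul_left_cancel₀ hz
    push_cast
    linear_combination h4
  exact_mod_cast h8

end V1

end Data

section Cyc

lemma ht_smul (n : ℤ) (γ : ι → ℤ) : ht (n • γ) = n * ht γ := by
  simp [ht, Finset.mul_sum]

namespace Data

variable (D : Data ι)

/-- congruence subgroup -/
def GN (N : ℕ) : Subgroup (Aut ι) where
  carrier := {w | ∀ γ, (N : ℤ) ∣ ht (w γ) - ht γ}
  one_mem' := fun γ => by simp
  mul_mem' := fun {a b} ha hb γ => by
    have := dvd_add (ha (b γ)) (hb γ)
    simpa using this
  inv_mem' := fun {a} ha γ => by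
    have := ha (a⁻¹ γ)
    rw [app_inv] at this
    rw [← neg_sub]
    exact (dvd_neg).2 this

lemma mem_GN {N : ℕ} {w : Aut ι} : w ∈ GN N ↔ ∀ γ, (N : ℤ) ∣ ht (w γ) - ht γ := Iff.rfl

/-- non-simple positive elements -/
def Phin : Finset (ι → ℤ) := D.Φpos.filter fun ω => ∀ m, ω ≠ e m

lemma Phin_ht {ω : ι → ℤ} (h : ω ∈ D.Phin) : ht ω - 1 ≠ 0 := by
  intro h0
  simp only [Phin, Φpos, Finset.mem_filter] at h
  obtain ⟨i, hi⟩ := eq_e_of_ht h.1.2 (by omega)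
  exact h.2 i hi

lemma cyc (hC0 : D.C0) (N : ℕ) :
    (D.T.filter fun β => (N : ℤ) ∣ ht β).card ≤ (D.Phin.filter fun ω => (N : ℤ) ∣ ht ω - 1).card := by
  have hdeg : (∏ ω ∈ D.Phin.filter (fun ω => (N : ℤ) ∣ ht ω - 1), (lin ω - C 1 : MvPolynomial ι ℂ)).totalDegree
      ≤ (D.Phin.filter fun ω => (N : ℤ) ∣ ht ω - 1).card :=
    mem_Dg_succ.1 (Dg_prod _ _ fun ω _ =>
      Submodule.sub_mem _ (Dg_lin _) (Dg_mono (by norm_num) (Dg_C 1)))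
  refine le_trans (D.antisym hC0 (Finset.filter_subset _ _) (D.W ⊓ GN N) ?_ ?_ _ ?_) hdeg
  · intro w hw β hβ
    rw [Finset.mem_filter] at hβ ⊢
    refine ⟨D.stab_T hC0 hw.1 β hβ.1, ?_⟩
    have h1 := (dvd_sub_comm.1 (mem_GN.1 hw.2 β))
    have h2 : (N : ℤ) ∣ ht (w β) := by
      have := dvd_sub hβ.2 h1
      simpa using this
    rcases absv_cases (w β) with h | h
    · rw [h.1]; exact h2
    · rw [h.1, ht_neg]; exact (dvd_neg).2 h2
  · intro β hβ s hs c hsx hc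
    refine ⟨hs, mem_GN.2 fun γ => ?_⟩
    rw [Finset.mem_filter] at hβ
    rw [hsx, ht_sub, ht_smul]
    have := (dvd_neg).2 (Dvd.dvd.mul_left hβ.2 (pairZ γ c))
    rwa [sub_sub_cancel_left]
  · have hev : ∀ w : Aut ι, eval (actV w⁻¹ one)
        (∏ ω ∈ D.Phin.filter (fun ω => (N : ℤ) ∣ ht ω - 1), (lin ω - C 1 : MvPolynomial ι ℂ))
        = ∏ ω ∈ D.Phin.filter (fun ω => (N : ℤ) ∣ ht ω - 1), ((ht (w ω) : ℂ) - 1) := by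
      intro w
      simp only [map_prod, map_sub, eval_lin, eval_C, evalC_actV, inv_inv, evalC_one]
    rw [Finset.sum_eq_single 1]
    · rw [hev]
      refine mul_ne_zero ?_ ?_
      · rw [eps, Finset.prod_ne_zero_iff]
        intro β _
        exact sgn_ne_zero _
      · rw [Finset.prod_ne_zero_iff]
        intro ω hω
        have := D.Phin_ht (Finset.mem_filter.1 hω).1
        rw [one_app]
        exact_mod_cast this
    · intro w hw hw1
      rw [Finset.mem_filter, mem_WF] at hw
      obtain ⟨l, hl0, hl⟩ := D.nonperm_lemma hC0 (D.W.inv_mem hw.1) (inv_ne_one.2 hw1)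
      rw [hev]
      have : w⁻¹ (e l) ∈ D.Phin.filter (fun ω => (N : ℤ) ∣ ht ω - 1) := by
        simp only [Phin, Φpos, Finset.mem_filter]
        refine ⟨⟨⟨D.Phi_W (D.W.inv_mem hw.1) (D.e_mem_Phi l), hl0⟩, hl⟩, ?_⟩
        have := mem_GN.1 ((GN N).inv_mem hw.2.2) (e l)
        rwa [ht_e] at this
      rw [Finset.prod_eq_zero this, mul_zero]
      rw [app_inv, ht_e]
      simp
    · intro h
      exact absurd (Finset.mem_filter.2 ⟨D.mem_WF.2 D.W.one_mem, Subgroup.one_mem _⟩) h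

lemma tot_sum {B : ℕ} {x : ℤ} (h0 : 0 < x) (hB : x ≤ B) :
    ∑ N ∈ Finset.range (B + 1), (if (N : ℤ) ∣ x then (Nat.totient N : ℤ) else 0) = x := by
  lift x to ℕ using h0.le
  have h1 : 0 < x := by exact_mod_cast h0
  have h2 : x ≤ B := by exact_mod_cast hB
  simp only [Int.natCast_dvd_natCast]
  rw [← Finset.sum_filter]
  have : (Finset.range (B + 1)).filter (fun N => N ∣ x) = x.divisors := by
    ext N
    simp only [Finset.mem_filter, Finset.mem_range, Nat.mem_divisors]
    constructor
    · rintro ⟨_, h⟩; exact ⟨h, h1.ne'⟩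
    · rintro ⟨h, _⟩; exact ⟨by have := Nat.le_of_dvd h1 h; omega, h⟩
  rw [this]
  exact_mod_cast Nat.sum_totient x

lemma sum_ht_le (hC0 : D.C0) : ∑ β ∈ D.T, ht β ≤ ∑ ω ∈ D.Phin, (ht ω - 1) := by
  set B : ℕ := ∑ γ ∈ D.T ∪ D.Phin, (ht γ).natAbs with hBdef
  have hB : ∀ γ ∈ D.T ∪ D.Phin, ht γ ≤ B := by
    intro γ hγ
    have := Finset.single_le_sum (f := fun γ => (ht γ).natAbs) (fun _ _ => Nat.zero_le _) hγ
    have h2 : (ht γ).natAbs ≤ B := this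
    omega
  have hP : ∀ ω ∈ D.Phin, 0 < ht ω - 1 := by
    intro ω hω
    have h1 := D.Phin_ht hω
    simp only [Phin, Φpos, Finset.mem_filter] at hω
    have h2 : 0 < ht ω := by
      apply ht_pos hω.1.2
      rintro rfl
      obtain ⟨w, _, i, hw⟩ := (D.Φ_spec _).1 hω.1.1
      have h3 : e i = 0 := by
        apply w.injective
        rw [← hw, map_zero]
      have := congrFun h3 i
      rw [e_self] at this
      simp at this
    omega
  have e1 : ∑ β ∈ D.T, ht β = ∑ N ∈ Finset.range (B + 1),
      (Nat.totient N : ℤ) * (D.T.filter fun β => (N : ℤ) ∣ ht β).card := by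
    rw [← Finset.sum_congr rfl fun β hβ =>
      tot_sum (D.T_ht_pos hβ) (hB β (Finset.mem_union_left _ hβ)), Finset.sum_comm]
    refine Finset.sum_congr rfl fun N _ => ?_
    rw [← Finset.sum_filter, Finset.sum_const, nsmul_eq_mul, mul_comm]
  have e2 : ∑ ω ∈ D.Phin, (ht ω - 1) = ∑ N ∈ Finset.range (B + 1),
      (Nat.totient N : ℤ) * (D.Phin.filter fun ω => (N : ℤ) ∣ ht ω - 1).card := by
    rw [← Finset.sum_congr rfl fun ω hω =>
      tot_sum (B := B) (hP ω hω) (by have := hB ω (Finset.mem_union_right _ hω); omega), Finset.sum_comm]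
    refine Finset.sum_congr rfl fun N _ => ?_
    rw [← Finset.sum_filter, Finset.sum_const, nsmul_eq_mul, mul_comm]
  rw [e1, e2]
  refine Finset.sum_le_sum fun N _ => mul_le_mul_of_nonneg_left ?_ (by positivity)
  exact_mod_cast D.cyc hC0 N

lemma card_T_le (hC0 : D.C0) : D.T.card ≤ D.Phin.card := by
  simpa using D.cyc hC0 1

lemma ht_sum (s : Finset (ι → ℤ)) : ht (∑ γ ∈ s, γ) = ∑ γ ∈ s, ht γ := by
  simp only [ht, Finset.sum_apply]
  exact Finset.sum_comm

lemma T_eq (hC0 : D.C0) : D.T = D.Δpos := by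
  have h5 : ht D.ell = ∑ ω ∈ D.Φpos, ht ω - ∑ α ∈ D.Δpos, ht α := by
    rw [← D.C5, ht_sub, ht_sum, ht_sum]
    rfl
  have h6 : ∑ ω ∈ D.Φpos, ht ω = ∑ ω ∈ D.Phin, ht ω + Fintype.card ι := by
    rw [← Finset.sum_filter_add_sum_filter_not D.Φpos (fun ω => ∀ m, ω ≠ e m)]
    congr 1
    have : D.Φpos.filter (fun ω => ¬ ∀ m, ω ≠ e m) = Finset.univ.image (fun i : ι => (e i : ι → ℤ)) := by
      ext ω
      simp only [Finset.mem_filter, Finset.mem_image, Finset.mem_univ, true_and, Φpos]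
      push Not
      constructor
      · rintro ⟨_, m, h⟩; exact ⟨m, h.symm⟩
      · rintro ⟨m, rfl⟩; exact ⟨⟨D.e_mem_Phi m, e_nonneg m⟩, m, rfl⟩
    rw [this, Finset.sum_image (fun i _ j _ h => e_inj h)]
    simp [ht_e]
  have h7 := D.sum_ell hC0
  have h8 := D.sum_ht_le hC0
  rw [Finset.sum_sub_distrib, Finset.sum_const, nsmul_eq_mul, mul_one] at h8
  have h9 := D.card_T_le hC0
  have hsub : D.Δpos ⊆ D.T := fun β hβ => D.Deltapos_sub_T hβ
  have h10 := Finset.sum_sdiff (f := ht) hsub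
  have h9' : (D.T.card : ℤ) ≤ D.Phin.card := by exact_mod_cast h9
  have h11 : ∑ β ∈ D.T \ D.Δpos, ht β ≤ 0 := by linarith
  refine Finset.Subset.antisymm ?_ hsub
  intro β hβ
  by_contra hn
  have h12 : 0 < ∑ β ∈ D.T \ D.Δpos, ht β :=
    Finset.sum_pos (fun γ hγ => D.T_ht_pos (Finset.mem_sdiff.1 hγ).1) ⟨β, Finset.mem_sdiff.2 ⟨hβ, hn⟩⟩
  linarith

end Data

end Cyc

section Bdd

namespace Data

variable (D : Data ι)

lemma dom_zero (hC0 : D.C0) {ρ : ι → ℂ} (hdom : D.Dominant ρ) {ν : ι → ℤ} (hν : ∀ i, 0 ≤ ν i)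
    {β : ι → ℤ} (hβ : β ∈ D.T) (h0 : evalC β (ρ + toV ν) = 0) : evalC β ρ = 0 ∧ pairZ β ν = 0 := by
  have h1 : 0 ≤ pairZ β ν := pairZ_nonneg (D.mem_T.1 hβ).2 hν
  rw [evalC_add', evalC_toV] at h0
  obtain ⟨n, hn⟩ := Int.eq_ofNat_of_zero_le h1
  rw [hn] at h0 ⊢
  rcases n with _ | n
  · refine ⟨?_, rfl⟩
    simpa using h0
  · exfalso
    rw [D.T_eq hC0] at hβ
    apply hdom β hβ n
    push_cast at h0
    linear_combination h0

/-- stabilizer subgroup -/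
def Gst (ρ : ι → ℂ) (ν : ι → ℤ) : Subgroup (Aut ι) where
  carrier := {w | w ∈ D.W ∧ actV w ρ = ρ ∧ actDual w ν = ν}
  one_mem' := ⟨D.W.one_mem, actV_one _, actDual_one _⟩
  mul_mem' := fun {a b} ha hb => ⟨D.W.mul_mem ha.1 hb.1, by
    rw [← actV_mul, hb.2.1, ha.2.1], by rw [← actDual_mul, hb.2.2, ha.2.2]⟩
  inv_mem' := fun {a} ha => ⟨D.W.inv_mem ha.1, by
    have := congrArg (actV a⁻¹) ha.2.1
    rw [actV_mul, inv_mul_cancel, actV_one] at this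
    exact this.symm, by
    have := congrArg (actDual a⁻¹) ha.2.2
    rw [actDual_mul, inv_mul_cancel, actDual_one] at this
    exact this.symm⟩

lemma mem_Gst {ρ : ι → ℂ} {ν : ι → ℤ} {w : Aut ι} :
    w ∈ D.Gst ρ ν ↔ w ∈ D.W ∧ actV w ρ = ρ ∧ actDual w ν = ν := Iff.rfl

lemma Gst_ev {ρ : ι → ℂ} {ν : ι → ℤ} {w : Aut ι} (hw : w ∈ D.Gst ρ ν) (γ : ι → ℤ) :
    evalC (w γ) ρ = evalC γ ρ ∧ pairZ (w γ) ν = pairZ γ ν := by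
  obtain ⟨_, h1, h2⟩ := hw
  constructor
  · conv_lhs => rw [← h1]
    rw [evalC_actV, inv_app]
  · conv_lhs => rw [← h2]
    rw [pairZ_actDual, inv_app]

/-- roots vanishing at ρ and ν -/
def T2 (ρ : ι → ℂ) (ν : ι → ℤ) : Finset (ι → ℤ) :=
  D.T.filter fun β => evalC β ρ = 0 ∧ pairZ β ν = 0

/-- vanishing numerator factors -/
def S2 (ρ : ι → ℂ) (ν η : ι → ℤ) : Finset (ι → ℤ) :=
  (D.Phi1 η).filter fun ω => evalC ω ρ = D.kk ρ ω ∧ pairZ ω ν = 0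

lemma mem_S2 {ρ : ι → ℂ} {ν η ω : ι → ℤ} :
    ω ∈ D.S2 ρ ν η ↔ (ω ∈ D.Φ ∧ pairZ ω η = 1) ∧ evalC ω ρ = D.kk ρ ω ∧ pairZ ω ν = 0 := by
  simp only [S2, Phi1, Finset.mem_filter]

lemma mem_T2 {ρ : ι → ℂ} {ν β : ι → ℤ} :
    β ∈ D.T2 ρ ν ↔ β ∈ D.T ∧ evalC β ρ = 0 ∧ pairZ β ν = 0 := by
  simp only [T2, Finset.mem_filter]

/-- key negativity -/
lemma key_neg (hC0 : D.C0) {ρ : ι → ℂ} (hρ : D.InV0 ρ) {ν η : ι → ℤ} (hν : ∀ i, 0 ≤ ν i)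
    (hη : η ∈ D.Λ₁) {w : Aut ι} (hw : w ∈ D.Gst ρ ν) (hz : ∀ ω ∈ D.S2 ρ ν η, ht (w ω) ≠ 1)
    {γ : ι → ℤ} (hγη : pairZ γ η = 1) (hγν : pairZ γ ν = 0) : ¬ ∀ i, 0 ≤ (w γ) i := by
  intro hpos
  have h1 : ∀ l, ν l = 0 → (actDual w η) l ≤ 0 := by
    intro l hl
    by_contra hlt
    push Not at hlt
    have hwi := (D.Gst ρ ν).inv_mem hw
    have hmem : w⁻¹ (e l) ∈ D.Φ := D.Phi_W hwi.1 (D.e_mem_Phi l)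
    have he : (actDual w η) l = pairZ (w⁻¹ (e l)) η := by
      rw [← pairZ_actDual, pairZ_e_left]
    have h2 : pairZ (w⁻¹ (e l)) η = 1 := by
      rcases D.Phi_Lam1 hη hmem with h | h | h <;> omega
    have h3 : w⁻¹ (e l) ∈ D.S2 ρ ν η := by
      rw [mem_S2]
      refine ⟨⟨hmem, h2⟩, ?_, ?_⟩
      · rw [(D.Gst_ev hwi (e l)).1, D.kk_W hρ hwi.1 (D.e_mem_Phi l), evalC_e, D.kk_e hρ]
      · rw [(D.Gst_ev hwi (e l)).2, pairZ_e_left, hl]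
    exact hz _ h3 (by rw [app_inv, ht_e])
  have h4 : pairZ (w γ) ν = 0 := by rw [(D.Gst_ev hw γ).2, hγν]
  have h5 : pairZ (w γ) (actDual w η) = 1 := by rw [pairZ_actDual, inv_app, hγη]
  have h6 : ∀ l, (w γ) l * ν l = 0 := fun l =>
    (Finset.sum_eq_zero_iff_of_nonneg (fun i _ => mul_nonneg (hpos i) (hν i))).1 h4 l (Finset.mem_univ l)
  have h7 : pairZ (w γ) (actDual w η) ≤ 0 := by
    refine Finset.sum_nonpos fun l _ => ?_
    rcases mul_eq_zero.1 (h6 l) with h | h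
    · rw [h, zero_mul]
    · exact mul_nonpos_of_nonneg_of_nonpos (hpos l) (h1 l h)
  omega

lemma count (hC0 : D.C0) {ρ : ι → ℂ} (hρ : D.InV0 ρ) {ν η : ι → ℤ} (hν : ∀ i, 0 ≤ ν i)
    (hη : η ∈ D.Λ₁) (hνη : ∀ i, 0 ≤ (ν - η) i) :
    ((D.T2 ρ ν).filter fun β => pairZ β η ≠ 0).card ≤ (D.S2 ρ ν η).card := by
  set S := D.S2 ρ ν η with hS
  set T0 := (D.T2 ρ ν).filter fun β => pairZ β η = 0 with hT0
  set T1 := (D.T2 ρ ν).filter fun β => pairZ β η ≠ 0 with hT1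
  have hcard : T0.card + T1.card = (D.T2 ρ ν).card :=
    Finset.card_filter_add_card_filter_not (s := D.T2 ρ ν) (fun β => pairZ β η = 0)
  set h : MvPolynomial ι ℂ := (∏ ω ∈ S, (lin ω - C 1)) * ∏ β ∈ T0, lin β with hh
  have hdeg : h.totalDegree ≤ S.card + T0.card := by
    refine mem_Dg_succ.1 ?_
    have h1 : ∏ ω ∈ S, (lin ω - C 1 : MvPolynomial ι ℂ) ∈ Dg (S.card + 1) := Dg_prod _ _ fun ω _ =>
      Submodule.sub_mem _ (Dg_lin _) (Dg_mono (by norm_num) (Dg_C 1))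
    have h2 : ∏ β ∈ T0, (lin β : MvPolynomial ι ℂ) ∈ Dg (T0.card + 1) := Dg_prod _ _ fun ω _ => Dg_lin _
    have := Dg_mul h1 h2
    exact Dg_mono (by omega) this
  suffices hmain : (D.T2 ρ ν).card ≤ h.totalDegree by omega
  have hTT : D.T2 ρ ν ⊆ D.T := Finset.filter_subset _ _
  refine D.antisym hC0 hTT (D.Gst ρ ν) ?_ ?_ h ?_
  · intro w hw β hβ
    rw [mem_T2] at hβ ⊢
    refine ⟨D.stab_T hC0 hw.1 β hβ.1, ?_⟩
    have h1 := D.Gst_ev hw β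
    rw [hβ.2.1, hβ.2.2] at h1
    rcases absv_cases (w β) with h | h
    · rw [h.1]; exact h1
    · rw [h.1, evalC_neg, pairZ_neg, h1.1, h1.2]; simp
  · intro β hβ s hs c hsx hc
    rw [mem_T2] at hβ
    refine ⟨hs, actV_refl_fix hsx hc hβ.2.1, ?_⟩
    apply toV_inj
    rw [toV_actDual]
    exact actV_refl_fix hsx hc (by rw [evalC_toV, hβ.2.2]; simp)
  · -- the sum
    set c : Aut ι → ℤ := fun w => if ∃ ω ∈ S, ht (w ω) = 1 then 0 else
      (∏ ω ∈ S, (1 - ht (w ω))) * ∏ β ∈ T0, ht (absv (w β)) with hc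
    have hev : ∀ w : Aut ι, eval (actV w⁻¹ one) h
        = (∏ ω ∈ S, ((ht (w ω) : ℂ) - 1)) * ∏ β ∈ T0, (ht (w β) : ℂ) := by
      intro w
      simp only [hh, map_mul, map_prod, map_sub, eval_lin, eval_C, evalC_actV, inv_inv, evalC_one]
    have hphi : ∀ w ∈ D.Gst ρ ν, (∀ ω ∈ S, ht (w ω) ≠ 1) → ∀ ω ∈ S, 0 < 1 - ht (w ω) := by
      intro w hw hz ω hω
      have hω' := D.mem_S2.1 hω
      have hn := D.key_neg hC0 hρ hν hη hw hz hω'.1.2 hω'.2.2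
      have : ∀ i, (w ω) i ≤ 0 := (D.C3 _ (D.Phi_W hw.1 hω'.1.1)).resolve_left hn
      have : ht (w ω) ≤ 0 := Finset.sum_nonpos fun i _ => this i
      omega
    have hone : ∀ ω ∈ S, ht ((1 : Aut ι) ω) ≠ 1 := by
      intro ω hω h1
      have hω' := D.mem_S2.1 hω
      rw [one_app] at h1
      rcases D.C3 _ hω'.1.1 with h2 | h2
      · have := pairZ_nonneg h2 hνη
        rw [pairZ_sub'] at this
        omega
      · have : ht ω ≤ 0 := Finset.sum_nonpos fun i _ => h2 i
        omega
    have hcpos : ∀ w ∈ D.Gst ρ ν, (∀ ω ∈ S, ht (w ω) ≠ 1) → 0 < c w := by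
      intro w hw hz
      have : ¬ ∃ ω ∈ S, ht (w ω) = 1 := by push Not; exact hz
      simp only [hc, if_neg this]
      refine mul_pos (Finset.prod_pos (hphi w hw hz)) (Finset.prod_pos fun β hβ => ?_)
      have hβ' := (D.mem_T2.1 (Finset.mem_filter.1 hβ).1).1
      exact D.T_ht_pos (D.stab_T hC0 hw.1 β hβ')
    have hterm : ∀ w ∈ D.WF.filter (· ∈ D.Gst ρ ν), eps (D.T2 ρ ν) w * eval (actV w⁻¹ one) h
        = (-1) ^ S.card * (c w : ℂ) := by
      intro w hw
      have hw := (Finset.mem_filter.1 hw).2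
      rw [hev]
      by_cases hex : ∃ ω ∈ S, ht (w ω) = 1
      · obtain ⟨ω, hω, h1⟩ := hex
        have hcz : c w = 0 := if_pos ⟨ω, hω, h1⟩
        rw [hcz, Finset.prod_eq_zero hω (by rw [h1]; simp)]
        simp
      · have hcv : c w = (∏ ω ∈ S, (1 - ht (w ω))) * ∏ β ∈ T0, ht (absv (w β)) := if_neg hex
        push Not at hex
        have he : eps (D.T2 ρ ν) w = ∏ β ∈ T0, sgn (w β) := by
          rw [eps, ← Finset.prod_filter_mul_prod_filter_not _ (fun β => pairZ β η = 0)]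
          rw [mul_eq_left₀ (Finset.prod_ne_zero_iff.2 fun β _ => sgn_ne_zero _)]
          refine Finset.prod_eq_one fun β hβ => ?_
          rw [Finset.mem_filter] at hβ
          obtain ⟨hβ1, hβ2⟩ := hβ
          have hβT := D.mem_T2.1 hβ1
          have hβR := D.mem_T.1 hβT.1
          have h1 := pairZ_nonneg hβR.2 hνη
          rw [pairZ_sub'] at h1
          have h2 : pairZ (-β) η = 1 := by
            rw [pairZ_neg]
            rcases D.R_Lam1 hC0 hη hβR.1 with h | h | h <;> omega
          have h3 := D.key_neg hC0 hρ hν hη hw hex h2 (by rw [pairZ_neg, hβT.2.2, neg_zero])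
          rcases D.R_T hC0 (D.R_W hw.1 hβR.1) with h4 | h4
          · exact D.sgn_T h4
          · exact absurd (by rw [map_neg]; exact (D.mem_T.1 h4).2) h3
        rw [he, hcv]
        have e1 : ∏ ω ∈ S, ((ht (w ω) : ℂ) - 1) = (-1) ^ S.card * ∏ ω ∈ S, (1 - (ht (w ω) : ℂ)) := by
          rw [← Finset.prod_const, ← Finset.prod_mul_distrib]
          exact Finset.prod_congr rfl fun _ _ => by ring
        have e2 : (∏ β ∈ T0, sgn (w β)) * ∏ β ∈ T0, (ht (w β) : ℂ) = ∏ β ∈ T0, (ht (absv (w β)) : ℂ) := by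
          rw [← Finset.prod_mul_distrib]
          refine Finset.prod_congr rfl fun β _ => ?_
          rcases absv_cases (w β) with h | h
          · rw [h.1, h.2, one_mul]
          · rw [h.1, h.2, ht_neg]; push_cast; ring
        push_cast
        rw [← e2, e1]
        ring
    rw [Finset.sum_congr rfl hterm, ← Finset.mul_sum]
    refine mul_ne_zero (pow_ne_zero _ (by norm_num)) ?_
    have : 0 < ∑ w ∈ D.WF.filter (· ∈ D.Gst ρ ν), c w := by
      refine Finset.sum_pos' ?_ ⟨1, ?_, ?_⟩
      · intro w hw
        have hw := (Finset.mem_filter.1 hw).2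
        by_cases hex : ∃ ω ∈ S, ht (w ω) = 1
        · exact (if_pos hex : c w = 0).ge
        · push Not at hex
          exact (hcpos w hw hex).le
      · exact Finset.mem_filter.2 ⟨D.mem_WF.2 D.W.one_mem, Subgroup.one_mem _⟩
      · exact hcpos 1 (Subgroup.one_mem _) hone
    exact_mod_cast this.ne'

end Data

end Bdd

section Final

open Filter Topology

lemma prod_split {κ : Type*} (s : Finset κ) (P : κ → Prop) [DecidablePred P] (t : ℂ) (f fh : κ → ℂ)
    (h1 : ∀ a ∈ s, P a → f a = t * fh a) (h2 : ∀ a ∈ s, ¬ P a → f a = fh a) :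
    ∏ a ∈ s, f a = t ^ (s.filter P).card * ∏ a ∈ s, fh a := by
  rw [← Finset.prod_const, Finset.prod_filter, ← Finset.prod_mul_distrib]
  refine Finset.prod_congr rfl fun a ha => ?_
  split_ifs with hP
  · exact h1 a ha hP
  · rw [one_mul]; exact h2 a ha hP

namespace Data

variable (D : Data ι)

lemma ratio (hC0 : D.C0) {ρ : ι → ℂ} (hρ : D.InV0 ρ) (hdom : D.Dominant ρ) {ν η : ι → ℤ}
    (hν : ∀ i, 0 ≤ ν i) (hη : η ∈ D.Λ₁) (hνη : ∀ i, 0 ≤ (ν - η) i) :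
    ∃ q : ℂ, Tendsto (fun t : ℂ => eval (ρ + t • one + toV ν) (D.g (ρ + t • one) η) /
      eval (ρ + t • one + toV ν) D.J) (𝓝[≠] 0) (𝓝 q) := by
  obtain ⟨PS, hPS⟩ : ∃ PS : (ι → ℤ) → Prop, ∀ ω, PS ω ↔ (evalC ω ρ = D.kk ρ ω ∧ pairZ ω ν = 0) :=
    ⟨_, fun _ => Iff.rfl⟩
  obtain ⟨PT, hPT⟩ : ∃ PT : (ι → ℤ) → Prop, ∀ β, PT β ↔ (evalC β ρ = 0 ∧ pairZ β ν = 0) :=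
    ⟨_, fun _ => Iff.rfl⟩
  set fh : ℂ → (ι → ℤ) → ℂ := fun t ω => if PS ω then (ht ω : ℂ) - 1 else
    evalC ω (ρ + toV ν) + t * ht ω - (D.kk ρ ω + t) with hfh
  set uh : ℂ → (ι → ℤ) → ℂ := fun t β => if PT β then (ht β : ℂ) else
    evalC β (ρ + toV ν) + t * ht β with huh
  set Tn := D.T.filter fun β => pairZ β η ≠ 0 with hTn
  have hcnt := D.count hC0 hρ hν hη hνη
  have hS : (D.Phi1 η).filter PS = D.S2 ρ ν η := by
    ext ω
    simp only [S2, Finset.mem_filter, hPS]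
  have hT : Tn.filter PT = (D.T2 ρ ν).filter fun β => pairZ β η ≠ 0 := by
    ext β
    simp only [hTn, T2, Finset.mem_filter, hPT]
    tauto
  obtain ⟨k, hk⟩ := Nat.exists_eq_add_of_le hcnt
  set K : ℂ := ∏ β ∈ Tn, (pairZ β η : ℂ) with hK
  have hfc : Continuous fun t => ∏ ω ∈ D.Phi1 η, fh t ω := by
    refine continuous_finsetProd _ fun ω _ => ?_
    simp only [hfh]
    split_ifs <;> fun_prop
  have huc : Continuous fun t => ∏ β ∈ Tn, uh t β := by
    refine continuous_finsetProd _ fun ω _ => ?_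
    simp only [huh]
    split_ifs <;> fun_prop
  have hu0 : ∏ β ∈ Tn, uh 0 β ≠ 0 := by
    rw [Finset.prod_ne_zero_iff]
    intro β hβ
    have hβT := (Finset.mem_filter.1 hβ).1
    simp only [huh]
    split_ifs with hP
    · exact_mod_cast (D.T_ht_pos hβT).ne'
    · intro h0
      rw [zero_mul, add_zero] at h0
      exact hP ((hPT _).2 <| D.dom_zero hC0 hdom hν hβT h0)
  have hlim : Tendsto (fun t : ℂ => t ^ k * (∏ ω ∈ D.Phi1 η, fh t ω) * K / ∏ β ∈ Tn, uh t β) (𝓝 0)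
      (𝓝 (0 ^ k * (∏ ω ∈ D.Phi1 η, fh 0 ω) * K / ∏ β ∈ Tn, uh 0 β)) := by
    refine Tendsto.div ?_ (huc.tendsto 0) hu0
    exact ((((continuous_id.pow k).mul hfc).mul continuous_const).tendsto 0)
  refine ⟨_, (hlim.mono_left nhdsWithin_le_nhds).congr' ?_⟩
  filter_upwards [D.J_ev (ρ + toV ν), self_mem_nhdsWithin] with t hJ ht0
  have ht0 : t ≠ 0 := ht0
  rw [add_right_comm ρ (t • one)]
  have hf : ∏ ω ∈ D.Phi1 η, (evalC ω (ρ + toV ν + t • one) - D.kk (ρ + t • one) ω)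
      = t ^ (D.S2 ρ ν η).card * ∏ ω ∈ D.Phi1 η, fh t ω := by
    rw [← hS]
    apply prod_split
    · intro ω hω hP
      have hω := (Finset.mem_filter.1 hω).1
      simp only [hfh, if_pos hP]
      rw [hPS] at hP
      rw [D.kk_add hρ t hω, evalC_add', evalC_add', evalC_smul', evalC_one, evalC_toV, hP.1, hP.2]
      push_cast; ring
    · intro ω hω hP
      have hω := (Finset.mem_filter.1 hω).1
      simp only [hfh, if_neg hP]
      rw [D.kk_add hρ t hω, evalC_add' _ _ (t • one), evalC_smul', evalC_one]
  have hu : ∏ β ∈ Tn, evalC β (ρ + toV ν + t • one)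
      = t ^ (Tn.filter PT).card * ∏ β ∈ Tn, uh t β := by
    apply prod_split
    · intro β _ hP
      simp only [huh, if_pos hP]
      rw [hPT] at hP
      rw [evalC_add', evalC_add', evalC_smul', evalC_one, evalC_toV, hP.1, hP.2]
      push_cast; ring
    · intro β _ hP
      simp only [huh, if_neg hP]
      rw [evalC_add' _ _ (t • one), evalC_smul', evalC_one]
  rw [eval_J] at hJ
  rw [eval_g, eval_J, hf]
  have hsp := Finset.prod_filter_mul_prod_filter_not D.T (fun β => pairZ β η ≠ 0)
    (fun β => evalC β (ρ + toV ν + t • one))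
  have hsp2 : ∏ β ∈ D.T, (if pairZ β η = 0 then evalC β (ρ + toV ν + t • one) else (pairZ β η : ℂ))
      = K * ∏ β ∈ D.T.filter (fun β => ¬ pairZ β η ≠ 0), evalC β (ρ + toV ν + t • one) := by
    rw [← Finset.prod_filter_mul_prod_filter_not D.T (fun β => pairZ β η ≠ 0)]
    congr 1
    · refine Finset.prod_congr rfl fun β hβ => ?_
      rw [if_neg (Finset.mem_filter.1 hβ).2]
    · refine Finset.prod_congr rfl fun β hβ => ?_
      rw [if_pos (not_not.1 (Finset.mem_filter.1 hβ).2)]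
  rw [hsp2]
  rw [← hsp] at hJ ⊢
  rw [← hTn, hu, hT] at hJ ⊢
  obtain ⟨hJ1, hJ2⟩ := mul_ne_zero_iff.1 hJ
  obtain ⟨hJ3, hJ4⟩ := mul_ne_zero_iff.1 hJ1
  rw [hk, pow_add]
  field_simp

/-- iterated operators -/
def pp (ρ : ι → ℂ) (d : ℕ) (p : MvPolynomial ι ℂ) : ℕ → MvPolynomial ι ℂ
  | 0 => p
  | i + 1 => D.F ρ (d - i) (pp ρ d p i)

lemma pp_mem (hC0 : D.C0) {ρ : ι → ℂ} (hρ : D.InV0 ρ) {d : ℕ} {p : MvPolynomial ι ℂ} (hp : p ∈ D.Pd d) :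
    ∀ i, i ≤ d → D.pp ρ d p i ∈ D.Pd (d - i) := by
  intro i
  induction i with
  | zero => intro _; exact hp
  | succ i ih =>
    intro hi
    have h1 := ih (by omega)
    rw [mem_Pd]
    refine ⟨D.F_WInv hC0 hρ _ (D.mem_Pd.1 h1).1, ?_⟩
    have h2 := D.top hC0 hρ h1
    rw [show d - (i + 1) + 1 = d - i by omega]
    exact h2

lemma pp_top (hC0 : D.C0) {ρ : ι → ℂ} (hρ : D.InV0 ρ) {d : ℕ} {p : MvPolynomial ι ℂ} (hp : p ∈ D.Pd d) :
    D.pp ρ d p (d + 1) = 0 := by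
  have h2 := D.top hC0 hρ (D.pp_mem hC0 hρ hp d le_rfl)
  rw [Nat.sub_self] at h2
  have h3 : D.pp ρ d p (d + 1) ∈ Dg 0 := by
    change D.F ρ (d - d) _ ∈ _
    rw [Nat.sub_self]
    exact h2
  exact Dg_zero h3

lemma Inj_dom (hC0 : D.C0) {ρ : ι → ℂ} (hρ : D.InV0 ρ) (hdom : D.Dominant ρ) (d : ℕ) : D.Inj ρ d := by
  intro p hp hvan
  have hc : ∀ ν : ι → ℤ, Tendsto (fun t : ℂ => eval (ρ + t • one + toV ν) p) (𝓝[≠] 0)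
      (𝓝 (eval (ρ + toV ν) p)) := by
    intro ν
    have := (cont_line (ρ + toV ν) p).tendsto 0
    simp only [zero_smul, add_zero] at this
    refine (this.mono_left nhdsWithin_le_nhds).congr fun t => ?_
    rw [add_right_comm]
  have key : ∀ m : ℕ, ∀ ν : ι → ℤ, (∀ i, 0 ≤ ν i) → pairZ D.ell ν = m → ∀ i, i ≤ d + 1 →
      Tendsto (fun t : ℂ => eval (ρ + t • one + toV ν) (D.pp (ρ + t • one) d p i)) (𝓝[≠] 0) (𝓝 0) := by
    intro m
    induction m using Nat.strong_induction_on with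
    | _ m ih =>
    intro ν hν hm
    set x : ℕ → ℂ → ℂ := fun i t => eval (ρ + t • one + toV ν) (D.pp (ρ + t • one) d p i) with hx
    set r : ℕ → ℂ → ℂ := fun i t => ∑ η ∈ D.Λ₁.filter (fun η => ∀ i, 0 ≤ (ν - η) i),
      (eval (ρ + t • one + toV ν) (D.g (ρ + t • one) η) / eval (ρ + t • one + toV ν) D.J) *
        eval (ρ + t • one + toV (ν - η)) (D.pp (ρ + t • one) d p i) with hr
    have hr0 : ∀ i, i ≤ d → Tendsto (r i) (𝓝[≠] 0) (𝓝 0) := by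
      intro i hi
      rw [show (0 : ℂ) = ∑ η ∈ D.Λ₁.filter (fun η => ∀ i, 0 ≤ (ν - η) i), (0 : ℂ) by simp]
      refine tendsto_finsetSum _ fun η hη => ?_
      rw [Finset.mem_filter] at hη
      obtain ⟨q, hq⟩ := D.ratio hC0 hρ hdom hν hη.1 hη.2
      have h1 : pairZ D.ell (ν - η) = m - 1 := by rw [pairZ_sub', hm, D.ell_Lam1 hη.1]
      have h2 : 0 ≤ pairZ D.ell (ν - η) := pairZ_nonneg (fun i => (D.C6 i).le) hη.2
      have h3 := ih (m - 1) (by omega) (ν - η) hη.2 (by omega) i (by omega)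
      have := hq.mul h3
      rw [mul_zero] at this
      simpa using this
    have hrec : ∀ i, i ≤ d → ∀ᶠ t in 𝓝[≠] (0 : ℂ), x (i + 1) t = ((m : ℂ) - ((d - i : ℕ) : ℂ)) * x i t - r i t := by
      intro i hi
      filter_upwards [D.J_ev (ρ + toV ν)] with t hJ
      have hmem := D.pp_mem hC0 (D.InV0_t hρ t) hp i hi
      have h1 := D.F_eval hC0 (D.InV0_t hρ t) (d - i) (D.mem_Pd.1 hmem).1 hν
      rw [add_right_comm] at hJ
      have h2 : eval (ρ + t • one + toV ν) D.J * r i t = ∑ η ∈ D.Λ₁.filter (fun η => ∀ i, 0 ≤ (ν - η) i),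
          eval (ρ + t • one + toV ν) (D.g (ρ + t • one) η) *
            eval (ρ + t • one + toV (ν - η)) (D.pp (ρ + t • one) d p i) := by
        simp only [hr, Finset.mul_sum]
        refine Finset.sum_congr rfl fun η _ => ?_
        field_simp
      rw [← h2, hm] at h1
      apply mul_left_cancel₀ hJ
      have h3 : x (i + 1) t = eval (ρ + t • one + toV ν) (D.F (ρ + t • one) (d - i) (D.pp (ρ + t • one) d p i)) := rfl
      rw [h3, h1]
      push_cast
      ring
    rcases le_or_gt m d with hmd | hmd
    · intro i
      induction i with
      | zero =>
        intro _
        have := hc ν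
        rw [hvan ν (D.mem_S.2 ⟨hν, by rw [hm]; exact_mod_cast hmd⟩)] at this
        exact this
      | succ i ihi =>
        intro hi
        have h1 := ((ihi (by omega)).const_mul ((m : ℂ) - ((d - i : ℕ) : ℂ))).sub (hr0 i (by omega))
        rw [mul_zero, sub_zero] at h1
        refine h1.congr' ?_
        filter_upwards [hrec i (by omega)] with t h
        exact h.symm
    · intro i hi
      have hback : ∀ j, j ≤ d + 1 → Tendsto (x (d + 1 - j)) (𝓝[≠] 0) (𝓝 0) := by
        intro j
        induction j with
        | zero =>
          intro _
          refine tendsto_const_nhds.congr fun t => ?_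
          simp only [hx, Nat.sub_zero]
          rw [D.pp_top hC0 (D.InV0_t hρ t) hp, map_zero]
        | succ j ihj =>
          intro hj
          have h1 := ihj (by omega)
          obtain ⟨i, hi⟩ : ∃ i, i = d + 1 - (j + 1) := ⟨_, rfl⟩
          rw [show d + 1 - j = i + 1 by omega] at h1
          rw [← hi]
          have hne : (m : ℂ) - ((d - i : ℕ) : ℂ) ≠ 0 := by
            rw [sub_ne_zero]
            exact_mod_cast (show m ≠ d - i by omega)
          have h2 := (h1.add (hr0 i (by omega))).const_mul ((m : ℂ) - ((d - i : ℕ) : ℂ))⁻¹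
          rw [add_zero, mul_zero] at h2
          refine h2.congr' ?_
          filter_upwards [hrec i (by omega)] with t h
          rw [h, sub_add_cancel, inv_mul_cancel_left₀ hne]
      have := hback (d + 1 - i) (by omega)
      rwa [show d + 1 - (d + 1 - i) = i by omega] at this
  have hz : ∀ ν : ι → ℤ, (∀ i, 0 ≤ ν i) → eval (ρ + toV ν) p = 0 := by
    intro ν hν
    have h0 : 0 ≤ pairZ D.ell ν := pairZ_nonneg (fun i => (D.C6 i).le) hν
    obtain ⟨m, hm⟩ := Int.eq_ofNat_of_zero_le h0
    exact tendsto_nhds_unique (hc ν) (key m ν hν hm 0 (by omega))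
  have hinf : ∀ i : ι, (Set.range fun n : ℕ => ρ i + (n : ℂ)).Infinite := fun i =>
    Set.infinite_range_of_injective (fun a b h => by simpa using h)
  refine MvPolynomial.funext_set (fun i => Set.range fun n : ℕ => ρ i + (n : ℂ)) hinf fun x hx => ?_
  choose n hn using fun i => hx i (Set.mem_univ i)
  have : x = ρ + toV (fun i => (n i : ℤ)) := by
    funext i
    rw [← hn i]
    simp [toV]
  rw [this, hz _ (fun i => by positivity), map_zero]

lemma main (hC0 : D.C0) (ρ : ι → ℂ) (hρ : D.InV0 ρ) (hdom : D.Dominant ρ)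
    (lam : ι → ℤ) (hlam : lam ∈ LamPlus) :
    ∃! p : MvPolynomial ι ℂ, D.CapelliAt ρ lam p := by
  have h0 : 0 ≤ pairZ D.ell lam := pairZ_nonneg (fun i => (D.C6 i).le) hlam
  obtain ⟨d, hd⟩ := Int.eq_ofNat_of_zero_le h0
  have hI := D.Inj_dom hC0 hρ hdom d
  have hdeg : ∀ p : MvPolynomial ι ℂ, (p.totalDegree : ℤ) ≤ pairZ D.ell lam ↔ p ∈ Dg (d + 1) := by
    intro p
    rw [mem_Dg_succ, hd]
    exact Int.ofNat_le
  obtain ⟨p, hp, hpv⟩ := D.Surj_of_Inj hC0 hI (fun μ => if μ = lam then 1 else 0)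
  have hp' := D.mem_Pd.1 hp
  refine ⟨p, ⟨hp'.1, (hdeg p).2 hp'.2, fun μ hμ hle => hpv μ (D.mem_S.2 ⟨hμ, hd ▸ hle⟩)⟩, ?_⟩
  intro q hq
  obtain ⟨hq1, hq2, hq3⟩ := hq
  have hqP : q ∈ D.Pd d := D.mem_Pd.2 ⟨hq1, (hdeg q).1 hq2⟩
  rw [← sub_eq_zero]
  refine hI _ (Submodule.sub_mem _ hqP hp) fun ν hν => ?_
  have hν' := D.mem_S.1 hν
  rw [map_sub, hpv ν hν, hq3 ν hν'.1 (by rw [hd]; exact hν'.2), sub_self]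

end Data

end Final

/-- Theorem 2.6 a: assuming axiom C0, for every dominant
`ρ ∈ V₀` and every `λ ∈ Λ₊` there is a unique `W`-invariant polynomial `p_λ`
with `deg p_λ ≤ ℓ(λ)` and `p_λ(ρ+μ) = δ_{λμ}` for all `μ ∈ Λ₊` with
`ℓ(μ) ≤ ℓ(λ)`. -/
theorem statement4 (D : Data ι) (hC0 : D.C0)
    (ρ : ι → ℂ) (hρ : D.InV0 ρ) (hdom : D.Dominant ρ)
    (lam : ι → ℤ) (hlam : lam ∈ LamPlus) :
    ∃! p : MvPolynomial ι ℂ, D.CapelliAt ρ lam p := by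
  exact D.main hC0 ρ hρ hdom lam hlam

end Knop

end
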